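/- arXiv:2106.05333 — 12 statements merged into one kernel-verified Lean document; each statement's English description precedes it below -/
import Mathlib

section
/- Let α, β, γ be nonnegative integers with α ≥ 1 and β + γ ≤ 1, and let G be a complete (α+β+γ)-partite graph having exactly α parts of size 1, exactly β parts of size 2, and exactly γ parts of size greater than or equal to 3. Then dim(G) = α + β + 2γ − 1. -/
/-- `G` has a unit-distance representation in `ℝ^n`: an injective map of the vertices to
points of Euclidean `n`-space with adjacent vertices at Euclidean distance exactly `1`. -/
def SimpleGraph.HasUnitDistRep {V : Type*} (G : SimpleGraph V) (n : ℕ) : Prop :=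
  ∃ f : V → EuclideanSpace ℝ (Fin n),
    Function.Injective f ∧ ∀ ⦃u v⦄, G.Adj u v → Dist.dist (f u) (f v) = 1

/-- The dimension of `G`: the least `n` such that `G` has a unit-distance representation
in `ℝ^n`. -/
noncomputable def SimpleGraph.udim {V : Type*} (G : SimpleGraph V) : ℕ :=
  sInf {n | G.HasUnitDistRep n}

/-- `G` is dimension-critical: deleting any edge strictly lowers the dimension. -/
def SimpleGraph.IsDimCritical {V : Type*} (G : SimpleGraph V) : Prop :=
  ∀ e ∈ G.edgeSet, (G.deleteEdges {e}).udim < G.udim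


theorem aux_inner {E : Type*} [NormedAddCommGroup E] [InnerProductSpace ℝ E] (a b c : E)
    (h1 : dist a c = 1) (h2 : dist b c = 1) (h3 : dist a b = 1) :
    inner ℝ (a - c) (b - c) = 1 / 2 := by
  rw [dist_eq_norm] at *
  have := norm_sub_sq_real (a - c) (b - c)
  rw [sub_sub_sub_cancel_right, h1, h2, h3] at this
  linarith

theorem aux_li {E : Type*} [NormedAddCommGroup E] [InnerProductSpace ℝ E] {T : Type*} [Fintype T]
    (v : T → E) (h1 : ∀ i, ‖v i‖ = 1) (h2 : ∀ i j, i ≠ j → inner ℝ (v i) (v j) = (1 / 2 : ℝ)) :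
    LinearIndependent ℝ v := by
  classical
  rw [Fintype.linearIndependent_iff]
  intro g hg
  have key : ∀ j, g j + ∑ i, g i = 0 := by
    intro j
    have h0 : inner ℝ (∑ i, g i • v i) (v j) = (0 : ℝ) := by rw [hg, inner_zero_left]
    rw [sum_inner] at h0
    have h3 : ∀ i, inner ℝ (g i • v i) (v j) = (1 / 2) * g i + if i = j then (1 / 2) * g i else 0 := by
      intro i
      rw [real_inner_smul_left]
      split_ifs with h
      · subst h
        rw [real_inner_self_eq_norm_sq, h1]; ring
      · rw [h2 i j h]; ring
    simp only [h3, Finset.sum_add_distrib, ← Finset.mul_sum] at h0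
    simp at h0
    linarith
  have hs : ∑ j, (g j + ∑ i, g i) = 0 := Finset.sum_eq_zero fun j _ => key j
  rw [Finset.sum_add_distrib] at hs
  simp only [Finset.sum_const, nsmul_eq_mul] at hs
  have : (1 + ((Finset.univ : Finset T).card : ℝ)) * ∑ i, g i = 0 := by linarith
  have hS : ∑ i, g i = 0 := by
    rcases mul_eq_zero.1 this with h | h
    · have : (0 : ℝ) ≤ ((Finset.univ : Finset T).card : ℝ) := Nat.cast_nonneg _
      linarith
    · exact h
  intro i
  have := key i
  linarith

theorem aux_li_simplex {E : Type*} [NormedAddCommGroup E] [InnerProductSpace ℝ E] {T : Type*}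
    [Fintype T] (p : T → E) (hp : ∀ i j, i ≠ j → dist (p i) (p j) = 1) (t : T) :
    LinearIndependent ℝ (fun i : {i // i ≠ t} => p i - p t) := by
  classical
  apply aux_li
  · intro i
    rw [← dist_eq_norm]
    exact hp _ _ i.2
  · intro i j hij
    exact aux_inner _ _ _ (hp _ _ i.2) (hp _ _ j.2) (hp _ _ fun h => hij (Subtype.ext h))

theorem aux_lower1 {n : ℕ} {T : Type*} [Fintype T] (p : T → EuclideanSpace ℝ (Fin n))
    (hp : ∀ i j, i ≠ j → dist (p i) (p j) = 1) : Fintype.card T ≤ n + 1 := by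
  classical
  rcases isEmpty_or_nonempty T with h | ⟨⟨t⟩⟩
  · simp
  have := (aux_li_simplex p hp t).fintype_card_le_finrank
  rw [finrank_euclideanSpace_fin] at this
  have h2 := Fintype.card_subtype_compl (fun i => i = t)
  simp only [Fintype.card_subtype_eq] at h2
  change Fintype.card {i // ¬ i = t} ≤ n at this
  omega

theorem aux_li_pair {E : Type*} [NormedAddCommGroup E] [InnerProductSpace ℝ E] (o x y z : E)
    (hx : dist x o = 1) (hy : dist y o = 1) (hz : dist z o = 1)
    (hxy : x ≠ y) (hxz : x ≠ z) (hyz : y ≠ z) :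
    LinearIndependent ℝ ![y - x, z - x] := by
  have hc : EuclideanGeometry.Cospherical ({x, y, z} : Set E) :=
    ⟨o, 1, by simp [hx, hy, hz]⟩
  have := hc.affineIndependent_of_ne hxy hxz hyz
  rw [affineIndependent_iff_linearIndependent_vsub ℝ _ (0 : Fin 3)] at this
  have h2 := this.comp (fun i : Fin 2 => (⟨i.succ, Fin.succ_ne_zero i⟩ : {i : Fin 3 // i ≠ 0}))
    (by intro a b h; simpa using h)
  convert h2 using 1
  · ext i
    fin_cases i <;> rfl
  · rfl

theorem aux_lower2 {n : ℕ} {T : Type*} [Fintype T] [Nonempty T] (p : T → EuclideanSpace ℝ (Fin n))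
    (hp : ∀ i j, i ≠ j → dist (p i) (p j) = 1) (q : Fin 3 → EuclideanSpace ℝ (Fin n))
    (hq : Function.Injective q) (hpq : ∀ k i, dist (q k) (p i) = 1) :
    Fintype.card T + 1 ≤ n := by
  classical
  obtain ⟨t⟩ := ‹Nonempty T›
  have h1 := finrank_span_eq_card (aux_li_simplex p hp t)
  set W := Submodule.span ℝ (Set.range fun i : {i // i ≠ t} => p i - p t) with hW
  have hli := aux_li_pair (p t) (q 0) (q 1) (q 2) (hpq _ _) (hpq _ _) (hpq _ _)
    (hq.ne (by decide)) (hq.ne (by decide)) (hq.ne (by decide))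
  have hmem : ∀ k, q k - q 0 ∈ Wᗮ := by
    intro k
    rw [Submodule.mem_orthogonal]
    intro u hu
    induction hu using Submodule.span_induction with
    | mem u hu =>
      obtain ⟨i, rfl⟩ := hu
      have a1 := aux_inner (p i) (q k) (p t) (hp _ _ i.2) (hpq _ _) (by rw [dist_comm, hpq])
      have a2 := aux_inner (p i) (q 0) (p t) (hp _ _ i.2) (hpq _ _) (by rw [dist_comm, hpq])
      have : q k - q 0 = (q k - p t) - (q 0 - p t) := by abel
      rw [this, inner_sub_right, a1, a2, sub_self]
    | zero => simp
    | add a b _ _ ha hb => rw [inner_add_left, ha, hb, add_zero]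
    | smul c a _ ha => rw [real_inner_smul_left, ha, mul_zero]
  have hli2 : LinearIndependent ℝ ![(⟨_, hmem 1⟩ : Wᗮ), ⟨_, hmem 2⟩] := by
    apply LinearIndependent.of_comp Wᗮ.subtype
    convert hli using 1
    · ext i
      fin_cases i <;> rfl
    · rfl
  have h2 := hli2.fintype_card_le_finrank
  have h3 := W.finrank_add_finrank_orthogonal
  rw [finrank_euclideanSpace_fin] at h3
  have h4 := Fintype.card_subtype_compl (fun i => i = t)
  simp only [Fintype.card_subtype_eq] at h4
  change _ = Fintype.card {i // ¬ i = t} at h1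
  have : 0 < Fintype.card T := Fintype.card_pos_iff.2 ⟨t⟩
  simp only [Fintype.card_fin] at h2
  omega

theorem aux_hyper {V : Type*} (G : SimpleGraph V) {E : Type*} [NormedAddCommGroup E]
    [InnerProductSpace ℝ E] (n : ℕ) [Fact (Module.finrank ℝ E = n + 1)]
    (f : V → E) (hf : Function.Injective f) (hd : ∀ u v, G.Adj u v → dist (f u) (f v) = 1)
    (w : E) (hw : w ≠ 0) (c : ℝ) (hc : ∀ v, inner ℝ w (f v) = c) : G.HasUnitDistRep n := by
  rcases isEmpty_or_nonempty V with h | ⟨⟨v0⟩⟩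
  · exact ⟨fun v => h.elim v, fun v => h.elim v, fun v => h.elim v⟩
  let b := OrthonormalBasis.fromOrthogonalSpanSingleton (𝕜 := ℝ) n hw
  have hm : ∀ v, f v - f v0 ∈ (ℝ ∙ w)ᗮ := by
    intro v
    rw [Submodule.mem_orthogonal_singleton_iff_inner_right, inner_sub_right, hc, hc, sub_self]
  refine ⟨fun v => b.repr ⟨_, hm v⟩, ?_, ?_⟩
  · intro u v h
    have := b.repr.injective h
    simp at this
    exact hf this
  · intro u v h
    rw [b.repr.dist_map, Subtype.dist_eq]
    simpa using hd u v h

theorem aux_circle (B : Type*) [Finite B] :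
    ∃ g : B → EuclideanSpace ℝ (Fin 2), Function.Injective g ∧ ∀ b, ‖g b‖ = 1 := by
  obtain ⟨k, ⟨e⟩⟩ := Finite.exists_equiv_fin B
  let c : B → ℝ := fun b => 1 / ((e b : ℕ) + 1 : ℝ)
  refine ⟨fun b => !₂[c b, √(1 - c b ^ 2)], ?_, ?_⟩
  · intro a b h
    have h0 := congrArg (fun x => x 0) h
    simp [c] at h0
    exact e.injective (Fin.ext h0)
  · intro b
    have h1 : 0 ≤ c b := by positivity
    have h2 : c b ≤ 1 := by
      apply div_le_one_of_le₀
      · linarith [(Nat.cast_nonneg (e b : ℕ) : (0 : ℝ) ≤ _)]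
      · positivity
    rw [EuclideanSpace.norm_eq]
    simp [Fin.sum_univ_two]
    rw [Real.sq_sqrt (by nlinarith)]
    ring

theorem aux_line (B : Type*) [Fintype B] (h : Fintype.card B = 2) :
    ∃ g : B → EuclideanSpace ℝ (Fin 1), Function.Injective g ∧ ∀ b, ‖g b‖ = 1 := by
  let e := Fintype.equivFinOfCardEq h
  refine ⟨fun b => !₂[if e b = 0 then 1 else -1], ?_, ?_⟩
  · intro a b h
    have h0 := congrArg (fun x => x 0) h
    simp at h0
    apply e.injective
    split_ifs at h0 <;> first | (exfalso; norm_num at h0; done) | omega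
  · intro b
    rw [EuclideanSpace.norm_eq]
    simp

theorem aux_upper {V : Type*} (G : SimpleGraph V) {S : Type*} [Fintype S] (k m : ℕ)
    (hk : Fintype.card S = k + 1) (A : V → Prop)
    (s : {v // A v} → S) (hs : Function.Injective s)
    (g : {v // ¬ A v} → EuclideanSpace ℝ (Fin m)) (hg : Function.Injective g) (hg1 : ∀ b, ‖g b‖ = 1)
    (hG : ∀ u v, ¬ A u → ¬ A v → ¬ G.Adj u v) : G.HasUnitDistRep (k + m) := by
  classical
  let h : ℝ := √((k + 2) / (2 * (k + 1)))
  have hh : h ^ 2 = (k + 2) / (2 * (k + 1)) := Real.sq_sqrt (by positivity)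
  have hpos : 0 < h := Real.sqrt_pos.2 (by positivity)
  let r : ℝ := √(1 / 2)
  have hr : r ^ 2 = 1 / 2 := Real.sq_sqrt (by positivity)
  have hrpos : 0 < r := Real.sqrt_pos.2 (by positivity)
  let X : S → EuclideanSpace ℝ (S ⊕ Fin m) := fun i =>
    WithLp.toLp 2 (Sum.elim (fun j => if j = i then r else 0) (fun _ => 0))
  let Y : EuclideanSpace ℝ (Fin m) → EuclideanSpace ℝ (S ⊕ Fin m) := fun u =>
    WithLp.toLp 2 (Sum.elim (fun j => r / (k + 1)) (fun l => h * u l))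
  have hXX : ∀ i j, i ≠ j → dist (X i) (X j) = 1 := by
    intro i j hij
    rw [EuclideanSpace.dist_eq, Real.sqrt_eq_one, Fintype.sum_sum_type]
    simp only [X, Sum.elim_inl, Sum.elim_inr, dist_self, Real.dist_eq, sq_abs]
    have : ∀ a, ((if a = i then r else 0) - (if a = j then r else 0)) ^ 2
        = (if a = i then r ^ 2 else 0) + (if a = j then r ^ 2 else 0) := by
      intro a
      by_cases h1 : a = i
      · have : a ≠ j := fun h => hij (h1 ▸ h)
        simp [h1, hij]
      · by_cases h2 : a = j <;> simp [h1, h2, Ne.symm hij]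
    simp only [this, Finset.sum_add_distrib]
    simp [hr]
    norm_num
  have hXY : ∀ i u, ‖u‖ = 1 → dist (X i) (Y u) = 1 := by
    intro i u hu
    rw [EuclideanSpace.dist_eq, Real.sqrt_eq_one, Fintype.sum_sum_type]
    simp only [X, Y, Sum.elim_inl, Sum.elim_inr, Real.dist_eq, sq_abs]
    have h1 : ∀ a, ((if a = i then r else 0) - r / (k + 1)) ^ 2
        = (if a = i then r ^ 2 * (1 - 2 / (k + 1)) else 0) + r ^ 2 / (k + 1) ^ 2 := by
      intro a
      split_ifs <;> field_simp <;> ring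
    have h2 : ∑ l, (0 - h * u l) ^ 2 = h ^ 2 := by
      rw [EuclideanSpace.norm_eq, Real.sqrt_eq_one] at hu
      simp only [Real.norm_eq_abs, sq_abs] at hu
      simp only [zero_sub, neg_sq, mul_pow, ← Finset.mul_sum, hu, mul_one]
    rw [h2, hh]
    simp only [h1, Finset.sum_add_distrib, hr]
    simp [hk]
    field_simp
    ring
  have hfr : Module.finrank ℝ (EuclideanSpace ℝ (S ⊕ Fin m)) = (k + m) + 1 := by
    rw [finrank_euclideanSpace]
    simp [hk]; ring
  have : Fact (Module.finrank ℝ (EuclideanSpace ℝ (S ⊕ Fin m)) = (k + m) + 1) := ⟨hfr⟩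
  let f : V → EuclideanSpace ℝ (S ⊕ Fin m) := fun v =>
    if hv : A v then X (s ⟨v, hv⟩) else Y (g ⟨v, hv⟩)
  have ha : ∀ v (hv : A v), f v = X (s ⟨v, hv⟩) := fun v hv => dif_pos hv
  have hb : ∀ v (hv : ¬ A v), f v = Y (g ⟨v, hv⟩) := fun v hv => dif_neg hv
  have hYinj : Function.Injective Y := by
    intro u v huv
    ext l
    have := congrArg (fun x => x (Sum.inr l)) huv
    simpa [Y, hpos.ne'] using this
  have hSne : Nonempty S := Fintype.card_pos_iff.1 (by omega)
  let w : EuclideanSpace ℝ (S ⊕ Fin m) :=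
    WithLp.toLp 2 (Sum.elim (fun _ => (1 : ℝ)) (fun _ => 0))
  refine aux_hyper G (k + m) f ?_ ?_ w ?_ r ?_
  · intro u v huv
    by_cases hu : A u <;> by_cases hv : A v
    · by_contra hne
      have : s ⟨u, hu⟩ ≠ s ⟨v, hv⟩ := fun h => hne (by simpa using hs h)
      have := hXX _ _ this
      rw [← ha, ← ha, huv, dist_self] at this
      norm_num at this
    · have := hXY (s ⟨u, hu⟩) (g ⟨v, hv⟩) (hg1 _)
      rw [← ha, ← hb, huv, dist_self] at this
      norm_num at this
    · have := hXY (s ⟨v, hv⟩) (g ⟨u, hu⟩) (hg1 _)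
      rw [← ha, ← hb, huv, dist_self] at this
      norm_num at this
    · rw [hb u hu, hb v hv] at huv
      simpa using hg (hYinj huv)
  · intro u v huv
    by_cases hu : A u <;> by_cases hv : A v
    · rw [ha u hu, ha v hv]
      exact hXX _ _ fun h => huv.ne (by simpa using hs h)
    · rw [ha u hu, hb v hv]
      exact hXY _ _ (hg1 _)
    · rw [hb u hu, ha v hv, dist_comm]
      exact hXY _ _ (hg1 _)
    · exact absurd huv (hG u v hu hv)
  · intro h0
    obtain ⟨i⟩ := hSne
    have := congrArg (fun x => x (Sum.inl i)) h0
    simp [w] at this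
  · intro v
    by_cases hv : A v
    · rw [ha v hv]
      simp [w, X, PiLp.inner_apply, Fintype.sum_sum_type]
    · rw [hb v hv]
      simp [w, Y, PiLp.inner_apply, Fintype.sum_sum_type, hk]
      field_simp

theorem dim_complete_multipartite_low (α β γ : ℕ) (hα : 1 ≤ α) (hβγ : β + γ ≤ 1)
    (V : Type) [Fintype V] (ι : Type) [Fintype ι] [DecidableEq ι]
    (P : V → ι) (G : SimpleGraph V)
    (hadj : ∀ u v, G.Adj u v ↔ P u ≠ P v)
    (hι : Fintype.card ι = α + β + γ)
    (h1 : (Finset.univ.filter fun i : ι => Fintype.card {v // P v = i} = 1).card = α)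
    (h2 : (Finset.univ.filter fun i : ι => Fintype.card {v // P v = i} = 2).card = β)
    (h3 : (Finset.univ.filter fun i : ι => 3 ≤ Fintype.card {v // P v = i}).card = γ) :
    G.udim = α + β + 2 * γ - 1 := by
  classical
  -- the exceptional parts
  have hcompl : (Finset.univ.filter fun i : ι => ¬ Fintype.card {v // P v = i} = 1).card = β + γ := by
    have := Finset.card_filter_add_card_filter_not (s := (Finset.univ : Finset ι))
      (fun i : ι => Fintype.card {v // P v = i} = 1)
    rw [Finset.card_univ] at this
    omega
  have huniq : ∀ i j, Fintype.card {v // P v = i} ≠ 1 → Fintype.card {v // P v = j} ≠ 1 → i = j := by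
    intro i j hi hj
    exact Finset.card_le_one.1 (hcompl.trans_le hβγ) i (by simpa using hi) j (by simpa using hj)
  have hspec : ∀ i j, 2 ≤ Fintype.card {v // P v = j} → 
      Fintype.card {v // P v = i} = 1 ∨ i = j := by
    intro i j hj
    by_cases h : Fintype.card {v // P v = i} = 1
    · exact Or.inl h
    · exact Or.inr (huniq i j h (by omega))
  have hne : ∀ i, 1 ≤ Fintype.card {v // P v = i} := by
    intro i
    by_contra hlt
    have hsub : ∀ j, Fintype.card {v // P v = j} ≠ 1 → j = i := fun j hj => huniq j i hj (by omega)
    have hb : β = 0 := by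
      rw [← h2, Finset.card_eq_zero, Finset.filter_eq_empty_iff]
      intro j _ hj
      have := hsub j (by omega)
      subst this; omega
    have hc : γ = 0 := by
      rw [← h3, Finset.card_eq_zero, Finset.filter_eq_empty_iff]
      intro j _ hj
      have := hsub j (by omega)
      subst this; omega
    rw [hb, hc, Finset.card_eq_zero, Finset.filter_eq_empty_iff] at hcompl
    exact hcompl (Finset.mem_univ i) (by omega)
  have hch : ∀ i, ∃ v, P v = i := by
    intro i
    obtain ⟨v⟩ := Fintype.card_pos_iff.1 (hne i)
    exact ⟨v, v.2⟩
  choose c hc using hch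
  let S := {i : ι // Fintype.card {v // P v = i} = 1}
  have hS : Fintype.card S = α := by rw [← h1, Fintype.card_subtype]
  let A : V → Prop := fun v => Fintype.card {u // P u = P v} = 1
  let s : {v // A v} → S := fun v => ⟨P v, v.2⟩
  have hs : Function.Injective s := by
    rintro ⟨u, hu⟩ ⟨v, hv⟩ h
    have h' : P u = P v := congrArg Subtype.val h
    have := Fintype.card_le_one_iff.1 (le_of_eq hv) ⟨u, h'⟩ ⟨v, rfl⟩
    simpa using this
  have hgex : ∃ g : {v // ¬ A v} → EuclideanSpace ℝ (Fin (β + 2 * γ)),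
      Function.Injective g ∧ ∀ b, ‖g b‖ = 1 := by
    obtain ⟨rfl, rfl⟩ | ⟨rfl, rfl⟩ | ⟨rfl, rfl⟩ : (β = 0 ∧ γ = 0) ∨ (β = 1 ∧ γ = 0) ∨ (β = 0 ∧ γ = 1) := by
      omega
    · rw [add_zero, Finset.card_eq_zero, Finset.filter_eq_empty_iff] at hcompl
      have : IsEmpty {v // ¬ A v} := ⟨fun v => hcompl (Finset.mem_univ (P v)) v.2⟩
      exact ⟨fun v => isEmptyElim v, fun v => isEmptyElim v, fun v => isEmptyElim v⟩
    · obtain ⟨j, hj⟩ := Finset.card_pos.1 (h2.symm ▸ Nat.one_pos)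
      have hj2 := (Finset.mem_filter.1 hj).2
      apply aux_line
      rw [← hj2]
      apply Fintype.card_congr
      apply Equiv.subtypeEquivRight
      intro v
      constructor
      · intro hv
        exact huniq _ _ hv (by omega)
      · intro hv
        simp only [A, hv]
        omega
    · exact aux_circle _
  obtain ⟨g, hg, hg1⟩ := hgex
  have hup : G.HasUnitDistRep (α + β + 2 * γ - 1) := by
    have := aux_upper G (α - 1) (β + 2 * γ) (by omega) A s hs g hg hg1 (by
      intro u v hu hv
      rw [hadj, not_not]
      exact huniq _ _ hu hv)
    rwa [show α - 1 + (β + 2 * γ) = α + β + 2 * γ - 1 by omega] at this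
  refine le_antisymm (Nat.sInf_le hup) (le_csInf ⟨_, hup⟩ ?_)
  rintro n ⟨f, hf, hd⟩
  by_cases hγ : γ = 0
  · have := aux_lower1 (fun i => f (c i)) (fun i j hij => hd ((hadj _ _).2 (by rwa [hc, hc])))
    omega
  · obtain ⟨j, hj⟩ := Finset.card_pos.1 (h3.symm ▸ Nat.pos_of_ne_zero hγ)
    have hj3 := (Finset.mem_filter.1 hj).2
    have : Nonempty S := Fintype.card_pos_iff.1 (by omega)
    obtain ⟨e⟩ : Nonempty (Fin 3 ↪ {v // P v = j}) :=
      Function.Embedding.nonempty_of_card_le (by simpa using hj3)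
    have := aux_lower2 (fun i : S => f (c i))
      (fun a b hab => hd ((hadj _ _).2 (by rw [hc, hc]; exact fun h => hab (Subtype.ext h))))
      (fun k => f (e k)) (fun a b hab => e.injective (Subtype.ext (hf hab)))
      (fun k i => hd ((hadj _ _).2 (by
        rw [hc, (e k).2]
        intro h
        have := i.2
        rw [← h] at this
        omega)))
    omega
end

section
/- Let α, β, γ be nonnegative integers with β + γ ≥ 2, and let G be a complete (α+β+γ)-partite graph having exactly α parts of size 1, exactly β parts of size 2, and exactly γ parts of size greater than or equal to 3. Then dim(G) = α + β + 2γ. -/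
lemma aux_inner4 {E : Type*} [NormedAddCommGroup E] [InnerProductSpace ℝ E] {a b x y : E}
    (h1 : dist a x = 1) (h2 : dist a y = 1) (h3 : dist b x = 1) (h4 : dist b y = 1) :
    inner ℝ (a - b) (x - y) = 0 := by
  rw [dist_eq_norm] at h1 h2 h3 h4
  have e1 := norm_sub_sq_real a x
  have e2 := norm_sub_sq_real a y
  have e3 := norm_sub_sq_real b x
  have e4 := norm_sub_sq_real b y
  rw [h1] at e1; rw [h2] at e2; rw [h3] at e3; rw [h4] at e4
  simp only [inner_sub_left, inner_sub_right]
  linarith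

lemma aux_indep3 {E : Type*} [NormedAddCommGroup E] [InnerProductSpace ℝ E] {a b c s : E}
    (h1 : dist a s = 1) (h2 : dist b s = 1) (h3 : dist c s = 1)
    (hab : a ≠ b) (hac : a ≠ c) (hbc : b ≠ c) :
    LinearIndependent ℝ ![b - a, c - a] := by
  have hx : b - a ≠ 0 := sub_ne_zero.2 hab.symm
  rw [LinearIndependent.pair_iff' hx]
  intro t ht
  have key : ∀ p : E, dist p s = 1 → 2 * inner ℝ (s - a) (p - a) = ‖p - a‖ ^ 2 := by
    intro p hp
    have e := norm_sub_sq_real (s - a) (p - a)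
    rw [sub_sub_sub_cancel_right, ← dist_eq_norm, dist_comm, hp, ← dist_eq_norm s a, dist_comm s a,
      h1] at e
    linarith
  have kb := key b h2
  have kc := key c h3
  rw [← ht, inner_smul_right, norm_smul, mul_pow, Real.norm_eq_abs, sq_abs] at kc
  have hpos : 0 < ‖b - a‖ ^ 2 := by positivity
  have : t * (t - 1) * ‖b - a‖ ^ 2 = 0 := by
    rw [← kb] at kc ⊢; linarith
  rcases mul_eq_zero.1 this with h | h
  · rcases mul_eq_zero.1 h with h | h
    · rw [h, zero_smul] at ht
      exact hac (sub_eq_zero.1 ht.symm).symm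
    · have : t = 1 := by linarith
      rw [this, one_smul] at ht
      exact hbc (sub_left_injective ht)
  · exact hpos.ne' h

lemma aux_sum_finrank {E : Type*} [NormedAddCommGroup E] [InnerProductSpace ℝ E]
    [FiniteDimensional ℝ E] {κ : Type*} [Fintype κ] (U : κ → Submodule ℝ E)
    (hU : ∀ i j, i ≠ j → U i ⟂ U j) :
    ∑ i, Module.finrank ℝ (U i) ≤ Module.finrank ℝ E := by
  classical
  have : ∀ s : Finset κ, ∑ i ∈ s, Module.finrank ℝ (U i)
      ≤ Module.finrank ℝ (s.sup U : Submodule ℝ E) := by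
    intro s
    induction s using Finset.induction_on with
    | empty => simp
    | insert a s ha ih =>
      rw [Finset.sum_insert ha, Finset.sup_insert]
      have ho : U a ⟂ s.sup U := by
        rw [Submodule.IsOrtho, Submodule.le_orthogonal_iff_le_orthogonal]
        apply Finset.sup_le
        intro j hj
        exact hU j a (fun h => ha (h ▸ hj))
      have := Submodule.finrank_sup_add_finrank_inf_eq (U a) (s.sup U)
      rw [ho.disjoint.eq_bot, finrank_bot] at this
      omega
  exact (this Finset.univ).trans (Submodule.finrank_le _)

lemma aux_gram {E : Type*} [NormedAddCommGroup E] [InnerProductSpace ℝ E]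
    {κ : Type*} [Fintype κ] (v : κ → E) (t : ℝ) (ht : 1 / 2 ≤ t)
    (h1 : ∀ k, ‖v k‖ ^ 2 = t) (h2 : ∀ k l, k ≠ l → ‖v k - v l‖ = 1) :
    LinearIndependent ℝ v := by
  classical
  rw [Fintype.linearIndependent_iff]
  intro c hc
  have hin : ∀ k l, inner ℝ (v k) (v l) = (t - 1 / 2) + if k = l then 1 / 2 else 0 := by
    intro k l
    by_cases h : k = l
    · subst h
      rw [real_inner_self_eq_norm_sq, h1]; simp
    · have e := norm_sub_sq_real (v k) (v l)
      rw [h2 k l h, h1, h1] at e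
      simp only [h, if_false]
      linarith
  have h0 : inner ℝ (∑ k, c k • v k) (∑ l, c l • v l) = 0 := by rw [hc, inner_zero_left]
  have h3 : (t - 1 / 2) * (∑ k, c k) ^ 2 + 1 / 2 * ∑ k, c k ^ 2 = 0 := by
    rw [← h0, sum_inner]
    simp only [inner_sum, inner_smul_left, inner_smul_right, hin, mul_add, Finset.sum_add_distrib]
    simp only [mul_ite, mul_zero, Finset.sum_ite_eq, Finset.mem_univ, if_true, sq,
      Finset.mul_sum]
    congr 1
    · refine Finset.sum_congr rfl fun i _ => ?_
      rw [Finset.sum_mul, Finset.mul_sum]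
      refine Finset.sum_congr rfl fun j _ => ?_
      simp; ring
    · refine Finset.sum_congr rfl fun i _ => ?_
      simp; ring
  have h4 : 0 ≤ (t - 1 / 2) * (∑ k, c k) ^ 2 := mul_nonneg (by linarith) (sq_nonneg _)
  have h5 : 0 ≤ ∑ k, c k ^ 2 := Finset.sum_nonneg fun i _ => sq_nonneg _
  have h6 : ∑ k, c k ^ 2 = 0 := by linarith
  intro i
  have := (Finset.sum_eq_zero_iff_of_nonneg (fun i _ => sq_nonneg (c i))).1 h6 i (Finset.mem_univ i)
  exact pow_eq_zero_iff (two_ne_zero) |>.1 this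

/-- span of the differences inside part `i`. -/
def auxW {E : Type*} [NormedAddCommGroup E] [InnerProductSpace ℝ E] {V ι : Type*}
    (P : V → ι) (f : V → E) (i : ι) : Submodule ℝ E :=
  Submodule.span ℝ {x | ∃ u v, P u = i ∧ P v = i ∧ x = f u - f v}

section
variable {E : Type*} [NormedAddCommGroup E] [InnerProductSpace ℝ E] {V ι : Type*}
    {P : V → ι} {f : V → E}

lemma auxW_inner (i : ι) (z : E) (hz : ∀ u v, P u = i → P v = i → inner ℝ (f u - f v) z = 0) :
    ∀ x ∈ auxW P f i, inner ℝ x z = 0 := by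
  intro x hx
  induction hx using Submodule.span_induction with
  | mem x h => obtain ⟨u, v, hu, hv, rfl⟩ := h; exact hz u v hu hv
  | zero => simp
  | add x y _ _ hx hy => rw [inner_add_left, hx, hy, add_zero]
  | smul a x _ hx => rw [inner_smul_left, hx, mul_zero]

lemma auxW_inner_sub (hf : ∀ u v, P u ≠ P v → dist (f u) (f v) = 1) (i : ι) (p q : V)
    (hp : P p ≠ i) (hq : P q ≠ i) : ∀ x ∈ auxW P f i, inner ℝ x (f p - f q) = 0 := by
  apply auxW_inner
  rintro u v rfl hv
  exact aux_inner4 (hf _ _ hp.symm) (hf _ _ hq.symm) (hf _ _ (hv ▸ hp.symm)) (hf _ _ (hv ▸ hq.symm))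

lemma auxW_ortho (hf : ∀ u v, P u ≠ P v → dist (f u) (f v) = 1) (i j : ι) (hij : i ≠ j) :
    ∀ x ∈ auxW P f i, ∀ y ∈ auxW P f j, inner ℝ x y = 0 := by
  intro x hx y hy
  rw [real_inner_comm]
  revert y
  apply auxW_inner
  rintro u v hu hv
  rw [real_inner_comm]
  exact auxW_inner_sub hf i u v (hu ▸ hij.symm) (hv ▸ hij.symm) x hx

lemma aux_good (hf : ∀ u v, P u ≠ P v → dist (f u) (f v) = 1) {κ : Type*} [Fintype κ]
    (s : κ → V) (hs : Function.Injective (P ∘ s)) (hsu : ∀ k v, P v = P (s k) → v = s k)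
    (a : V) (ha : ∀ k, P (s k) ≠ P a) (k0 : κ) (w : E) (hw : w ∈ auxW P f (P a))
    (hw2 : ∀ x ∈ auxW P f (P a), inner ℝ x (f (s k0) - f a - w) = 0) (hn : ‖w‖ ^ 2 ≤ 1 / 2) :
    ∃ v : κ → E, LinearIndependent ℝ v ∧ ∀ k i, ∀ x ∈ auxW P f i, inner ℝ x (v k) = 0 := by
  have hA : ∀ k, ∀ x ∈ auxW P f (P a), inner ℝ x (f (s k) - f a - w) = 0 := by
    intro k x hx
    have e1 := hw2 x hx
    have e2 := auxW_inner_sub hf (P a) (s k) (s k0) (ha k) (ha k0) x hx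
    simp only [inner_sub_right] at e1 e2 ⊢
    linarith
  refine ⟨fun k => f (s k) - f a - w, ?_, ?_⟩
  · refine aux_gram _ (1 - ‖w‖ ^ 2) (by linarith) ?_ ?_
    · intro k
      have e1 := hA k w hw
      have e2 := hf _ _ (ha k)
      have e3 := norm_sub_sq_real (f (s k) - f a) w
      rw [dist_eq_norm] at e2
      rw [inner_sub_right, real_inner_self_eq_norm_sq, real_inner_comm] at e1
      rw [e2] at e3
      rw [e3]; linarith
    · intro k l hkl
      have := hf (s k) (s l) (fun h => hkl (hs h))
      rw [dist_eq_norm] at this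
      rw [← this]; congr 1; abel
  · intro k i x hx
    by_cases hi : P a = i
    · subst hi; exact hA k x hx
    by_cases hk : P (s k) = i
    · revert x
      apply auxW_inner
      intro u v hu hv
      rw [hsu k u (hu.trans hk.symm), hsu k v (hv.trans hk.symm), sub_self, inner_zero_left]
    · rw [inner_sub_right, auxW_inner_sub hf i _ _ hk hi x hx,
        auxW_ortho hf i (P a) (Ne.symm hi) x hx w hw, sub_zero]

lemma aux_v [FiniteDimensional ℝ E] (hf : ∀ u v, P u ≠ P v → dist (f u) (f v) = 1)
    {κ : Type*} [Fintype κ]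
    (s : κ → V) (hs : Function.Injective (P ∘ s)) (hsu : ∀ k v, P v = P (s k) → v = s k)
    (a b : V) (ha : ∀ k, P (s k) ≠ P a) (hb : ∀ k, P (s k) ≠ P b) (hab : P a ≠ P b) :
    ∃ v : κ → E, LinearIndependent ℝ v ∧ ∀ k i, ∀ x ∈ auxW P f i, inner ℝ x (v k) = 0 := by
  rcases isEmpty_or_nonempty κ with h | ⟨⟨k0⟩⟩
  · exact ⟨fun _ => 0, linearIndependent_empty_type, fun k => (h.false k).elim⟩
  have proj : ∀ a, ∃ w ∈ auxW P f (P a),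
      ∀ x ∈ auxW P f (P a), inner ℝ x (f (s k0) - f a - w) = 0 := by
    intro a
    refine ⟨(auxW P f (P a)).starProjection (f (s k0) - f a), Submodule.starProjection_apply_mem _ _, ?_⟩
    intro x hx
    rw [real_inner_comm]
    exact Submodule.starProjection_inner_eq_zero _ x hx
  obtain ⟨wa, ha1, ha2⟩ := proj a
  obtain ⟨wb, hb1, hb2⟩ := proj b
  have hS : ‖wa‖ ^ 2 + ‖wb‖ ^ 2 ≤ 1 := by
    have e1 := ha2 wa ha1
    have e2 := hb2 wb hb1
    have e3 := auxW_inner_sub hf (P a) (s k0) b (ha k0) hab.symm wa ha1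
    have e4 := auxW_inner_sub hf (P b) (s k0) a (hb k0) hab wb hb1
    have e5 := auxW_ortho hf _ _ hab wa ha1 wb hb1
    have e6 := norm_sub_sq_real wb wa
    rw [real_inner_comm, e5] at e6
    have e7 := real_inner_le_norm (wb - wa) (f a - f b)
    have e8 := hf _ _ hab
    rw [dist_eq_norm] at e8
    rw [e8, mul_one] at e7
    have e9 : inner ℝ (wb - wa) (f a - f b) = ‖wa‖ ^ 2 + ‖wb‖ ^ 2 := by
      rw [← real_inner_self_eq_norm_sq, ← real_inner_self_eq_norm_sq]
      simp only [inner_sub_left, inner_sub_right] at e1 e2 e3 e4 ⊢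
      linarith
    rw [e9] at e7
    have h0 := norm_nonneg (wb - wa)
    nlinarith
  rcases le_total (‖wa‖ ^ 2) (1 / 2) with h | h
  · exact aux_good hf s hs hsu a ha k0 wa ha1 ha2 h
  · exact aux_good hf s hs hsu b hb k0 wb hb1 hb2 (by linarith)

lemma auxW_mem {u v : V} {i : ι} (hu : P u = i) (hv : P v = i) : f u - f v ∈ auxW P f i :=
  Submodule.subset_span ⟨u, v, hu, hv, rfl⟩

lemma auxW_one [FiniteDimensional ℝ E] (hinj : Function.Injective f) {u v : V} {i : ι}
    (hu : P u = i) (hv : P v = i) (huv : u ≠ v) : 1 ≤ Module.finrank ℝ (auxW P f i) := by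
  rw [Submodule.one_le_finrank_iff]
  intro h
  have := auxW_mem (f := f) hu hv
  rw [h, Submodule.mem_bot, sub_eq_zero] at this
  exact huv (hinj this)

lemma auxW_two [FiniteDimensional ℝ E] (hf : ∀ u v, P u ≠ P v → dist (f u) (f v) = 1)
    (hinj : Function.Injective f) {u v w s : V} {i : ι}
    (hu : P u = i) (hv : P v = i) (hw : P w = i) (hs : P s ≠ i)
    (huv : u ≠ v) (huw : u ≠ w) (hvw : v ≠ w) : 2 ≤ Module.finrank ℝ (auxW P f i) := by
  have h := aux_indep3 (hf u s (hu ▸ hs.symm)) (hf v s (hv ▸ hs.symm)) (hf w s (hw ▸ hs.symm))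
    (hinj.ne huv) (hinj.ne huw) (hinj.ne hvw)
  have h2 := finrank_span_eq_card h
  rw [Fintype.card_fin] at h2
  refine h2.ge.trans ?_
  apply Submodule.finrank_mono
  rw [Submodule.span_le]
  rintro _ ⟨k, rfl⟩
  fin_cases k
  · exact auxW_mem hv hu
  · exact auxW_mem hw hu
end

lemma aux_lower {V ι : Type} [Fintype V] [Fintype ι] [DecidableEq ι] (P : V → ι)
    (hne : ∀ i, 1 ≤ Fintype.card {v // P v = i})
    (a b : V) (hab : P a ≠ P b) (ha : Fintype.card {v // P v = P a} ≠ 1)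
    (hb : Fintype.card {v // P v = P b} ≠ 1)
    (n : ℕ) (f : V → EuclideanSpace ℝ (Fin n)) (hinj : Function.Injective f)
    (hf : ∀ u v, P u ≠ P v → dist (f u) (f v) = 1) :
    ∑ i, (if 3 ≤ Fintype.card {v // P v = i} then 2 else 1) ≤ n := by
  classical
  let κ := {i : ι // Fintype.card {v // P v = i} = 1}
  have hex : ∀ k : κ, ∃ v : V, P v = k.1 ∧ ∀ u, P u = k.1 → u = v := by
    intro k
    obtain ⟨x, hx⟩ := Fintype.card_eq_one_iff.1 k.2
    exact ⟨x.1, x.2, fun u hu => congrArg Subtype.val (hx ⟨u, hu⟩)⟩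
  choose s hs1 hs2 using hex
  obtain ⟨v, hv1, hv2⟩ := aux_v (P := P) (f := f) hf s
    (fun k l h => Subtype.ext (by simpa [hs1] using h))
    (fun k v h => hs2 k v (h.trans (hs1 k))) a b
    (fun k h => ha (by rw [← h, hs1]; exact k.2)) (fun k h => hb (by rw [← h, hs1]; exact k.2)) hab
  have hvW : ∀ i, auxW P f i ⟂ Submodule.span ℝ (Set.range v) := by
    intro i
    rw [Submodule.IsOrtho, Submodule.le_orthogonal_iff_le_orthogonal, Submodule.span_le]
    rintro _ ⟨k, rfl⟩
    rw [SetLike.mem_coe, Submodule.mem_orthogonal]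
    exact hv2 k i
  have hWW : ∀ i j, i ≠ j → auxW P f i ⟂ auxW P f j := by
    intro i j hij
    rw [Submodule.isOrtho_iff_inner_eq]
    exact auxW_ortho hf i j hij
  let U : Option ι → Submodule ℝ (EuclideanSpace ℝ (Fin n)) := fun o =>
    o.elim (Submodule.span ℝ (Set.range v)) (auxW P f)
  have key := aux_sum_finrank U (by
    rintro (_ | i) (_ | j) h
    · exact (h rfl).elim
    · exact (hvW j).symm
    · exact hvW i
    · exact hWW i j (fun e => h (congrArg some e)))
  rw [Fintype.sum_option, finrank_euclideanSpace_fin] at key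
  have hU0 : Module.finrank ℝ (U none) = ∑ i : ι, if Fintype.card {v // P v = i} = 1 then 1 else 0 := by
    have := finrank_span_eq_card hv1
    rw [← Finset.card_filter, ← Fintype.card_subtype]
    exact this
  rw [hU0, ← Finset.sum_add_distrib] at key
  refine le_trans (Finset.sum_le_sum ?_) key
  intro i _
  change _ ≤ _ + Module.finrank ℝ (auxW P f i)
  have h0 := hne i
  split_ifs with h3 h1 h1
  · omega
  · obtain ⟨x, y, z, hxy, hxz, hyz⟩ := Fintype.two_lt_card_iff.1 h3
    obtain ⟨t, ht⟩ : ∃ t, P t ≠ i := by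
      by_contra! hc
      exact hab ((hc a).trans (hc b).symm)
    have := auxW_two hf hinj x.2 y.2 z.2 ht (fun e => hxy (Subtype.ext e))
      (fun e => hxz (Subtype.ext e)) (fun e => hyz (Subtype.ext e))
    omega
  · omega
  · obtain ⟨x, y, hxy⟩ := Fintype.one_lt_card_iff.1 (show 1 < Fintype.card {v // P v = i} by omega)
    have := auxW_one hinj x.2 y.2 (fun e => hxy (Subtype.ext e))
    omega

lemma aux_upper_s1 {V ι : Type} [Fintype V] [Fintype ι] [DecidableEq ι] (P : V → ι) (n : ℕ)
    (hn : ∑ i, (if 3 ≤ Fintype.card {v // P v = i} then 2 else 1) = n) :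
    ∃ f : V → EuclideanSpace ℝ (Fin n), Function.Injective f ∧
      ∀ u v, P u ≠ P v → dist (f u) (f v) = 1 := by
  classical
  let d : ι → ℕ := fun i => if 3 ≤ Fintype.card {v // P v = i} then 2 else 1
  have hx : ∀ i, ∃ x : {v // P v = i} → ℝ, Function.Injective x ∧ (∀ v, x v ^ 2 ≤ 1 / 2) ∧
      (¬ 3 ≤ Fintype.card {v // P v = i} → ∀ v, x v ^ 2 = 1 / 2) := by
    intro i
    by_cases h : 3 ≤ Fintype.card {v // P v = i}
    · let e := Fintype.equivFin {v // P v = i}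
      refine ⟨fun v => 1 / ((e v : ℕ) + 2 : ℝ), ?_, ?_, fun h' => (h' h).elim⟩
      · intro u v huv
        apply e.injective
        apply Fin.ext
        have h1 : ((e u : ℕ) + 2 : ℝ) = (e v : ℕ) + 2 := by
          simpa using huv
        exact_mod_cast add_right_cancel h1
      · intro v
        have h2 : (0 : ℝ) ≤ ((e v : ℕ) : ℝ) := Nat.cast_nonneg _
        rw [div_pow, div_le_div_iff₀ (by positivity) (by norm_num)]
        nlinarith
    · obtain ⟨e⟩ : Nonempty ({v // P v = i} ↪ Fin 2) := by
        apply Function.Embedding.nonempty_of_card_le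
        rw [Fintype.card_fin]; omega
      have hs : (√(1 / 2) : ℝ) ^ 2 = 1 / 2 := Real.sq_sqrt (by norm_num)
      have hp : (0 : ℝ) < √(1 / 2) := by positivity
      have hsq : ∀ v, (if e v = 0 then √(1 / 2) else -√(1 / 2) : ℝ) ^ 2 = 1 / 2 := by
        intro v; split_ifs
        · exact hs
        · rw [neg_sq]; exact hs
      refine ⟨fun v => if e v = 0 then √(1 / 2) else -√(1 / 2), ?_, fun v => (hsq v).le,
        fun _ v => hsq v⟩
      intro u v huv
      apply e.injective
      by_cases h1 : e u = 0 <;> by_cases h2 : e v = 0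
      · rw [h1, h2]
      · simp only [h1, h2, if_true, if_false] at huv; linarith
      · simp only [h1, h2, if_true, if_false] at huv; linarith
      · omega
  choose x hx1 hx2 hx3 using hx
  let X : V → ℝ := fun v => x (P v) ⟨v, rfl⟩
  have hXinj : ∀ u v, P u = P v → X u = X v → u = v := by
    intro u v h hX
    have : ∀ i (h : P v = i), X v = x i ⟨v, h⟩ := by rintro i rfl; rfl
    rw [this (P u) h.symm] at hX
    exact congrArg Subtype.val (hx1 _ hX)
  let c : V → ℕ → ℝ := fun v k => if k = 0 then X v else √(1 / 2 - X v ^ 2)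
  have hc : ∀ v, ∑ k : Fin (d (P v)), c v k ^ 2 = 1 / 2 := by
    intro v
    by_cases h : 3 ≤ Fintype.card {w // P w = P v}
    · have hd : d (P v) = 2 := if_pos h
      rw [hd, Fin.sum_univ_two]
      have h2 : X v ^ 2 ≤ 1 / 2 := hx2 _ _
      simp only [c, Fin.val_zero, Fin.val_one, if_true, one_ne_zero, if_false]
      rw [Real.sq_sqrt (by linarith)]; ring
    · have hd : d (P v) = 1 := if_neg h
      rw [hd, Fin.sum_univ_one]
      exact hx3 _ h _
  let J := Σ i : ι, Fin (d i)
  have hJ : Fintype.card J = n := by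
    rw [Fintype.card_sigma]; simp only [Fintype.card_fin]; exact hn
  let e : J ≃ Fin n := Fintype.equivFinOfCardEq hJ
  let F : V → J → ℝ := fun v j => if P v = j.1 then c v j.2 else 0
  have hF : ∀ v, ∑ j, F v j ^ 2 = 1 / 2 := by
    intro v
    rw [Fintype.sum_sigma, Finset.sum_eq_single (P v)]
    · simp only [F, if_true]; exact hc v
    · intro i _ hi
      simp [F, hi.symm]
    · simp
  refine ⟨fun v => WithLp.toLp 2 (fun k => F v (e.symm k)), ?_, ?_⟩
  · intro u v huv
    have hFF : ∀ j, F u j = F v j := by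
      intro j
      have := congrArg (fun z : EuclideanSpace ℝ (Fin n) => z (e j)) huv
      simpa using this
    have hP : P u = P v := by
      by_contra hP
      have h1 := hF u
      have h2 : ∀ j, F u j ^ 2 = 0 := by
        intro j
        by_cases hj : P u = j.1
        · rw [hFF]; simp [F, show ¬ P v = j.1 from fun h => hP (hj.trans h.symm)]
        · simp [F, hj]
      simp [h2] at h1
    have hd : 0 < d (P v) := by simp only [d]; split_ifs <;> norm_num
    have := hFF ⟨P v, ⟨0, hd⟩⟩
    simp only [F, hP, if_true, c] at this
    exact hXinj u v hP this
  · intro u v huv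
    rw [EuclideanSpace.dist_eq, Real.sqrt_eq_one]
    simp only [Real.dist_eq, sq_abs]
    rw [Equiv.sum_comp e.symm (fun j => (F u j - F v j) ^ 2)]
    have : ∀ j, (F u j - F v j) ^ 2 = F u j ^ 2 + F v j ^ 2 := by
      intro j
      have : F u j * F v j = 0 := by
        by_cases hj : P u = j.1
        · simp [F, show ¬ P v = j.1 from fun h => huv (hj.trans h.symm)]
        · simp [F, hj]
      linear_combination -2 * this
    simp only [this, Finset.sum_add_distrib, hF]
    norm_num


theorem dim_complete_multipartite_high (α β γ : ℕ) (hβγ : 2 ≤ β + γ)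
    (V : Type) [Fintype V] (ι : Type) [Fintype ι] [DecidableEq ι]
    (P : V → ι) (G : SimpleGraph V)
    (hadj : ∀ u v, G.Adj u v ↔ P u ≠ P v)
    (hι : Fintype.card ι = α + β + γ)
    (h1 : (Finset.univ.filter fun i : ι => Fintype.card {v // P v = i} = 1).card = α)
    (h2 : (Finset.univ.filter fun i : ι => Fintype.card {v // P v = i} = 2).card = β)
    (h3 : (Finset.univ.filter fun i : ι => 3 ≤ Fintype.card {v // P v = i}).card = γ) :
    G.udim = α + β + 2 * γ := by
  classical
  have hpart : ∀ i, 1 ≤ Fintype.card {v // P v = i} := by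
    have hle : ∀ i ∈ (Finset.univ : Finset ι),
        (if Fintype.card {v // P v = i} = 1 then 1 else 0) +
        (if Fintype.card {v // P v = i} = 2 then 1 else 0) +
        (if 3 ≤ Fintype.card {v // P v = i} then 1 else 0) ≤ 1 := by
      intro i _
      split_ifs <;> omega
    have := (Finset.sum_eq_sum_iff_of_le hle).1 (by
      rw [Finset.sum_add_distrib, Finset.sum_add_distrib, ← Finset.card_filter,
        ← Finset.card_filter, ← Finset.card_filter, h1, h2, h3]
      simp [hι])
    intro i
    have h := this i (Finset.mem_univ i)
    by_contra h0
    have h0 : Fintype.card {v // P v = i} = 0 := by omega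
    rw [h0] at h
    simp at h
  have hsum : ∑ i, (if 3 ≤ Fintype.card {v // P v = i} then 2 else 1) = α + β + 2 * γ := by
    have : ∀ i, (if 3 ≤ Fintype.card {v // P v = i} then 2 else 1) =
        1 + (if 3 ≤ Fintype.card {v // P v = i} then 1 else 0) := by
      intro i; split_ifs <;> rfl
    simp only [this]
    rw [Finset.sum_add_distrib, ← Finset.card_filter, h3]
    simp [hι]; ring
  have hup : G.HasUnitDistRep (α + β + 2 * γ) := by
    obtain ⟨f, hf1, hf2⟩ := aux_upper_s1 P _ hsum
    exact ⟨f, hf1, fun u v h => hf2 u v ((hadj u v).1 h)⟩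
  obtain ⟨i, hi, j, hj, hij⟩ : ∃ i, Fintype.card {v // P v = i} ≠ 1 ∧
      ∃ j, Fintype.card {v // P v = j} ≠ 1 ∧ i ≠ j := by
    have hcard : 1 < (Finset.univ.filter fun i : ι => ¬ Fintype.card {v // P v = i} = 1).card := by
      have := Finset.card_filter_add_card_filter_not (s := (Finset.univ : Finset ι))
        (fun i : ι => Fintype.card {v // P v = i} = 1)
      rw [h1, Finset.card_univ, hι] at this
      omega
    obtain ⟨i, hi, j, hj, hij⟩ := Finset.one_lt_card.1 hcard
    exact ⟨i, (Finset.mem_filter.1 hi).2, j, (Finset.mem_filter.1 hj).2, hij⟩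
  obtain ⟨⟨a, rfl⟩⟩ := Fintype.card_pos_iff.1 (hpart i)
  obtain ⟨⟨b, rfl⟩⟩ := Fintype.card_pos_iff.1 (hpart j)
  apply le_antisymm
  · exact Nat.sInf_le hup
  · refine le_csInf ⟨_, hup⟩ ?_
    rintro n ⟨f, hf1, hf2⟩
    rw [← hsum]
    exact aux_lower P hpart a b hij hi hj n f hf1 (fun u v h => hf2 ((hadj u v).2 h))
end

section
/- Let G be a complete multipartite graph with at least two parts, at least one of which has size 4 or larger. Then G is not dimension-critical. -/
/-- If three distinct points lie at distance one from every point of a nonempty set `Q`, then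
infinitely many points do. -/
theorem infinite_unit_dist {E : Type*} [NormedAddCommGroup E] [InnerProductSpace ℝ E]
    (Q : Set E) (hQ : Q.Nonempty) (a b c : E) (hab : a ≠ b) (hac : a ≠ c) (hbc : b ≠ c)
    (ha : ∀ q ∈ Q, dist a q = 1) (hb : ∀ q ∈ Q, dist b q = 1) (hc : ∀ q ∈ Q, dist c q = 1) :
    {p : E | ∀ q ∈ Q, dist p q = 1}.Infinite := by
  obtain ⟨u, rfl⟩ : ∃ u, b = a + u := ⟨b - a, by abel⟩
  obtain ⟨v, rfl⟩ : ∃ v, c = a + v := ⟨c - a, by abel⟩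
  have hu0 : u ≠ 0 := by rintro rfl; simp at hab
  have hv0 : v ≠ 0 := by rintro rfl; simp at hac
  have huv : u ≠ v := by rintro rfl; simp at hbc
  have hU : 0 < ‖u‖ ^ 2 := by positivity
  have hV : 0 < ‖v‖ ^ 2 := by positivity
  have key : ∀ w q, dist a q = 1 →
      (dist (a + w) q = 1 ↔ ‖w‖ ^ 2 + 2 * inner ℝ w (a - q) = 0) := by
    intro w q h
    rw [dist_eq_norm] at h ⊢
    have e : a + w - q = w + (a - q) := by abel
    have h2 := norm_add_sq_real w (a - q)
    rw [h] at h2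
    rw [e]
    constructor
    · intro h3
      rw [h3] at h2
      linarith
    · intro h3
      have : ‖w + (a - q)‖ ^ 2 = 1 := by linarith
      exact (pow_eq_one_iff_of_nonneg (norm_nonneg _) two_ne_zero).1 this
  have hu : ∀ q ∈ Q, ‖u‖ ^ 2 + 2 * inner ℝ u (a - q) = 0 :=
    fun q hq => (key u q (ha q hq)).1 (hb q hq)
  have hv : ∀ q ∈ Q, ‖v‖ ^ 2 + 2 * inner ℝ v (a - q) = 0 :=
    fun q hq => (key v q (ha q hq)).1 (hc q hq)
  have ind : ∀ s t : ℝ, s • u = t • v → s = 0 ∧ t = 0 := by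
    intro s t h
    obtain ⟨q, hq⟩ := hQ
    have h1 : s * ‖u‖ ^ 2 = t * ‖v‖ ^ 2 := by
      have := congrArg (fun z => inner ℝ z (a - q)) h
      simp only [inner_smul_left, RCLike.conj_to_real] at this
      linear_combination s * hu q hq - t * hv q hq - 2 * this
    have h2 : s ^ 2 * ‖u‖ ^ 2 = t ^ 2 * ‖v‖ ^ 2 := by
      have := congrArg (fun z => ‖z‖ ^ 2) h
      simpa [norm_smul, mul_pow] using this
    have h3 : t * (s - t) * ‖v‖ ^ 2 = 0 := by linear_combination h2 - s * h1
    have h4 : t * (s - t) = 0 := (mul_eq_zero.1 h3).resolve_right hV.ne'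
    rcases mul_eq_zero.1 h4 with h5 | h5
    · subst h5
      simp [hu0] at h
      exact ⟨h, rfl⟩
    · have : s = t := by linarith
      subst this
      by_cases hs : s = 0
      · exact ⟨hs, hs⟩
      · exact absurd (smul_right_injective E hs h) huv
  have hd : ∀ m : ℝ, u + m • v ≠ 0 := by
    intro m h
    have := (ind 1 (-m) (by rw [one_smul, neg_smul]; exact eq_neg_of_add_eq_zero_left h)).1
    norm_num at this
  let l : ℕ → ℝ := fun m => (‖u‖ ^ 2 + m * ‖v‖ ^ 2) / ‖u + (m : ℝ) • v‖ ^ 2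
  have hl : ∀ m, l m ≠ 0 := by
    intro m
    have := norm_pos_iff.2 (hd m)
    have : 0 < l m := by positivity
    exact this.ne'
  refine Set.infinite_of_injective_forall_mem
    (f := fun m : ℕ => a + l m • (u + (m : ℝ) • v)) ?_ ?_
  · intro m n h
    have h := add_left_cancel h
    have h1 := ind (l m - l n) (l n * n - l m * m) (by
      simp only [smul_add, smul_smul] at h
      rw [sub_smul, sub_smul, sub_eq_sub_iff_add_eq_add, h]
      abel)
    have e : l m = l n := by linarith [h1.1]
    have h2 := h1.2
    rw [e, ← mul_sub] at h2
    have h3 := (mul_eq_zero.1 h2).resolve_left (hl n)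
    have : (m : ℝ) = n := by linarith
    exact_mod_cast this
  · intro m q hq
    rw [key _ q (ha q hq)]
    have hp := norm_pos_iff.2 (hd m)
    have e : l m * ‖u + (m : ℝ) • v‖ ^ 2 = ‖u‖ ^ 2 + m * ‖v‖ ^ 2 := by
      simp only [l]
      field_simp
    rw [norm_smul, mul_pow, inner_smul_left, inner_add_left, inner_smul_left]
    simp only [RCLike.conj_to_real, Real.norm_eq_abs, sq_abs]
    linear_combination l m * e + l m * hu q hq + l m * m * hv q hq

theorem not_dimCritical_of_part_ge_four (V : Type) [Fintype V]
    (ι : Type) [Fintype ι] [DecidableEq ι]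
    (P : V → ι) (hP : Function.Surjective P) (G : SimpleGraph V)
    (hadj : ∀ u v, G.Adj u v ↔ P u ≠ P v)
    (hparts : 2 ≤ Fintype.card ι)
    (hbig : ∃ i : ι, 4 ≤ Fintype.card {v // P v = i}) :
    ¬ G.IsDimCritical := by
  classical
  intro hcrit
  obtain ⟨i, hi⟩ := hbig
  obtain ⟨g⟩ : Nonempty (Fin 4 ↪ {v // P v = i}) :=
    Function.Embedding.nonempty_of_card_le (by simpa using hi)
  have gne : ∀ j k, j ≠ k → (g j : V) ≠ g k := fun j k h h' =>
    h (g.injective (Subtype.ext h'))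
  obtain ⟨j, hj⟩ : ∃ j, j ≠ i := by
    have : Nontrivial ι := Fintype.one_lt_card_iff_nontrivial.1 (by omega)
    exact exists_ne i
  obtain ⟨y, hy⟩ := hP j
  set x : V := (g 0).1 with hx
  have hxi : P x = i := (g 0).2
  have hxy : G.Adj x y := by rw [hadj, hxi, hy]; exact hj.symm
  have hlt := hcrit s(x, y) hxy
  have hset : {n | (G.deleteEdges {s(x, y)}).HasUnitDistRep n} = {n | G.HasUnitDistRep n} := by
    ext n
    constructor
    · rintro ⟨f, finj, fd⟩
      have fd' : ∀ u v, u ≠ x → v ≠ x → P u ≠ P v → dist (f u) (f v) = 1 := by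
        intro u v hu hv h
        apply fd
        rw [SimpleGraph.deleteEdges_adj]
        refine ⟨(hadj u v).2 h, ?_⟩
        simp only [Set.mem_singleton_iff, Sym2.eq_iff]
        tauto
      have hQ : ∀ k : Fin 4, k ≠ 0 → ∀ q ∈ f '' {w | P w ≠ i}, dist (f (g k)) q = 1 := by
        rintro k hk _ ⟨w, hw, rfl⟩
        refine fd' _ _ (gne k 0 hk) ?_ ?_
        · rintro rfl; exact hw hxi
        · rw [(g k).2]; exact Ne.symm hw
      have hinf := infinite_unit_dist (f '' {w | P w ≠ i})
        ⟨f y, y, by simp [hy, hj], rfl⟩ (f (g 1)) (f (g 2)) (f (g 3))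
        (finj.ne (gne _ _ (by decide))) (finj.ne (gne _ _ (by decide)))
        (finj.ne (gne _ _ (by decide)))
        (hQ 1 (by decide)) (hQ 2 (by decide)) (hQ 3 (by decide))
      obtain ⟨p, hp, hpn⟩ := hinf.exists_notMem_finite (Set.finite_range f)
      refine ⟨Function.update f x p, ?_, ?_⟩
      · intro u v h
        by_cases hu : u = x <;> by_cases hv : v = x
        · rw [hu, hv]
        · subst hu
          rw [Function.update_self, Function.update_of_ne hv] at h
          exact absurd ⟨v, h.symm⟩ hpn
        · rw [hv, Function.update_self, Function.update_of_ne hu] at h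
          exact absurd ⟨u, h⟩ hpn
        · rw [Function.update_of_ne hu, Function.update_of_ne hv] at h
          exact finj h
      · intro u v h
        rw [hadj] at h
        by_cases hu : u = x <;> by_cases hv : v = x
        · rw [hu, hv] at h; exact absurd rfl h
        · rw [hu, Function.update_self, Function.update_of_ne hv]
          refine hp _ ⟨v, ?_, rfl⟩
          rw [hu, hxi] at h
          exact h.symm
        · rw [hv, Function.update_self, Function.update_of_ne hu, dist_comm]
          refine hp _ ⟨u, ?_, rfl⟩
          rw [hv, hxi] at h
          exact h
        · rw [Function.update_of_ne hu, Function.update_of_ne hv]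
          exact fd' u v hu hv h
    · rintro ⟨f, finj, fd⟩
      exact ⟨f, finj, fun u v h => fd (SimpleGraph.deleteEdges_le _ h)⟩
  unfold SimpleGraph.udim at hlt
  rw [hset] at hlt
  exact lt_irrefl _ hlt
end

section
/- For every integer n ≥ 3, the complete graph K_n is dimension-critical; moreover, for every edge e of K_n, dim(K_n − e) = n − 2. -/
theorem unitDist_card_le {ι : Type*} [Fintype ι] (d : ℕ) (f : ι → EuclideanSpace ℝ (Fin d))
    (hf : ∀ i j, i ≠ j → dist (f i) (f j) = 1) : Fintype.card ι ≤ d + 1 := by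
  classical
  have hA : AffineIndependent ℝ f := by
    rw [affineIndependent_iff_of_fintype]
    intro w hw h0 i
    have h := EuclideanGeometry.inner_weightedVSub (s₁ := Finset.univ) (s₂ := Finset.univ)
      (w₁ := w) (w₂ := w) f hw f hw
    rw [h0, inner_zero_left] at h
    have h1 : ∀ a b, w a * w b * (dist (f a) (f b) * dist (f a) (f b))
        = w a * w b - (if a = b then w a * w b else 0) := by
      intro a b
      by_cases hab : a = b
      · simp [hab]
      · simp [hab, hf a b hab]
    simp only [h1, Finset.sum_sub_distrib, ← Finset.mul_sum, hw] at h
    simp at h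
    have h2 := (Finset.sum_eq_zero_iff_of_nonneg (s := Finset.univ) (f := fun a => w a * w a)
      (fun a _ => mul_self_nonneg _)).1 (by linarith)
    simpa using h2 i (Finset.mem_univ i)
  have := hA.card_le_finrank_succ
  have h3 := Submodule.finrank_le (vectorSpan ℝ (Set.range f))
  rw [finrank_euclideanSpace_fin] at h3
  omega

/-- Scaled standard basis vector. -/
noncomputable def sPt (k : ℕ) (i : Fin k) : EuclideanSpace ℝ (Fin k) :=
  EuclideanSpace.single i (1 / √2 : ℝ)

theorem dist_sPt (k : ℕ) (i j : Fin k) (h : i ≠ j) : dist (sPt k i) (sPt k j) = 1 := by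
  have h2 : (√2 : ℝ)^2 = 2 := Real.sq_sqrt (by norm_num)
  have e : dist (sPt k i) (sPt k j) ^ 2 = 1 := by
    rw [dist_eq_norm, norm_sub_sq_real]
    simp [sPt, EuclideanSpace.inner_single_left, h, h2]
    norm_num
  rw [← Real.sqrt_sq (dist_nonneg (x := sPt k i) (y := sPt k j)), e, Real.sqrt_one]

/-- Constant vector. -/
noncomputable def cPt (k : ℕ) (a : ℝ) : EuclideanSpace ℝ (Fin k) := WithLp.toLp 2 (fun _ => a)

theorem dist_cPt (k : ℕ) (a : ℝ) (ha : k * a ^ 2 - √2 * a - 1 / 2 = 0) (j : Fin k) :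
    dist (cPt k a) (sPt k j) = 1 := by
  have h2 : (√2 : ℝ)^2 = 2 := Real.sq_sqrt (by norm_num)
  have h3 : (√2 : ℝ)⁻¹ = √2 / 2 := by
    have : (√2 : ℝ) ≠ 0 := by positivity
    field_simp; linarith
  have e : dist (cPt k a) (sPt k j) ^ 2 = 1 := by
    rw [dist_eq_norm, norm_sub_sq_real, EuclideanSpace.norm_sq_eq]
    simp [sPt, cPt, EuclideanSpace.inner_single_right, h3, abs_of_nonneg (Real.sqrt_nonneg 2)]
    nlinarith
  rw [← Real.sqrt_sq (dist_nonneg (x := cPt k a) (y := sPt k j)), e, Real.sqrt_one]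

theorem exists_roots (k : ℕ) (hk : 1 ≤ k) : ∃ a b : ℝ, a ≠ b ∧
    k * a ^ 2 - √2 * a - 1 / 2 = 0 ∧ k * b ^ 2 - √2 * b - 1 / 2 = 0 := by
  have h2 : (√2 : ℝ)^2 = 2 := Real.sq_sqrt (by norm_num)
  have hk' : (0 : ℝ) < k := by exact_mod_cast hk
  obtain ⟨r, hp, hs⟩ : ∃ r : ℝ, 0 < r ∧ r ^ 2 = 2 + 2 * k :=
    ⟨√(2 + 2 * k : ℝ), by positivity, Real.sq_sqrt (by positivity)⟩
  refine ⟨(√2 + r) / (2 * k), (√2 - r) / (2 * k), ?_, ?_, ?_⟩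
  · intro h
    field_simp at h
    linarith
  · field_simp
    nlinarith
  · field_simp
    nlinarith

theorem rep_top (n : ℕ) : (⊤ : SimpleGraph (Fin n)).HasUnitDistRep n := by
  have key : ∀ i j : Fin n, i ≠ j → dist (sPt n i) (sPt n j) = 1 := dist_sPt n
  refine ⟨sPt n, ?_, fun u v h => key u v h⟩
  intro i j h
  by_contra hne
  have := key i j hne
  rw [h, dist_self] at this
  exact zero_ne_one this

theorem rep_del (n : ℕ) (hn : 3 ≤ n) (u v : Fin n) (huv : u ≠ v) :
    ((⊤ : SimpleGraph (Fin n)).deleteEdges {s(u, v)}).HasUnitDistRep (n - 2) := by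
  classical
  obtain ⟨a, b, hab, ha, hb⟩ := exists_roots (n - 2) (by omega)
  have hc : Fintype.card {w : Fin n // w ∉ ({u, v} : Finset (Fin n))} = n - 2 := by
    rw [Fintype.card_subtype_compl, Fintype.card_coe, Finset.card_pair huv, Fintype.card_fin]
  let φ := Fintype.equivFinOfCardEq hc
  let f : Fin n → EuclideanSpace ℝ (Fin (n - 2)) := fun w =>
    if h : w ∉ ({u, v} : Finset (Fin n)) then sPt _ (φ ⟨w, h⟩)
    else if w = u then cPt _ a else cPt _ b
  have fu : f u = cPt _ a := by simp [f]
  have fv : f v = cPt _ b := by simp [f, huv.symm]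
  have key : ∀ x y, x ≠ y → s(x, y) ≠ s(u, v) → dist (f x) (f y) = 1 := by
    intro x y hxy hne
    by_cases hx : x ∈ ({u, v} : Finset (Fin n)) <;> by_cases hy : y ∈ ({u, v} : Finset (Fin n))
    · exfalso
      simp only [Finset.mem_insert, Finset.mem_singleton] at hx hy
      rcases hx with rfl | rfl <;> rcases hy with rfl | rfl <;> simp_all [Sym2.eq_swap]
    · have : f y = sPt _ (φ ⟨y, hy⟩) := dif_pos hy
      rw [this]
      simp only [Finset.mem_insert, Finset.mem_singleton] at hx
      rcases hx with rfl | rfl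
      · rw [fu]; exact dist_cPt _ _ ha _
      · rw [fv]; exact dist_cPt _ _ hb _
    · have : f x = sPt _ (φ ⟨x, hx⟩) := dif_pos hx
      rw [this, dist_comm]
      simp only [Finset.mem_insert, Finset.mem_singleton] at hy
      rcases hy with rfl | rfl
      · rw [fu]; exact dist_cPt _ _ ha _
      · rw [fv]; exact dist_cPt _ _ hb _
    · have e1 : f x = sPt _ (φ ⟨x, hx⟩) := dif_pos hx
      have e2 : f y = sPt _ (φ ⟨y, hy⟩) := dif_pos hy
      rw [e1, e2]
      apply dist_sPt
      intro h
      exact hxy (congrArg Subtype.val (φ.injective h))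
  have hne : cPt (n - 2) a ≠ cPt (n - 2) b := by
    intro h
    have := congrArg (fun z : EuclideanSpace ℝ (Fin (n - 2)) => z ⟨0, by omega⟩) h
    exact hab (by simpa [cPt] using this)
  refine ⟨f, ?_, ?_⟩
  · intro x y h
    by_contra hxy
    by_cases hs : s(x, y) = s(u, v)
    · rw [Sym2.eq_iff] at hs
      rcases hs with ⟨rfl, rfl⟩ | ⟨rfl, rfl⟩
      · exact hne (by rw [← fu, ← fv, h])
      · exact hne (by rw [← fu, ← fv, h])
    · have := key x y hxy hs
      rw [h, dist_self] at this
      exact zero_ne_one this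
  · intro x y h
    rw [SimpleGraph.deleteEdges_adj] at h
    exact key x y h.1 h.2

theorem lower_del (n d : ℕ) (u v : Fin n)
    (h : ((⊤ : SimpleGraph (Fin n)).deleteEdges {s(u, v)}).HasUnitDistRep d) : n - 2 ≤ d := by
  classical
  obtain ⟨f, -, hf⟩ := h
  have := unitDist_card_le (ι := {w : Fin n // w ≠ u}) d (fun w => f w.1) (by
    intro i j hij
    apply hf
    rw [SimpleGraph.deleteEdges_adj]
    refine ⟨fun h => hij (Subtype.ext h), ?_⟩
    intro h
    have h' : s(i.1, j.1) = s(u, v) := h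
    rw [Sym2.eq_iff] at h'
    rcases h' with h' | h'
    · exact i.2 h'.1
    · exact j.2 h'.2)
  simp at this
  omega

theorem lower_top (n d : ℕ) (h : (⊤ : SimpleGraph (Fin n)).HasUnitDistRep d) : n ≤ d + 1 := by
  obtain ⟨f, -, hf⟩ := h
  simpa using unitDist_card_le d f (fun i j hij => hf hij)

theorem completeGraph_isDimCritical (n : ℕ) (hn : 3 ≤ n) :
    (⊤ : SimpleGraph (Fin n)).IsDimCritical ∧
      ∀ e ∈ (⊤ : SimpleGraph (Fin n)).edgeSet,
        ((⊤ : SimpleGraph (Fin n)).deleteEdges {e}).udim = n - 2 := by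
  have main : ∀ e ∈ (⊤ : SimpleGraph (Fin n)).edgeSet,
        ((⊤ : SimpleGraph (Fin n)).deleteEdges {e}).udim = n - 2 := by
    intro e
    induction e using Sym2.ind with
    | _ u v =>
      intro he
      have huv : u ≠ v := he
      have hr := rep_del n hn u v huv
      apply le_antisymm
      · exact Nat.sInf_le hr
      · exact lower_del n _ u v (Nat.sInf_mem (s := {d | SimpleGraph.HasUnitDistRep _ d}) ⟨_, hr⟩)
  refine ⟨fun e he => ?_, main⟩
  rw [main e he]
  have : n ≤ (⊤ : SimpleGraph (Fin n)).udim + 1 :=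
    lower_top n _ (Nat.sInf_mem (s := {d | SimpleGraph.HasUnitDistRep _ d}) ⟨_, rep_top n⟩)
  omega
end

section
/- The complete bipartite graph K_{2,3} is dimension-critical; that is, dim(K_{2,3}) = 3 and for every edge e of K_{2,3}, dim(K_{2,3} − e) < 3. -/
lemma K23_rep3 : (completeBipartiteGraph (Fin 2) (Fin 3)).HasUnitDistRep 3 := by
  refine ⟨Sum.elim ![!₂[3/5,0,0], !₂[-3/5,0,0]]
    ![!₂[0,4/5,0], !₂[0,-4/5,0], !₂[0,0,4/5]], ?_, ?_⟩
  · intro u v h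
    have h0 := congrArg (fun x : EuclideanSpace ℝ (Fin 3) => x 0) h
    have h1 := congrArg (fun x : EuclideanSpace ℝ (Fin 3) => x 1) h
    have h2 := congrArg (fun x : EuclideanSpace ℝ (Fin 3) => x 2) h
    clear h
    rcases u with u | u <;> rcases v with v | v <;> fin_cases u <;> fin_cases v <;>
      first
      | rfl
      | (exfalso; norm_num at h0; done)
      | (exfalso; norm_num at h1; done)
      | (exfalso; norm_num at h2; done)
  · intro u v h
    rw [EuclideanSpace.dist_eq, Real.sqrt_eq_one]
    rcases u with u | u <;> rcases v with v | v <;> fin_cases u <;> fin_cases v <;>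
      first
      | (exfalso; simp at h; done)
      | (simp [Fin.sum_univ_three, Real.dist_eq, sq_abs]; norm_num; done)

lemma K23_not_rep (n : ℕ) (hn : n < 3) :
    ¬ (completeBipartiteGraph (Fin 2) (Fin 3)).HasUnitDistRep n := by
  rintro ⟨f, hf, hd⟩
  have hadj : ∀ (a : Fin 2) (b : Fin 3), dist (f (Sum.inr b)) (f (Sum.inl a)) = 1 := by
    intro a b
    apply hd
    simp
  have ha : f (Sum.inl 0) ≠ f (Sum.inl 1) := fun h => by simpa using hf h
  have h01 : f (Sum.inr 0) ≠ f (Sum.inr 1) := fun h => by simpa using hf h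
  have h02 : f (Sum.inr 0) ≠ f (Sum.inr 2) := fun h => by simpa using hf h
  have h12 : f (Sum.inr 1) ≠ f (Sum.inr 2) := fun h => by simpa using hf h
  interval_cases n
  · exact ha (Subsingleton.elim _ _)
  · have key : ∀ b : Fin 3, f (Sum.inr b) 0 = f (Sum.inl 0) 0 + 1 ∨
        f (Sum.inr b) 0 = f (Sum.inl 0) 0 - 1 := by
      intro b
      have h := hadj 0 b
      rw [EuclideanSpace.dist_eq, Real.sqrt_eq_one] at h
      simp only [Fin.sum_univ_one, Real.dist_eq, sq_abs] at h
      rcases sq_eq_sq_iff_eq_or_eq_neg.mp (h.trans (one_pow 2).symm) with h | h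
      · left; linarith
      · right; linarith
    have ext1 : ∀ x y : EuclideanSpace ℝ (Fin 1), x 0 = y 0 → x = y := by
      intro x y h
      ext i
      fin_cases i
      exact h
    rcases key 0 with h0 | h0 <;> rcases key 1 with h1 | h1 <;> rcases key 2 with h2 | h2 <;>
      first
      | exact h01 (ext1 _ _ (h0.trans h1.symm))
      | exact h02 (ext1 _ _ (h0.trans h2.symm))
      | exact h12 (ext1 _ _ (h1.trans h2.symm))
  · rcases EuclideanGeometry.eq_of_dist_eq_of_dist_eq_of_finrank_eq_two
      (by simp) ha h01 (hadj 0 0) (hadj 0 1) (hadj 0 2) (hadj 1 0) (hadj 1 1) (hadj 1 2) with h | h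
    · exact h02 h.symm
    · exact h12 h.symm

lemma K23_del_rep (i : Fin 2) (j : Fin 3) :
    ((completeBipartiteGraph (Fin 2) (Fin 3)).deleteEdges
      {s(Sum.inl i, Sum.inr j)}).HasUnitDistRep 2 := by
  refine ⟨Sum.elim (fun a => if a = i then !₂[3/5,0] else !₂[-3/5,0])
    (fun b => if b = j then !₂[-3/5,1] else if b = j + 1 then !₂[0,4/5] else !₂[0,-4/5]), ?_, ?_⟩
  · intro u v h
    have h0 := congrArg (fun x : EuclideanSpace ℝ (Fin 2) => x 0) h
    have h1 := congrArg (fun x : EuclideanSpace ℝ (Fin 2) => x 1) h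
    clear h
    rcases u with u | u <;> rcases v with v | v <;>
      simp only [Sum.elim_inl, Sum.elim_inr] at h0 h1 <;> split_ifs at h0 h1 <;>
      first
      | (exfalso; norm_num at h0; done)
      | (exfalso; norm_num at h1; done)
      | (congr 1; clear h0 h1; omega)
  · have key : ∀ (a : Fin 2) (b : Fin 3), ¬ (a = i ∧ b = j) →
      dist (if a = i then !₂[3/5,0] else !₂[-3/5,0] : EuclideanSpace ℝ (Fin 2))
        (if b = j then !₂[-3/5,1] else if b = j + 1 then !₂[0,4/5] else !₂[0,-4/5]) = 1 := by
      intro a b h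
      rw [EuclideanSpace.dist_eq, Real.sqrt_eq_one]
      split_ifs <;> first
        | (exfalso; tauto)
        | (simp [Fin.sum_univ_two, Real.dist_eq, sq_abs]; done)
        | (simp [Fin.sum_univ_two, Real.dist_eq, sq_abs]; norm_num; done)
    intro u v h
    rcases u with u | u <;> rcases v with v | v
    · simp at h
    · exact key u v (by simpa using h)
    · rw [dist_comm]
      exact key v u (by simp at h; tauto)
    · simp at h

theorem completeBipartite_two_three_isDimCritical :
    (completeBipartiteGraph (Fin 2) (Fin 3)).udim = 3 ∧
      ∀ e ∈ (completeBipartiteGraph (Fin 2) (Fin 3)).edgeSet,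
        ((completeBipartiteGraph (Fin 2) (Fin 3)).deleteEdges {e}).udim < 3 := by
  constructor
  · apply le_antisymm
    · exact Nat.sInf_le K23_rep3
    · refine le_csInf ⟨3, K23_rep3⟩ ?_
      intro n hn
      by_contra h
      exact K23_not_rep n (by omega) hn
  · intro e he
    have : ∃ i j, e = s(Sum.inl i, Sum.inr j) := by
      induction e with
      | _ u v =>
        rcases u with u | u <;> rcases v with v | v
        · simp at he
        · exact ⟨u, v, rfl⟩
        · exact ⟨v, u, Sym2.eq_swap⟩
        · simp at he
    obtain ⟨i, j, rfl⟩ := this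
    exact lt_of_le_of_lt (Nat.sInf_le (K23_del_rep i j)) (by norm_num)
end

section
/- For all integers α ≥ 0 and γ ≥ 2, the graph G(α, 0, γ) is dimension-critical. -/
/-- Part sizes for the complete multipartite graph `G(α, β, γ)`:
`α` parts of size 1, `β` parts of size 2, `γ` parts of size 3. -/
def Gsize (α β γ : ℕ) : Fin α ⊕ Fin β ⊕ Fin γ → ℕ
  | Sum.inl _ => 1
  | Sum.inr (Sum.inl _) => 2
  | Sum.inr (Sum.inr _) => 3

/-- The complete multipartite graph `G(α, β, γ)` with `α` parts of size 1, `β` parts of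
size 2, and `γ` parts of size 3; vertices are adjacent iff they lie in different parts. -/
def Gmp (α β γ : ℕ) :
    SimpleGraph (Σ i : Fin α ⊕ Fin β ⊕ Fin γ, Fin (Gsize α β γ i)) :=
  SimpleGraph.completeMultipartiteGraph fun i => Fin (Gsize α β γ i)

open scoped RealInnerProductSpace in
lemma gmp_inner_zero {E : Type*} [NormedAddCommGroup E] [InnerProductSpace ℝ E]
    {p q x y : E} (h1 : dist p x = 1) (h2 : dist p y = 1) (h3 : dist q x = 1)
    (h4 : dist q y = 1) : ⟪p - q, x - y⟫ = 0 := by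
  rw [dist_eq_norm] at *
  have e1 := norm_sub_sq_real p x
  have e2 := norm_sub_sq_real p y
  have e3 := norm_sub_sq_real q x
  have e4 := norm_sub_sq_real q y
  rw [h1] at e1
  rw [h2] at e2
  rw [h3] at e3
  rw [h4] at e4
  simp only [inner_sub_left, inner_sub_right]
  linarith

open scoped RealInnerProductSpace in
lemma gmp_pair_indep {E : Type*} [NormedAddCommGroup E] [InnerProductSpace ℝ E]
    {p a b c : E} (h1 : dist p a = 1) (h2 : dist p b = 1) (h3 : dist p c = 1)
    (hab : b ≠ a) (hac : c ≠ a) (hbc : b ≠ c) (s t : ℝ)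
    (h : s • (b - a) + t • (c - a) = 0) : s = 0 ∧ t = 0 := by
  have hu : b - a ≠ 0 := sub_ne_zero.2 hab
  have hv : c - a ≠ 0 := sub_ne_zero.2 hac
  have huv : b - a ≠ c - a := fun h => hbc (sub_left_injective h)
  have key : ∀ x : E, dist p x = 1 → 2 * ⟪p - a, x - a⟫ = ‖x - a‖ ^ 2 := by
    intro x hx
    rw [dist_eq_norm] at hx h1
    have e := norm_sub_sq_real (p - a) (x - a)
    rw [sub_sub_sub_cancel_right, hx, h1] at e
    linarith
  have kb := key b h2
  have kc := key c h3
  generalize b - a = u at *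
  generalize c - a = v at *
  have hw : ⟪p - a, s • u + t • v⟫ = 0 := by rw [h, inner_zero_right]
  rw [inner_add_right, real_inner_smul_right, real_inner_smul_right] at hw
  have hu2 : 0 < ‖u‖ ^ 2 := by positivity
  have hw2 : s * ‖u‖ ^ 2 + t * ‖v‖ ^ 2 = 0 := by rw [← kb, ← kc]; linarith
  by_cases ht : t = 0
  · subst ht
    simp at h
    exact ⟨h.resolve_right hu, rfl⟩
  · exfalso
    have hvk : v = (-s / t) • u := by
      have : t • v = (-s) • u := by
        rw [neg_smul]; exact eq_neg_of_add_eq_zero_right h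
      rw [div_eq_inv_mul, mul_smul, ← this, smul_smul, inv_mul_cancel₀ ht, one_smul]
    set k := -s / t with hk
    have hs : s = -(k * t) := by rw [hk]; field_simp
    rw [hvk, norm_smul, mul_pow, Real.norm_eq_abs, sq_abs, hs] at hw2
    have : t * ‖u‖ ^ 2 * (k * (k - 1)) = 0 := by linear_combination hw2
    have h0 : k * (k - 1) = 0 := by
      rcases mul_eq_zero.1 this with h | h
      · exact absurd h (mul_ne_zero ht hu2.ne')
      · exact h
    rcases mul_eq_zero.1 h0 with h | h
    · rw [h, zero_smul] at hvk; exact hv hvk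
    · rw [sub_eq_zero.1 h, one_smul] at hvk; exact huv hvk.symm

/-- difference vectors in the triples -/
def gmpU {E : Type*} [AddCommGroup E] {γ : ℕ} (T : Fin γ → Fin 3 → E) (j : Fin γ × Fin 2) : E :=
  T j.1 j.2.succ - T j.1 0

open scoped RealInnerProductSpace in
lemma gmp_lower {E : Type*} [NormedAddCommGroup E] [InnerProductSpace ℝ E]
    [FiniteDimensional ℝ E] {α γ : ℕ} (hγ : 2 ≤ γ) (s : Fin α → E) (T : Fin γ → Fin 3 → E)
    (hT : ∀ j, Function.Injective (T j))
    (hss : ∀ i k, i ≠ k → dist (s i) (s k) = 1)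
    (hsT : ∀ i j x, dist (s i) (T j x) = 1)
    (hTT : ∀ j k x y, j ≠ k → dist (T j x) (T k y) = 1) :
    α + 2 * γ ≤ Module.finrank ℝ E := by
  have horth : ∀ j k x y, j ≠ k → ⟪gmpU T (j, x), gmpU T (k, y)⟫ = 0 := by
    intro j k x y hjk
    exact gmp_inner_zero (hTT _ _ _ _ hjk) (hTT _ _ _ _ hjk) (hTT _ _ _ _ hjk)
      (hTT _ _ _ _ hjk)
  have hLI : LinearIndependent ℝ (gmpU T) := by
    rw [Fintype.linearIndependent_iff]
    intro g hg
    rw [Fintype.sum_prod_type] at hg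
    have hz : ∀ k, ∑ x, g (k, x) • gmpU T (k, x) = 0 := by
      intro k
      rw [← inner_self_eq_zero (𝕜 := ℝ)]
      have h0 : ⟪∑ x, g (k, x) • gmpU T (k, x), ∑ j, ∑ x, g (j, x) • gmpU T (j, x)⟫ = 0 := by
        rw [hg, inner_zero_right]
      rw [inner_sum, Finset.sum_eq_single k] at h0
      · exact h0
      · intro j _ hjk
        simp only [inner_sum, sum_inner, real_inner_smul_left, real_inner_smul_right]
        simp [horth k j _ _ hjk.symm]
      · simp
    have hex : ∀ k : Fin γ, ∃ l : Fin γ, l ≠ k := by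
      intro k
      have : Nontrivial (Fin γ) := Fin.nontrivial_iff_two_le.2 hγ
      exact exists_ne k
    rintro ⟨k, x⟩
    obtain ⟨l, hl⟩ := hex k
    have hk := hz k
    rw [Fin.sum_univ_two] at hk
    have := gmp_pair_indep (p := T l 0) (hTT l k 0 0 hl) (hTT l k 0 _ hl) (hTT l k 0 _ hl)
      (fun h => by have := hT k h; simp at this)
      (fun h => by have := hT k h; simp at this)
      (fun h => by have := hT k h; simp at this) _ _ hk
    fin_cases x
    · exact this.1
    · exact this.2
  set W : Submodule ℝ E := Submodule.span ℝ (Set.range (gmpU T)) with hW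
  have hWr : Module.finrank ℝ W = 2 * γ := by
    rw [hW, finrank_span_eq_card hLI]; simp [mul_comm]
  have hsum := W.finrank_add_finrank_orthogonal
  have hmem : ∀ z : E, (∀ j x, ⟪gmpU T (j, x), z⟫ = 0) → z ∈ Wᗮ := by
    intro z hz
    rw [Submodule.mem_orthogonal]
    intro u hu
    induction hu using Submodule.span_induction with
    | mem u hu => obtain ⟨⟨j, x⟩, rfl⟩ := hu; exact hz j x
    | zero => simp
    | add a b _ _ ha hb => rw [inner_add_left, ha, hb, add_zero]
    | smul c a _ ha => rw [real_inner_smul_left, ha, mul_zero]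
  suffices hα : α ≤ Module.finrank ℝ Wᗮ by omega
  rcases Nat.eq_zero_or_pos α with h0 | hpos
  · omega
  let i0 : Fin α := ⟨0, hpos⟩
  let V : Fin γ → Submodule ℝ E := fun j => Submodule.span ℝ (Set.range fun x => gmpU T (j, x))
  have hVW : ∀ j, V j ≤ W := by
    intro j
    apply Submodule.span_mono
    rintro _ ⟨x, rfl⟩
    exact ⟨_, rfl⟩
  have hVo : ∀ j k x z, j ≠ k → z ∈ V j → ⟪gmpU T (k, x), z⟫ = 0 := by
    intro j k x z hjk hz
    induction hz using Submodule.span_induction with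
    | mem u hu => obtain ⟨y, rfl⟩ := hu; exact horth _ _ _ _ hjk.symm
    | zero => simp
    | add a b _ _ ha hb => rw [inner_add_right, ha, hb, add_zero]
    | smul c a _ ha => rw [real_inner_smul_right, ha, mul_zero]
  let q : Fin γ → E := fun j => (V j).starProjection (s i0 - T j 0)
  have hqV : ∀ j, q j ∈ V j := fun j => Submodule.starProjection_apply_mem _ _
  have hss0 : ∀ i k j x, ⟪gmpU T (j, x), s i - s k⟫ = 0 := by
    intro i k j x
    rw [real_inner_comm]
    exact gmp_inner_zero (hsT _ _ _) (hsT _ _ _) (hsT _ _ _) (hsT _ _ _)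
  let y : Fin γ → Fin α → E := fun j i => s i - T j 0 - q j
  have hyW : ∀ j i, y j i ∈ Wᗮ := by
    intro j i
    apply hmem
    intro k x
    have e : y j i = (s i - s i0) + (s i0 - T j 0 - q j) := by simp only [y]; abel
    rw [e, inner_add_right, hss0, zero_add]
    by_cases hjk : j = k
    · subst hjk
      have := (V j).sub_starProjection_mem_orthogonal (s i0 - T j 0)
      exact (Submodule.mem_orthogonal _ _).1 this _ (Submodule.subset_span ⟨x, rfl⟩)
    · rw [inner_sub_right, hVo j k x _ hjk (hqV j), sub_zero, real_inner_comm]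
      exact gmp_inner_zero (hsT _ _ _) (hsT _ _ _) (hTT _ _ _ _ hjk) (hTT _ _ _ _ hjk)
  have hWo : ∀ u ∈ W, ∀ v ∈ Wᗮ, ⟪u, v⟫ = 0 := fun u hu v hv =>
    (Submodule.mem_orthogonal _ _).1 hv u hu
  have hny : ∀ j i, ‖y j i‖ ^ 2 = 1 - ‖q j‖ ^ 2 := by
    intro j i
    have e : s i - T j 0 = q j + y j i := by simp only [y]; abel
    have h := norm_add_sq_real (q j) (y j i)
    rw [← e, ← dist_eq_norm, hsT, hWo _ (hVW j (hqV j)) _ (hyW j i)] at h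
    linarith
  have hq2 : ∀ j k, j ≠ k → ‖q j‖ ^ 2 + ‖q k‖ ^ 2 ≤ 1 := by
    intro j k hjk
    have e : T j 0 - T k 0 = (q k - q j) + (y k i0 - y j i0) := by simp only [y]; abel
    have h := norm_add_sq_real (q k - q j) (y k i0 - y j i0)
    rw [← e, ← dist_eq_norm, hTT _ _ _ _ hjk,
      hWo _ (W.sub_mem (hVW k (hqV k)) (hVW j (hqV j))) _ (Wᗮ.sub_mem (hyW k i0) (hyW j i0)),
      norm_sub_sq_real (q k) (q j)] at h
    have h3 : ⟪q k, q j⟫ = 0 := by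
      have hz := hqV k
      generalize q k = z at hz
      induction hz using Submodule.span_induction with
      | mem u hu => obtain ⟨x, rfl⟩ := hu; exact hVo j k x _ hjk (hqV j)
      | zero => simp
      | add a b _ _ ha hb => rw [inner_add_left, ha, hb, add_zero]
      | smul c a _ ha => rw [real_inner_smul_left, ha, mul_zero]
    rw [h3] at h
    nlinarith [sq_nonneg ‖y k i0 - y j i0‖]
  obtain ⟨j, hj⟩ : ∃ j, ‖q j‖ ^ 2 ≤ 1 / 2 := by
    by_contra! hc
    have h1 := hc ⟨0, by omega⟩
    have h2 := hc ⟨1, by omega⟩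
    have h3 := hq2 ⟨0, by omega⟩ ⟨1, by omega⟩ (by simp)
    linarith
  have hin : ∀ i k, ⟪y j i, y j k⟫ = (1 / 2 - ‖q j‖ ^ 2) + if i = k then 1 / 2 else 0 := by
    intro i k
    split_ifs with hik
    · subst hik
      rw [real_inner_self_eq_norm_sq, hny]; ring
    · have e : s i - s k = y j i - y j k := by simp only [y]; abel
      have h := norm_sub_sq_real (y j i) (y j k)
      rw [← e, ← dist_eq_norm, hss _ _ hik, hny, hny] at h
      linarith
  have hyLI : LinearIndependent ℝ (fun i => (⟨y j i, hyW j i⟩ : Wᗮ)) := by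
    rw [Fintype.linearIndependent_iff]
    intro g hg
    have hg' : ∑ i, g i • y j i = 0 := by
      have := congrArg (Subtype.val) hg
      simpa using this
    have hk : ∀ k, (1 / 2 - ‖q j‖ ^ 2) * ∑ i, g i + g k / 2 = 0 := by
      intro k
      have h0 : ⟪y j k, ∑ i, g i • y j i⟫ = 0 := by rw [hg', inner_zero_right]
      simp only [inner_sum, real_inner_smul_right, hin, mul_add, Finset.sum_add_distrib,
        mul_ite, mul_zero, Finset.sum_ite_eq, Finset.mem_univ, if_true] at h0
      rw [← Finset.sum_mul] at h0
      linarith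
    have hS : ∑ i, g i = 0 := by
      have h0 : ∑ k, ((1 / 2 - ‖q j‖ ^ 2) * ∑ i, g i + g k / 2) = 0 :=
        Finset.sum_eq_zero fun k _ => hk k
      rw [Finset.sum_add_distrib, ← Finset.sum_div] at h0
      simp only [Finset.sum_const, Finset.card_univ, Fintype.card_fin, nsmul_eq_mul] at h0
      have h1 : ((α : ℝ) * (1 / 2 - ‖q j‖ ^ 2) + 1 / 2) * ∑ i, g i = 0 := by
        linear_combination h0
      refine (mul_eq_zero.1 h1).resolve_left (ne_of_gt ?_)
      have : 0 ≤ (α : ℝ) * (1 / 2 - ‖q j‖ ^ 2) :=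
        mul_nonneg (Nat.cast_nonneg _) (by linarith)
      linarith
    intro k
    have := hk k
    rw [hS] at this
    linarith
  simpa using hyLI.fintype_card_le_finrank

/-- Placing the vertices at signed multiples of the basis vectors. -/
lemma gmp_rep {V ι : Type*} [Fintype ι] (G : SimpleGraph V) (f : V → ι) (σ : V → Bool)
    (hinj : ∀ u v, f u = f v → σ u = σ v → u = v)
    (hadj : ∀ u v, G.Adj u v → f u ≠ f v) : G.HasUnitDistRep (Fintype.card ι) := by
  classical
  let e := Fintype.equivFin ι
  let r : ℝ := Real.sqrt (1 / 2)
  have hr : r ^ 2 = 1 / 2 := Real.sq_sqrt (by norm_num)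
  have hr0 : 0 < r := Real.sqrt_pos.2 (by norm_num)
  let c : V → ℝ := fun v => if σ v then r else -r
  have hc2 : ∀ v, c v ^ 2 = 1 / 2 := by
    intro v; simp only [c]; split_ifs <;> simp [hr]
  have hc0 : ∀ v, c v ≠ 0 := by
    intro v h; have := hc2 v; rw [h] at this; norm_num at this
  refine ⟨fun v => EuclideanSpace.single (e (f v)) (c v), ?_, ?_⟩
  · intro u v h
    have h1 := congrArg (fun w => w (e (f u))) h
    simp only [PiLp.single_apply, if_true] at h1
    by_cases hf : f u = f v
    · rw [hf] at h1
      simp only [if_true] at h1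
      apply hinj _ _ hf
      simp only [c] at h1
      cases h2 : σ u <;> cases h3 : σ v <;> simp [h2, h3] at h1 ⊢ <;> linarith
    · rw [if_neg (fun h => hf (e.injective h))] at h1
      exact absurd h1 (hc0 u)
  · intro u v h
    have hf := hadj u v h
    have hs : dist (EuclideanSpace.single (e (f u)) (c u)) (EuclideanSpace.single (e (f v)) (c v))
        ^ 2 = 1 := by
      rw [dist_eq_norm, norm_sub_sq_real]
      simp only [PiLp.norm_single, Real.norm_eq_abs, sq_abs, hc2]
      rw [EuclideanSpace.inner_single_left, PiLp.single_apply,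
        if_neg (fun h => hf (e.injective h))]
      norm_num
    exact (pow_eq_one_iff_of_nonneg dist_nonneg two_ne_zero).1 hs

lemma gmp_udim_lower (α γ : ℕ) (hγ : 2 ≤ γ) (n : ℕ) (h : (Gmp α 0 γ).HasUnitDistRep n) :
    α + 2 * γ ≤ n := by
  obtain ⟨f, hinj, hadj⟩ := h
  have := gmp_lower (E := EuclideanSpace ℝ (Fin n)) hγ
    (fun i => f ⟨Sum.inl i, (0 : Fin 1)⟩)
    (fun j x => f ⟨Sum.inr (Sum.inr j), (x : Fin 3)⟩)
    (by
      intro j x y hxy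
      have := hinj hxy
      exact eq_of_heq (Sigma.mk.inj this).2)
    (by intro i k hik; apply hadj; simpa [Gmp] using hik)
    (by intro i j x; apply hadj; simp [Gmp])
    (by intro j k x y hjk; apply hadj; simpa [Gmp] using hjk)
  simpa using this

/-- Is the element the chosen one? -/
def gmpA (x l : Fin 3) : Bool := decide (x = l)

/-- Sign of an element of a triple. -/
def gmpB (x l : Fin 3) : Bool := !decide (x = l + 1)

/-- Axis of a vertex; `L` chooses the element of each triple that is alone on its axis. -/
def gmpAx {α γ : ℕ} (L : Fin γ → Fin 3) :
    (Σ i : Fin α ⊕ Fin 0 ⊕ Fin γ, Fin (Gsize α 0 γ i)) → Fin α ⊕ (Fin γ × Bool)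
  | ⟨Sum.inl i, _⟩ => Sum.inl i
  | ⟨Sum.inr (Sum.inr j), x⟩ => Sum.inr (j, gmpA x (L j))

/-- Sign of a vertex. -/
def gmpSg {α γ : ℕ} (L : Fin γ → Fin 3) :
    (Σ i : Fin α ⊕ Fin 0 ⊕ Fin γ, Fin (Gsize α 0 γ i)) → Bool
  | ⟨Sum.inl _, _⟩ => true
  | ⟨Sum.inr (Sum.inr j), x⟩ => gmpB x (L j)

/-- The vertex is alone on its axis. -/
def gmpLone {α γ : ℕ} (L : Fin γ → Fin 3) :
    (Σ i : Fin α ⊕ Fin 0 ⊕ Fin γ, Fin (Gsize α 0 γ i)) → Prop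
  | ⟨Sum.inl _, _⟩ => True
  | ⟨Sum.inr (Sum.inr j), x⟩ => (x : Fin 3) = L j

lemma gmp_fin3 : ∀ x y l : Fin 3, gmpA x l = gmpA y l →
    gmpB x l = gmpB y l → x = y := by decide

lemma gmp_fin3A : ∀ y l : Fin 3, gmpA l l = gmpA y l → y = l := by decide

lemma gmp_fin3B : ∀ l : Fin 3, gmpB l l = true := by decide

lemma gmp_inj {α γ : ℕ} (L : Fin γ → Fin 3)
    (u v : Σ i : Fin α ⊕ Fin 0 ⊕ Fin γ, Fin (Gsize α 0 γ i))
    (h1 : gmpAx L u = gmpAx L v) (h2 : gmpSg L u = gmpSg L v) : u = v := by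
  obtain ⟨i | i | i, x⟩ := u
  · obtain ⟨k | k | k, y⟩ := v
    · simp only [gmpAx, Sum.inl.injEq] at h1
      subst h1
      have : x = y := Subsingleton.elim (α := Fin 1) x y
      rw [this]
    · exact k.elim0
    · simp [gmpAx] at h1
  · exact i.elim0
  · obtain ⟨k | k | k, y⟩ := v
    · simp [gmpAx] at h1
    · exact k.elim0
    · simp only [gmpAx, Sum.inr.injEq, Prod.mk.injEq] at h1
      obtain ⟨rfl, h1⟩ := h1
      have : x = y := gmp_fin3 x y (L i) h1 h2
      rw [this]

lemma gmp_adj {α γ : ℕ} (L : Fin γ → Fin 3)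
    (u v : Σ i : Fin α ⊕ Fin 0 ⊕ Fin γ, Fin (Gsize α 0 γ i))
    (h : (Gmp α 0 γ).Adj u v) : gmpAx L u ≠ gmpAx L v := by
  intro h1
  replace h : u.1 ≠ v.1 := by simpa [Gmp] using h
  apply h
  obtain ⟨i | i | i, x⟩ := u
  · obtain ⟨k | k | k, y⟩ := v
    · simpa [gmpAx] using h1
    · exact k.elim0
    · simp [gmpAx] at h1
  · exact i.elim0
  · obtain ⟨k | k | k, y⟩ := v
    · simp [gmpAx] at h1
    · exact k.elim0
    · simp only [gmpAx, Sum.inr.injEq, Prod.mk.injEq] at h1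
      simp [h1.1]

lemma gmp_lone {α γ : ℕ} (L : Fin γ → Fin 3)
    (u v : Σ i : Fin α ⊕ Fin 0 ⊕ Fin γ, Fin (Gsize α 0 γ i))
    (hu : gmpLone L u) (h1 : gmpAx L v = gmpAx L u) : v = u := by
  apply gmp_inj L _ _ h1
  obtain ⟨i | i | i, x⟩ := u
  · obtain ⟨k | k | k, y⟩ := v
    · rfl
    · exact k.elim0
    · simp [gmpAx] at h1
  · exact i.elim0
  · obtain ⟨k | k | k, y⟩ := v
    · simp [gmpAx] at h1
    · exact k.elim0
    · simp only [gmpAx, Sum.inr.injEq, Prod.mk.injEq] at h1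
      obtain ⟨rfl, h1⟩ := h1
      have hx : (x : Fin 3) = L k := hu
      have hy : (y : Fin 3) = L k := gmp_fin3A y (L k) (by rw [h1, hx])
      have : x = y := hx.trans hy.symm
      rw [this]

lemma gmp_lone_sg {α γ : ℕ} (L : Fin γ → Fin 3)
    (u : Σ i : Fin α ⊕ Fin 0 ⊕ Fin γ, Fin (Gsize α 0 γ i))
    (hu : gmpLone L u) : gmpSg L u = true := by
  obtain ⟨i | i | i, x⟩ := u
  · rfl
  · exact i.elim0
  · have hx : (x : Fin 3) = L i := hu
    simp only [gmpSg]
    rw [hx]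
    exact gmp_fin3B _

lemma gmp_exists_L {α γ : ℕ}
    (u v : Σ i : Fin α ⊕ Fin 0 ⊕ Fin γ, Fin (Gsize α 0 γ i)) (h : u.1 ≠ v.1) :
    ∃ L : Fin γ → Fin 3, gmpLone L u ∧ gmpLone L v := by
  obtain ⟨i | i | i, x⟩ := u
  · obtain ⟨k | k | k, y⟩ := v
    · exact ⟨fun _ => 0, trivial, trivial⟩
    · exact k.elim0
    · exact ⟨fun _ => y, trivial, rfl⟩
  · exact i.elim0
  · obtain ⟨k | k | k, y⟩ := v
    · exact ⟨fun _ => x, rfl, trivial⟩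
    · exact k.elim0
    · refine ⟨fun j => if j = i then x else y, ?_, ?_⟩
      · simp [gmpLone]
      · have : k ≠ i := fun h' => h (by simp [h'])
        simp [gmpLone, this]

theorem Gmp_alpha_zero_gamma_isDimCritical (α γ : ℕ) (hγ : 2 ≤ γ) :
    (Gmp α 0 γ).IsDimCritical := by
  classical
  have hlow : α + 2 * γ ≤ (Gmp α 0 γ).udim := by
    have hne : {n | (Gmp α 0 γ).HasUnitDistRep n}.Nonempty :=
      ⟨_, gmp_rep (Gmp α 0 γ) (gmpAx fun _ => 0) (gmpSg fun _ => 0) (gmp_inj _) (gmp_adj _)⟩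
    exact gmp_udim_lower α γ hγ _ (Nat.sInf_mem hne)
  intro e he
  induction e using Sym2.ind with
  | _ u v =>
  rw [SimpleGraph.mem_edgeSet] at he
  obtain ⟨L, hu, hv⟩ := gmp_exists_L u v (by simpa [Gmp] using he)
  have huv : gmpAx L u ≠ gmpAx L v := gmp_adj L u v he
  have hrep := gmp_rep (ι := {a : Fin α ⊕ (Fin γ × Bool) // a ≠ gmpAx L v})
    ((Gmp α 0 γ).deleteEdges {s(u, v)})
    (fun w => if h : w = v then ⟨gmpAx L u, huv⟩ else
      ⟨gmpAx L w, fun h' => h (gmp_lone L v w hv h')⟩)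
    (fun w => if w = v then false else gmpSg L w) ?_ ?_
  · have hcard : Fintype.card {a : Fin α ⊕ (Fin γ × Bool) // a ≠ gmpAx L v} < α + 2 * γ := by
      have := Fintype.card_subtype_lt (p := fun a => a ≠ gmpAx L v) (x := gmpAx L v) (by simp)
      simp only [Fintype.card_sum, Fintype.card_prod, Fintype.card_fin, Fintype.card_bool] at this
      omega
    exact lt_of_le_of_lt (Nat.sInf_le hrep) (lt_of_lt_of_le hcard hlow)
  · intro a b h1 h2
    by_cases ha : a = v <;> by_cases hb : b = v
    · rw [ha, hb]
    · simp only [ha, hb, dite_true, dite_false, Subtype.mk.injEq, if_true, if_false] at h1 h2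
      have := gmp_lone L u b hu h1.symm
      rw [this, gmp_lone_sg L u hu] at h2
      simp at h2
    · simp only [ha, hb, dite_true, dite_false, Subtype.mk.injEq, if_true, if_false] at h1 h2
      have := gmp_lone L u a hu h1
      rw [this, gmp_lone_sg L u hu] at h2
      simp at h2
    · simp only [ha, hb, dite_false, Subtype.mk.injEq, if_false] at h1 h2
      exact gmp_inj L a b h1 h2
  · intro a b hab h1
    rw [SimpleGraph.deleteEdges_adj] at hab
    obtain ⟨hab, hne⟩ := hab
    by_cases ha : a = v <;> by_cases hb : b = v
    · rw [ha, hb] at hab; exact hab.ne rfl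
    · simp only [ha, hb, dite_true, dite_false, Subtype.mk.injEq] at h1
      have := gmp_lone L u b hu h1.symm
      apply hne
      rw [ha, this]
      simp [Sym2.eq_swap]
    · simp only [ha, hb, dite_true, dite_false, Subtype.mk.injEq] at h1
      have := gmp_lone L u a hu h1
      apply hne
      rw [hb, this]
      simp
    · simp only [ha, hb, dite_false, Subtype.mk.injEq] at h1
      exact gmp_adj L a b hab h1
end

section
/- For all integers α ≥ 0, β ≥ 1, and γ ≥ 0 with β + γ ≥ 3, the graph G(α, β, γ) is not dimension-critical. -/
open Module in
lemma sum_finrank_le_of_ortho {ι : Type*} [Fintype ι] {n : ℕ}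
    (V : ι → Submodule ℝ (EuclideanSpace ℝ (Fin n)))
    (hV : Pairwise fun i j => V i ⟂ V j) : ∑ i, finrank ℝ (V i) ≤ n := by
  classical
  have h1 := OrthogonalFamily.of_pairwise hV
  have h2 := h1.orthonormal_sigma_orthonormal (v_family := fun i => stdOrthonormalBasis ℝ (V i))
    (fun i => (stdOrthonormalBasis ℝ (V i)).orthonormal)
  have h3 := h2.linearIndependent.fintype_card_le_finrank
  simpa using h3

lemma simplex_linInd {α n : ℕ} (e : Fin α → EuclideanSpace ℝ (Fin n))
    (h1 : ∀ i, inner ℝ (e i) (e i) = 1) (h2 : ∀ i j, i ≠ j → inner ℝ (e i) (e j) = 1 / 2) :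
    LinearIndependent ℝ e := by
  rw [Fintype.linearIndependent_iff]
  intro a ha
  have key : ∀ k, a k = - ∑ i, a i := by
    intro k
    have h := congrArg (fun z => inner ℝ z (e k)) ha
    simp only [sum_inner, inner_smul_left, inner_zero_left] at h
    have h3 : ∀ i, (starRingEnd ℝ) (a i) * inner ℝ (e i) (e k)
        = a i * (1 / 2) + (if i = k then a i * (1 / 2) else 0) := by
      intro i
      by_cases hik : i = k
      · subst hik; rw [h1]; simp; ring
      · simp [h2 i k hik, hik]
    simp only [h3, Finset.sum_add_distrib, ← Finset.sum_mul, Finset.sum_ite_eq', Finset.mem_univ,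
      if_true] at h
    linarith
  have hS : ∑ i, a i = 0 := by
    have : ∑ i, a i = ∑ _i : Fin α, (- ∑ i, a i) := Finset.sum_congr rfl fun k _ => key k
    simp only [Finset.sum_const, Finset.card_univ, Fintype.card_fin, nsmul_eq_mul] at this
    have h0 : (0 : ℝ) ≤ α := Nat.cast_nonneg α
    have : (1 + (α : ℝ)) * ∑ i, a i = 0 := by linarith
    rcases mul_eq_zero.1 this with h | h
    · linarith
    · exact h
  intro i
  rw [key i, hS, neg_zero]

lemma affInd_small {n m : ℕ} (hm : m = 1 ∨ m = 2 ∨ m = 3) (p : Fin m → EuclideanSpace ℝ (Fin n))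
    (hp : Function.Injective p) (hn : ∀ i, ‖p i‖ = 1) : AffineIndependent ℝ p := by
  rcases hm with rfl | rfl | rfl
  · exact affineIndependent_of_subsingleton ℝ p
  · have : p = ![p 0, p 1] := by ext i; fin_cases i <;> rfl
    rw [this]
    exact affineIndependent_of_ne ℝ (fun h => by simpa using hp h)
  · refine EuclideanGeometry.Cospherical.affineIndependent (s := Set.range p) ⟨0, 1, ?_⟩
      subset_rfl hp
    rintro _ ⟨i, rfl⟩
    simpa using hn i

lemma lower_bound {α b γ n : ℕ} (hb : 2 ≤ b + γ)
    (x : (i : Fin α ⊕ Fin b ⊕ Fin γ) → Fin (Gsize α b γ i) → EuclideanSpace ℝ (Fin n))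
    (hinj : ∀ i, Function.Injective (x i)) (hnorm : ∀ i a, ‖x i a‖ = 1)
    (hin : ∀ i j, i ≠ j → ∀ a c, inner ℝ (x i a) (x j c) = 1 / 2) :
    α + 1 + b + 2 * γ ≤ n := by
  classical
  have hs : ∀ i, Gsize α b γ i = 1 ∨ Gsize α b γ i = 2 ∨ Gsize α b γ i = 3 := by
    rintro (i | i | i) <;> simp [Gsize]
  have hpos : ∀ i, 0 < Gsize α b γ i := fun i => by have := hs i; omega
  let W : Fin α ⊕ Fin b ⊕ Fin γ → Submodule ℝ (EuclideanSpace ℝ (Fin n)) :=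
    fun i => vectorSpan ℝ (Set.range (x i))
  have hWr : ∀ i, Module.finrank ℝ (W i) = Gsize α b γ i - 1 := by
    intro i
    refine (affInd_small (hs i) (x i) (hinj i) (hnorm i)).finrank_vectorSpan ?_
    have := hpos i
    simp; omega
  -- points are orthogonal to other spans
  have hxW : ∀ i j, i ≠ j → ∀ a, ∀ w ∈ W j, inner ℝ (x i a) w = 0 := by
    intro i j hij a w hw
    have : W j ≤ (ℝ ∙ (x i a))ᗮ := by
      refine Submodule.span_le.2 ?_
      rintro _ ⟨_, ⟨c, rfl⟩, _, ⟨d, rfl⟩, rfl⟩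
      simp only [SetLike.mem_coe, Submodule.mem_orthogonal_singleton_iff_inner_right]
      simp [vsub_eq_sub, inner_sub_right, hin i j hij]
    exact Submodule.mem_orthogonal_singleton_iff_inner_right.1 (this hw)
  have hWW : ∀ i j, i ≠ j → W i ⟂ W j := by
    intro i j hij
    rw [Submodule.isOrtho_iff_inner_eq]
    intro u hu w hw
    have : W i ≤ (ℝ ∙ w)ᗮ := by
      refine Submodule.span_le.2 ?_
      rintro _ ⟨_, ⟨c, rfl⟩, _, ⟨d, rfl⟩, rfl⟩
      simp only [SetLike.mem_coe, Submodule.mem_orthogonal_singleton_iff_inner_left]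
      simp [vsub_eq_sub, inner_sub_left, hxW i j hij _ w hw]
    exact Submodule.mem_orthogonal_singleton_iff_inner_left.1 (this hu)
  let e : Fin α → EuclideanSpace ℝ (Fin n) := fun i => x (Sum.inl i) ⟨0, hpos _⟩
  have he1 : ∀ i, inner ℝ (e i) (e i) = 1 := fun i => by
    simp [e, real_inner_self_eq_norm_sq, hnorm]
  have he2 : ∀ i j, i ≠ j → inner ℝ (e i) (e j) = 1 / 2 := fun i j hij =>
    hin _ _ (by simpa using hij) _ _
  have heW : ∀ i j, ∀ w ∈ W j, inner ℝ (e i) w = 0 := by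
    intro i j w hw
    by_cases hij : Sum.inl i = j
    · subst hij
      have h0 : W (Sum.inl i) = ⊥ := by
        rw [← Submodule.finrank_eq_zero (R := ℝ), hWr]; rfl
      rw [h0, Submodule.mem_bot] at hw
      simp [hw]
    · exact hxW _ _ hij _ w hw
  -- two large parts
  obtain ⟨j, k, hjk⟩ : ∃ j k : Fin b ⊕ Fin γ, j ≠ k := by
    have : 1 < Fintype.card (Fin b ⊕ Fin γ) := by simp; omega
    exact Fintype.one_lt_card_iff.1 this
  let X : Fin b ⊕ Fin γ → EuclideanSpace ℝ (Fin n) := fun j => x (Sum.inr j) ⟨0, hpos _⟩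
  let w : Fin b ⊕ Fin γ → EuclideanSpace ℝ (Fin n) :=
    fun j => (W (Sum.inr j)).starProjection (X j)
  have hw : ∀ j, w j ∈ W (Sum.inr j) := fun j => Submodule.starProjection_apply_mem _ _
  let P : Fin b ⊕ Fin γ → EuclideanSpace ℝ (Fin n) := fun j => X j - w j
  have hPW : ∀ j i, ∀ u ∈ W i, inner ℝ (P j) u = 0 := by
    intro j i u hu
    by_cases hij : Sum.inr j = i
    · subst hij
      exact Submodule.starProjection_inner_eq_zero _ _ hu
    · simp only [P, inner_sub_left]
      rw [hxW _ _ hij _ u hu, (Submodule.isOrtho_iff_inner_eq.1 (hWW _ _ hij)) _ (hw j) _ hu]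
      simp
  have hPe : ∀ j i, inner ℝ (e i) (P j) = 1 / 2 := by
    intro j i
    simp only [P, inner_sub_right]
    rw [heW i _ _ (hw j), hin _ _ (by simp)]
    simp
  have hPP : inner ℝ (P j) (P k) = 1 / 2 := by
    have : inner ℝ (P j) (P k) = inner ℝ (P j) (X k) - inner ℝ (P j) (w k) := by
      rw [← inner_sub_right]
    rw [this, hPW _ _ _ (hw k)]
    simp only [P, inner_sub_left]
    rw [real_inner_comm _ (w j), hxW _ (Sum.inr j) (by simpa using hjk.symm) _ _ (hw j),
      hin _ _ (by simpa using hjk)]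
    simp
  have hα : (α : ℝ) + 1 ≠ 0 := by positivity
  let s : EuclideanSpace ℝ (Fin n) := ((α : ℝ) + 1)⁻¹ • ∑ i, e i
  have hse : ∀ i, inner ℝ (e i) s = 1 / 2 := by
    intro i
    have h3 : ∀ i', inner ℝ (e i) (e i') = 1 / 2 + (if i = i' then 1 / 2 else 0) := by
      intro i'
      by_cases hik : i = i'
      · subst hik; rw [he1]; norm_num
      · simp [he2 i i' hik, hik]
    simp only [s, inner_smul_right, inner_sum, h3, Finset.sum_add_distrib, Finset.sum_const,
      Finset.card_univ, Fintype.card_fin, nsmul_eq_mul, Finset.sum_ite_eq, Finset.mem_univ, if_true]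
    field_simp
  have hsv : ∀ v : EuclideanSpace ℝ (Fin n), (∀ i, inner ℝ (e i) v = 1 / 2) →
      inner ℝ s v = α / (2 * ((α : ℝ) + 1)) := by
    intro v hv
    simp only [s, inner_smul_left, sum_inner, hv]
    simp
    field_simp
  let q := P j - s
  have hqe : ∀ i, inner ℝ q (e i) = 0 := by
    intro i
    rw [real_inner_comm]
    simp only [q, inner_sub_right, hPe, hse, sub_self]
  have hq0 : q ≠ 0 := by
    intro h0
    have h1 : inner ℝ q (P k - s) = 0 := by rw [h0, inner_zero_left]
    simp only [q, inner_sub_left, inner_sub_right] at h1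
    rw [hPP, hsv _ (hPe k), hsv _ hse, real_inner_comm, hsv _ (hPe j)] at h1
    field_simp at h1
    linarith
  have hqW : ∀ i, ∀ u ∈ W i, inner ℝ q u = 0 := by
    intro i u hu
    simp only [q, s, inner_sub_left, hPW j i u hu, inner_smul_left, sum_inner, heW _ i u hu]
    simp
  let V : Option (Option (Fin α ⊕ Fin b ⊕ Fin γ)) → Submodule ℝ (EuclideanSpace ℝ (Fin n)) :=
    fun o => match o with
      | none => Submodule.span ℝ {q}
      | some none => Submodule.span ℝ (Set.range e)
      | some (some i) => W i
  have o1 : Submodule.span ℝ {q} ⟂ Submodule.span ℝ (Set.range e) := by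
    rw [Submodule.isOrtho_span]
    rintro u rfl _ ⟨i, rfl⟩
    exact hqe i
  have o2 : ∀ i, Submodule.span ℝ {q} ⟂ W i := by
    intro i
    rw [← Submodule.span_eq (W i), Submodule.isOrtho_span]
    rintro u rfl v hv
    exact hqW i v hv
  have o3 : ∀ i, Submodule.span ℝ (Set.range e) ⟂ W i := by
    intro i
    rw [← Submodule.span_eq (W i), Submodule.isOrtho_span]
    rintro _ ⟨i', rfl⟩ v hv
    exact heW i' i v hv
  have hV : Pairwise fun i j => V i ⟂ V j := by
    rintro (_ | _ | i) (_ | _ | i') h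
    · exact absurd rfl h
    · exact o1
    · exact o2 _
    · exact o1.symm
    · exact absurd rfl h
    · exact o3 _
    · exact (o2 _).symm
    · exact (o3 _).symm
    · exact hWW _ _ (fun hh => h (by rw [hh]))
  have hfin := sum_finrank_le_of_ortho V hV
  rw [Fintype.sum_option, Fintype.sum_option] at hfin
  have r1 : Module.finrank ℝ (V none) = 1 := finrank_span_singleton hq0
  have r2 : Module.finrank ℝ (V (some none)) = α := by
    have := finrank_span_eq_card (simplex_linInd e he1 he2)
    simpa using this
  have r3 : ∀ i, Module.finrank ℝ (V (some (some i))) = Gsize α b γ i - 1 := hWr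
  simp only [r1, r2, r3, Fintype.sum_sum_type, Gsize] at hfin
  simp at hfin
  omega

/-- The coordinate axis and sign used for each vertex in the explicit representation. -/
noncomputable def repPt (α β γ : ℕ) :
    (Σ i : Fin α ⊕ Fin β ⊕ Fin γ, Fin (Gsize α β γ i)) →
      (Fin α ⊕ Fin β ⊕ Fin γ ⊕ Fin γ) × ℝ
  | ⟨Sum.inl i, _⟩ => (Sum.inl i, √(1 / 2))
  | ⟨Sum.inr (Sum.inl i), a⟩ => (Sum.inr (Sum.inl i), if a.1 = 0 then √(1 / 2) else -√(1 / 2))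
  | ⟨Sum.inr (Sum.inr i), a⟩ =>
      if a.1 = 2 then (Sum.inr (Sum.inr (Sum.inr i)), √(1 / 2))
      else (Sum.inr (Sum.inr (Sum.inl i)), if a.1 = 0 then √(1 / 2) else -√(1 / 2))

lemma repPt_sq (α β γ : ℕ) (v) : (repPt α β γ v).2 ^ 2 = 1 / 2 := by
  have h : √(1 / 2 : ℝ) ^ 2 = 1 / 2 := Real.sq_sqrt (by norm_num)
  rcases v with ⟨i | i | i, a⟩ <;> simp only [repPt] <;> (try split_ifs) <;> simp only [neg_sq, h]

lemma repPt_inj (α β γ : ℕ) : Function.Injective (repPt α β γ) := by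
  have h : 0 < √(1 / 2 : ℝ) := Real.sqrt_pos.2 (by norm_num)
  have h1 : √(1 / 2 : ℝ) ≠ -√(1 / 2) := by linarith
  have h2 : -√(1 / 2 : ℝ) ≠ √(1 / 2) := by linarith
  rintro ⟨i | i | i, ⟨a, ha⟩⟩ ⟨j | j | j, ⟨c, hc⟩⟩ hac <;> simp only [repPt] at hac <;>
    simp only [Gsize] at ha hc <;> (try split_ifs at hac) <;>
    simp only [Prod.mk.injEq, Sum.inl.injEq, Sum.inr.injEq, reduceCtorEq, false_and, h1, h2,
      and_false] at hac
  all_goals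
    obtain ⟨rfl, -⟩ := hac
    obtain rfl : a = c := by omega
    rfl

lemma repPt_ne (α β γ : ℕ) (u v) (huv : u.1 ≠ v.1) :
    (repPt α β γ u).1 ≠ (repPt α β γ v).1 := by
  rcases u with ⟨i | i | i, ⟨a, ha⟩⟩ <;> rcases v with ⟨j | j | j, ⟨c, hc⟩⟩ <;>
    simp only [repPt] <;> (try split_ifs) <;> simpa using huv

lemma upper_bound (α β γ : ℕ) : (Gmp α β γ).HasUnitDistRep (α + β + 2 * γ) := by
  classical
  have hc : Fintype.card (Fin α ⊕ Fin β ⊕ Fin γ ⊕ Fin γ) = α + β + 2 * γ := by simp; omega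
  let E := Fintype.equivFinOfCardEq hc
  let f : (Σ i : Fin α ⊕ Fin β ⊕ Fin γ, Fin (Gsize α β γ i)) →
      EuclideanSpace ℝ (Fin (α + β + 2 * γ)) :=
    fun v => EuclideanSpace.single (E (repPt α β γ v).1) (repPt α β γ v).2
  have hne : ∀ v, (repPt α β γ v).2 ≠ 0 := fun v h => by
    have := repPt_sq α β γ v
    rw [h] at this; norm_num at this
  refine ⟨f, ?_, ?_⟩
  · intro u v huv
    apply repPt_inj
    have h := congrArg (fun z : EuclideanSpace ℝ (Fin (α + β + 2 * γ)) =>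
      z (E (repPt α β γ u).1)) huv
    simp only [f, EuclideanSpace.single_apply, if_true] at h
    split_ifs at h with h'
    · exact Prod.ext (E.injective h') h
    · exact absurd h (hne u)
  · intro u v huv
    have huv' : u.1 ≠ v.1 := huv
    have h1 := repPt_ne α β γ u v huv'
    have h2 : inner ℝ (f u) (f v) = 0 := by
      simp [f, EuclideanSpace.inner_single_left, EuclideanSpace.single_apply, h1]
    have hn : ∀ v, ‖f v‖ ^ 2 = 1 / 2 := fun v => by
      simp only [f, EuclideanSpace.norm_single, Real.norm_eq_abs, sq_abs, repPt_sq]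
    have h3 : ‖f u - f v‖ ^ 2 = 1 := by
      rw [norm_sub_sq_real, h2, hn, hn]; norm_num
    rw [dist_eq_norm]
    exact (pow_eq_one_iff_of_nonneg (norm_nonneg _) two_ne_zero).1 h3

/-- Inclusion of `G(α, b, γ)` in `G(α, b + 1, γ)` omitting the first part of size two. -/
def incl (α b γ : ℕ) : (i : Fin α ⊕ Fin b ⊕ Fin γ) → Fin (Gsize α b γ i) →
    (Σ i : Fin α ⊕ Fin (b + 1) ⊕ Fin γ, Fin (Gsize α (b + 1) γ i))
  | Sum.inl i, a => ⟨Sum.inl i, a⟩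
  | Sum.inr (Sum.inl i), a => ⟨Sum.inr (Sum.inl i.succ), a⟩
  | Sum.inr (Sum.inr i), a => ⟨Sum.inr (Sum.inr i), a⟩

lemma incl_inj (α b γ : ℕ) (i) : Function.Injective (incl α b γ i) := by
  rcases i with i | i | i <;> intro a c h <;> exact eq_of_heq (Sigma.mk.inj h).2

lemma incl_ne (α b γ : ℕ) (i j) (h : i ≠ j) (a c) :
    (incl α b γ i a).1 ≠ (incl α b γ j c).1 := by
  rcases i with i | i | i <;> rcases j with j | j | j <;> simpa [incl] using h

lemma incl_ne_zero (α b γ : ℕ) (i a) : (incl α b γ i a).1 ≠ Sum.inr (Sum.inl 0) := by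
  rcases i with i | i | i <;> simp [incl, Fin.succ_ne_zero]

theorem Gmp_not_dimCritical_of_beta_pos (α β γ : ℕ) (hβ : 1 ≤ β) (hβγ : 3 ≤ β + γ) :
    ¬ (Gmp α β γ).IsDimCritical := by
  obtain ⟨b, rfl⟩ : ∃ b, β = b + 1 := ⟨β - 1, by omega⟩
  intro hcrit
  let v : Σ i : Fin α ⊕ Fin (b + 1) ⊕ Fin γ, Fin (Gsize α (b + 1) γ i) :=
    ⟨Sum.inr (Sum.inl 0), (0 : Fin 2)⟩
  let u : Σ i : Fin α ⊕ Fin (b + 1) ⊕ Fin γ, Fin (Gsize α (b + 1) γ i) :=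
    ⟨Sum.inr (Sum.inl 0), (1 : Fin 2)⟩
  have huv : u ≠ v := by
    intro h
    have h2 : (1 : Fin 2) = 0 := eq_of_heq (Sigma.mk.inj h).2
    exact absurd h2 (by decide)
  obtain ⟨w, hw⟩ : ∃ w : Σ i : Fin α ⊕ Fin (b + 1) ⊕ Fin γ, Fin (Gsize α (b + 1) γ i),
      v.1 ≠ w.1 := by
    rcases Nat.eq_zero_or_pos b with hb | hb
    · exact ⟨⟨Sum.inr (Sum.inr ⟨0, by omega⟩), (0 : Fin 3)⟩, by simp [v]⟩
    · exact ⟨incl α b γ (Sum.inr (Sum.inl ⟨0, hb⟩)) (0 : Fin 2), (incl_ne_zero _ _ _ _ _).symm⟩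
  have hlt := hcrit s(v, w) hw
  have hle : (Gmp α (b + 1) γ).udim ≤ α + (b + 1) + 2 * γ := Nat.sInf_le (upper_bound _ _ _)
  have hmem : ((Gmp α (b + 1) γ).deleteEdges {s(v, w)}).HasUnitDistRep
      ((Gmp α (b + 1) γ).deleteEdges {s(v, w)}).udim := by
    apply Nat.sInf_mem (s := {n | ((Gmp α (b + 1) γ).deleteEdges {s(v, w)}).HasUnitDistRep n})
    obtain ⟨f, hf, hf'⟩ := upper_bound α (b + 1) γ
    exact ⟨_, f, hf, fun _ _ h => hf' (SimpleGraph.deleteEdges_le _ h)⟩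
  generalize ((Gmp α (b + 1) γ).deleteEdges {s(v, w)}).udim = n at hlt hmem
  obtain ⟨f, hf, hf'⟩ := hmem
  have hd : ∀ p r, p.1 ≠ r.1 → p ≠ v → r ≠ v → dist (f p) (f r) = 1 := by
    intro p r hpr hp hr
    apply hf'
    rw [SimpleGraph.deleteEdges_adj]
    refine ⟨hpr, ?_⟩
    simp only [Set.mem_singleton_iff, Sym2.eq_iff]
    rintro (⟨h, -⟩ | ⟨-, h⟩)
    · exact hp h
    · exact hr h
  have hiv : ∀ i a, incl α b γ i a ≠ v := fun i a h =>
    incl_ne_zero α b γ i a (by rw [h])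
  have hnorm : ∀ i a, ‖f (incl α b γ i a) - f u‖ = 1 := by
    intro i a
    rw [← dist_eq_norm]
    exact hd _ _ (incl_ne_zero α b γ i a) (hiv i a) huv
  have := lower_bound (α := α) (b := b) (γ := γ) (n := n) (by omega)
    (fun i a => f (incl α b γ i a) - f u)
    (fun i a c h => incl_inj α b γ i (hf (sub_left_injective h)))
    hnorm
    (by
      intro i j hij a c
      have h1 := hd _ _ (incl_ne α b γ i j hij a c) (hiv i a) (hiv j c)
      have h2 : ‖(f (incl α b γ i a) - f u) - (f (incl α b γ j c) - f u)‖ = 1 := by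
        rw [sub_sub_sub_cancel_right, ← dist_eq_norm, h1]
      have h3 := norm_sub_sq_real (f (incl α b γ i a) - f u) (f (incl α b γ j c) - f u)
      rw [h2, hnorm, hnorm] at h3
      linarith)
  omega
end

section
/- For every integer α ≥ 1, the graph G(α, 1, 0) is not dimension-critical. -/
/-- Points at mutual distance one, indexed by `Option (Fin a)`, need dimension at least `a`. -/
theorem le_of_equilateral (a n : ℕ) (p : Option (Fin a) → EuclideanSpace ℝ (Fin n))
    (hp : ∀ i j, i ≠ j → Dist.dist (p i) (p j) = 1) : a ≤ n := by
  have hin : ∀ i j : Fin a, inner ℝ (p (some i) - p none) (p (some j) - p none)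
      = if i = j then (1 : ℝ) else 1 / 2 := by
    intro i j
    have hi : ‖p (some i) - p none‖ = 1 := by
      rw [← dist_eq_norm]; exact hp _ _ (by simp)
    have hj : ‖p (some j) - p none‖ = 1 := by
      rw [← dist_eq_norm]; exact hp _ _ (by simp)
    split_ifs with h
    · subst h
      rw [real_inner_self_eq_norm_sq, hi]; norm_num
    · have hij : ‖(p (some i) - p none) - (p (some j) - p none)‖ = 1 := by
        rw [sub_sub_sub_cancel_right, ← dist_eq_norm]; exact hp _ _ (by simpa using h)
      have := norm_sub_sq_real (p (some i) - p none) (p (some j) - p none)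
      rw [hij, hi, hj] at this
      linarith
  have hli : LinearIndependent ℝ (fun i : Fin a => p (some i) - p none) := by
    rw [Fintype.linearIndependent_iff]
    intro c hc
    have key : ∀ j, c j = - ∑ i, c i := by
      intro j
      have h1 : inner ℝ (∑ i, c i • (p (some i) - p none)) (p (some j) - p none) = (0 : ℝ) := by
        rw [hc, inner_zero_left]
      rw [sum_inner] at h1
      have h2 : ∀ i, inner ℝ (c i • (p (some i) - p none)) (p (some j) - p none)
          = (1 / 2) * c i + (if i = j then (1 / 2) * c i else 0) := by
        intro i
        rw [real_inner_smul_left, hin]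
        split_ifs <;> ring
      rw [Finset.sum_congr rfl (fun i _ => h2 i), Finset.sum_add_distrib, ← Finset.mul_sum,
        Finset.sum_ite_eq' Finset.univ j] at h1
      simp only [Finset.mem_univ, if_true] at h1
      linarith
    have hS : ∑ i, c i = 0 := by
      have h3 : ∑ i, c i = ∑ _j : Fin a, (- ∑ i, c i) := Finset.sum_congr rfl (fun j _ => key j)
      rw [Finset.sum_const, Finset.card_univ, Fintype.card_fin, nsmul_eq_mul] at h3
      have h4 : ((a : ℝ) + 1) * ∑ i, c i = 0 := by linarith
      rcases mul_eq_zero.mp h4 with h | h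
      · have : (0 : ℝ) ≤ a := Nat.cast_nonneg a
        linarith
      · exact h
    intro j
    rw [key j, hS, neg_zero]
  have := hli.fintype_card_le_finrank
  simpa using this

/-- The representation of `G(α, 1, 0)`. -/
noncomputable def repMap (α : ℕ) (s t u : ℝ) :
    (Σ i : Fin α ⊕ Fin 1 ⊕ Fin 0, Fin (Gsize α 1 0 i)) → EuclideanSpace ℝ (Fin α)
  | ⟨Sum.inl i, _⟩ => EuclideanSpace.single i s
  | ⟨Sum.inr (Sum.inl _), k⟩ => WithLp.toLp 2 (fun _ => if k.val = 0 then t else u)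
  | ⟨Sum.inr (Sum.inr j), _⟩ => j.elim0

theorem udist_single_single (α : ℕ) (s : ℝ) (hs : s ^ 2 = 1 / 2) (i j : Fin α) (h : i ≠ j) :
    Dist.dist (EuclideanSpace.single i s) (EuclideanSpace.single j s) = 1 := by
  rw [dist_eq_norm, ← sq_eq_sq₀ (norm_nonneg _) zero_le_one, norm_sub_sq_real]
  simp [EuclideanSpace.inner_single_left, h, h.symm]
  linarith

theorem udist_single_const (α : ℕ) (s t : ℝ) (hs : s ^ 2 = 1 / 2)
    (ht : α * t ^ 2 - 2 * s * t - 1 / 2 = 0) (i : Fin α) :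
    Dist.dist (EuclideanSpace.single i s) (WithLp.toLp 2 (fun _ : Fin α => t)) = 1 := by
  rw [dist_eq_norm, ← sq_eq_sq₀ (norm_nonneg _) zero_le_one, norm_sub_sq_real,
    EuclideanSpace.norm_sq_eq (WithLp.toLp 2 (fun _ : Fin α => t))]
  simp [EuclideanSpace.inner_single_left]
  linarith

theorem hasRep (α : ℕ) (hα : 1 ≤ α) : (Gmp α 1 0).HasUnitDistRep α := by
  have hα' : (0 : ℝ) < α := by exact_mod_cast hα
  obtain ⟨s, hs0, hs⟩ : ∃ s : ℝ, 0 < s ∧ s ^ 2 = 1 / 2 :=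
    ⟨√(1 / 2), by positivity, Real.sq_sqrt (by norm_num)⟩
  obtain ⟨r, hr0, hr⟩ : ∃ r : ℝ, 0 < r ∧ r ^ 2 = α + 1 :=
    ⟨√(α + 1), by positivity, Real.sq_sqrt (by positivity)⟩
  obtain ⟨t, ht⟩ : ∃ t : ℝ, t = s * (1 + r) / α := ⟨_, rfl⟩
  obtain ⟨u, hu⟩ : ∃ u : ℝ, u = s * (1 - r) / α := ⟨_, rfl⟩
  have htq : α * t ^ 2 - 2 * s * t - 1 / 2 = 0 := by
    have : α * t ^ 2 - 2 * s * t - 1 / 2 = (s ^ 2 * (r ^ 2 - 1)) / α - 1 / 2 := by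
      rw [ht]; field_simp; ring
    rw [this, hs, hr]; field_simp; ring
  have huq : α * u ^ 2 - 2 * s * u - 1 / 2 = 0 := by
    have : α * u ^ 2 - 2 * s * u - 1 / 2 = (s ^ 2 * (r ^ 2 - 1)) / α - 1 / 2 := by
      rw [hu]; field_simp; ring
    rw [this, hs, hr]; field_simp; ring
  have htu : t ≠ u := by
    intro h
    have h1 : t - u = 2 * s * r / α := by rw [ht, hu]; ring
    have h2 : 0 < 2 * s * r / α := by positivity
    linarith
  have hadj : ∀ ⦃x y⦄, (Gmp α 1 0).Adj x y →
      Dist.dist (repMap α s t u x) (repMap α s t u y) = 1 := by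
    rintro ⟨i | i | i, k⟩ ⟨j | j | j, l⟩ h
    · refine udist_single_single α s hs i j ?_
      rintro rfl
      exact h rfl
    · change Dist.dist (EuclideanSpace.single i s) (WithLp.toLp 2 (fun _ => if l.val = 0 then t else u)) = 1
      split_ifs
      · exact udist_single_const α s t hs htq i
      · exact udist_single_const α s u hs huq i
    · exact j.elim0
    · rw [dist_comm]
      change Dist.dist (EuclideanSpace.single j s) (WithLp.toLp 2 (fun _ => if k.val = 0 then t else u)) = 1
      split_ifs
      · exact udist_single_const α s t hs htq j
      · exact udist_single_const α s u hs huq j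
    · exact absurd (by rw [Subsingleton.elim i j]) h
    · exact j.elim0
    · exact i.elim0
    · exact i.elim0
    · exact i.elim0
  refine ⟨repMap α s t u, ?_, hadj⟩
  intro x y hxy
  by_cases hA : (Gmp α 1 0).Adj x y
  · have := hadj hA
    rw [hxy, dist_self] at this
    norm_num at this
  · have hfst : x.1 = y.1 := by
      by_contra h
      exact hA h
    obtain ⟨i, k⟩ := x
    obtain ⟨j, l⟩ := y
    obtain rfl : i = j := hfst
    rcases i with i | i | i
    · have : k = l := Subsingleton.elim (α := Fin 1) k l
      rw [this]
    · have h1 := congrArg (fun v : EuclideanSpace ℝ (Fin α) => v ⟨0, hα⟩) hxy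
      change (if k.val = 0 then t else u) = (if l.val = 0 then t else u) at h1
      have hk : k.val < 2 := k.isLt
      have hl : l.val < 2 := l.isLt
      have : k = l := by
        apply Fin.ext
        split_ifs at h1
        · omega
        · exact absurd h1 htu
        · exact absurd h1.symm htu
        · omega
      rw [this]
    · exact i.elim0

theorem Gmp_alpha_one_zero_not_dimCritical (α : ℕ) (hα : 1 ≤ α) :
    ¬ (Gmp α 1 0).IsDimCritical := by
  intro hcrit
  let a : Σ i : Fin α ⊕ Fin 1 ⊕ Fin 0, Fin (Gsize α 1 0 i) :=
    ⟨Sum.inl ⟨0, hα⟩, (0 : Fin 1)⟩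
  let b : Fin 2 → Σ i : Fin α ⊕ Fin 1 ⊕ Fin 0, Fin (Gsize α 1 0 i) :=
    fun k => ⟨Sum.inr (Sum.inl 0), k⟩
  have hab : (Gmp α 1 0).Adj a (b 1) := by
    change Sum.inl _ ≠ Sum.inr _
    simp
  have hlt := hcrit s(a, b 1) hab
  have hrep := hasRep α hα
  have hle : (Gmp α 1 0).udim ≤ α := Nat.sInf_le hrep
  have hne : {n | ((Gmp α 1 0).deleteEdges {s(a, b 1)}).HasUnitDistRep n}.Nonempty := by
    obtain ⟨f, hf, hd⟩ := hrep
    exact ⟨α, f, hf, fun x y h => hd (SimpleGraph.deleteEdges_le _ h)⟩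
  have hmem : ((Gmp α 1 0).deleteEdges {s(a, b 1)}).HasUnitDistRep
    (((Gmp α 1 0).deleteEdges {s(a, b 1)}).udim) := Nat.sInf_mem hne
  obtain ⟨f, -, hd⟩ := hmem
  let q : Option (Fin α) → Σ i : Fin α ⊕ Fin 1 ⊕ Fin 0, Fin (Gsize α 1 0 i) :=
    fun o => o.elim (b 0) (fun i => ⟨Sum.inl i, (0 : Fin 1)⟩)
  have hb : b 0 ≠ b 1 := by
    intro h
    have := eq_of_heq (Sigma.mk.inj h).2
    exact absurd (congrArg Fin.val this) (by change ¬ ((0 : ℕ) = 1); norm_num)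
  have hqb : ∀ o, q o ≠ b 1 := by
    rintro (_ | i)
    · exact hb
    · intro h
      have := (Sigma.mk.inj h).1
      simp at this
  have hq : ∀ i j, i ≠ j → Dist.dist (f (q i)) (f (q j)) = 1 := by
    intro i j hij
    apply hd
    rw [SimpleGraph.deleteEdges_adj]
    refine ⟨?_, ?_⟩
    · change (q i).1 ≠ (q j).1
      rcases i with _ | i <;> rcases j with _ | j
      · exact absurd rfl hij
      · simp [q, b]
      · simp [q, b]
      · simpa [q] using hij
    · rw [Set.mem_singleton_iff, Sym2.eq_iff]
      rintro (⟨-, h⟩ | ⟨h, -⟩)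
      · exact hqb _ h
      · exact hqb _ h
  have := le_of_equilateral α _ (fun o => f (q o)) hq
  omega
end

section
/- For every integer α ≥ 1, the graph G(α, 1, 1) is not dimension-critical. -/
open scoped RealInnerProductSpace

lemma GmpAux_sq {E : Type*} [NormedAddCommGroup E] [InnerProductSpace ℝ E] (x y : E) :
    dist x y ^ 2 = ⟪x, x⟫ - 2 * ⟪x, y⟫ + ⟪y, y⟫ := by
  rw [dist_eq_norm, ← real_inner_self_eq_norm_sq, inner_sub_left, inner_sub_right,
    inner_sub_right, real_inner_comm x y]
  ring

/-- Three distinct points on a unit sphere are affinely independent. -/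
lemma GmpAux_three {E : Type*} [NormedAddCommGroup E] [InnerProductSpace ℝ E]
    (o : E) (p : Fin 3 → E) (hp : Function.Injective p) (ho : ∀ i, dist (p i) o = 1)
    (y : Fin 3 → ℝ) (hy : ∑ i, y i = 0) (h : ∑ i, y i • p i = 0) : y = 0 := by
  have key : ∀ z : E, ∑ i, y i * dist (p i) z ^ 2 = 0 := by
    have h1 : ∀ z : E, ∑ i, y i * dist (p i) z ^ 2 = ∑ i, y i * ⟪p i, p i⟫ := by
      intro z
      have h2 : ∑ i, y i * ⟪p i, z⟫ = 0 := by
        have := congrArg (fun w => ⟪w, z⟫) h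
        simpa [sum_inner, inner_smul_left] using this
      simp only [GmpAux_sq]
      simp only [Fin.sum_univ_three] at *
      linear_combination (-2) * h2 + ⟪z, z⟫ * hy
    intro z
    rw [h1, ← h1 o]
    simpa [ho] using hy
  have k0 := key (p 0)
  have k1 := key (p 1)
  have k2 := key (p 2)
  simp only [Fin.sum_univ_three, dist_self] at k0 k1 k2 hy
  rw [dist_comm (p 1) (p 0)] at k0
  rw [dist_comm (p 2) (p 0)] at k0
  rw [dist_comm (p 2) (p 1)] at k1
  have d01 : 0 < dist (p 0) (p 1) ^ 2 := pow_pos (dist_pos.2 (hp.ne (by decide))) 2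
  have d02 : 0 < dist (p 0) (p 2) ^ 2 := pow_pos (dist_pos.2 (hp.ne (by decide))) 2
  have d12 : 0 < dist (p 1) (p 2) ^ 2 := pow_pos (dist_pos.2 (hp.ne (by decide))) 2
  generalize dist (p 0) (p 1) ^ 2 = A at *
  generalize dist (p 0) (p 2) ^ 2 = B at *
  generalize dist (p 1) (p 2) ^ 2 = C at *
  -- y1 A + y2 B = 0, y0 A + y2 C = 0, y0 B + y1 C = 0
  have e2 : y 2 = 0 := by
    have : y 2 * (2 * B * C) = 0 := by linear_combination C * k0 + B * k1 - A * k2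
    rcases mul_eq_zero.1 this with h | h
    · exact h
    · exact absurd h (by positivity)
  have e1 : y 1 = 0 := by
    have : y 1 * A = 0 := by rw [e2] at k0; linear_combination k0
    exact (mul_eq_zero.1 this).resolve_right d01.ne'
  have e0 : y 0 = 0 := by linear_combination hy - e1 - e2
  funext i
  fin_cases i <;> simp [e0, e1, e2]

/-- The lower bound. -/
lemma GmpAux_lower {E : Type*} [NormedAddCommGroup E] [InnerProductSpace ℝ E]
    [FiniteDimensional ℝ E] (m : ℕ) (t : Fin m → E) (p q : Fin 3 → E)
    (hp : Function.Injective p) (hq : Function.Injective q)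
    (htt : ∀ i j, i ≠ j → dist (t i) (t j) = 1)
    (htp : ∀ i j, dist (t i) (p j) = 1)
    (htq : ∀ i j, dist (t i) (q j) = 1)
    (hpq : ∀ i j, dist (p i) (q j) = 1) :
    m + 4 ≤ Module.finrank ℝ E := by
  let u : (Fin m ⊕ Fin 3) ⊕ Fin 3 → E × ℝ × ℝ :=
    Sum.elim (fun k => (Sum.elim t p k, 1, 0)) (fun k => (q k, 0, 1))
  have hli : LinearIndependent ℝ u := by
    rw [Fintype.linearIndependent_iff]
    intro g hg
    have h1 := congrArg Prod.fst hg
    have h2 := congrArg (fun w => w.2.1) hg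
    have h3 := congrArg (fun w => w.2.2) hg
    simp only [u, Fintype.sum_sum_type, Sum.elim_inl, Sum.elim_inr, Prod.fst_add, Prod.snd_add,
      Prod.fst_sum, Prod.snd_sum, Prod.smul_fst, Prod.smul_snd, smul_eq_mul, mul_one, mul_zero,
      Finset.sum_const_zero, add_zero, zero_add, Prod.fst_zero, Prod.snd_zero] at h1 h2 h3
    set X : Fin m → ℝ := fun i => g (Sum.inl (Sum.inl i)) with hX
    set Y : Fin 3 → ℝ := fun i => g (Sum.inl (Sum.inr i)) with hY
    set Z : Fin 3 → ℝ := fun i => g (Sum.inr i) with hZ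
    change (∑ i, X i • t i + ∑ i, Y i • p i) + ∑ i, Z i • q i = 0 at h1
    change ∑ i, X i + ∑ i, Y i = 0 at h2
    change ∑ i, Z i = 0 at h3
    set P := ∑ i, X i • t i + ∑ i, Y i • p i with hP
    set Q := ∑ i, Z i • q i with hQ
    have expand : ∀ z : E, ∑ i, X i * dist (t i) z ^ 2 + ∑ i, Y i * dist (p i) z ^ 2 =
        ∑ i, X i * ⟪t i, t i⟫ + ∑ i, Y i * ⟪p i, p i⟫ - 2 * ⟪P, z⟫ := by
      intro z
      have e1 : ∑ i, X i * dist (t i) z ^ 2 = ∑ i, X i * ⟪t i, t i⟫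
          - 2 * ∑ i, X i * ⟪t i, z⟫ + (∑ i, X i) * ⟪z, z⟫ := by
        rw [Finset.mul_sum, Finset.sum_mul, ← Finset.sum_sub_distrib, ← Finset.sum_add_distrib]
        exact Finset.sum_congr rfl fun i _ => by rw [GmpAux_sq]; ring
      have e2 : ∑ i, Y i * dist (p i) z ^ 2 = ∑ i, Y i * ⟪p i, p i⟫
          - 2 * ∑ i, Y i * ⟪p i, z⟫ + (∑ i, Y i) * ⟪z, z⟫ := by
        rw [Finset.mul_sum, Finset.sum_mul, ← Finset.sum_sub_distrib, ← Finset.sum_add_distrib]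
        exact Finset.sum_congr rfl fun i _ => by rw [GmpAux_sq]; ring
      have e3 : ⟪P, z⟫ = ∑ i, X i * ⟪t i, z⟫ + ∑ i, Y i * ⟪p i, z⟫ := by
        simp [hP, inner_add_left, sum_inner, inner_smul_left]
      rw [e1, e2, e3]
      linear_combination ⟪z, z⟫ * h2
    have hPq : ∀ j, 2 * ⟪P, q j⟫ = ∑ i, X i * ⟪t i, t i⟫ + ∑ i, Y i * ⟪p i, p i⟫ := by
      intro j
      have := expand (q j)
      simp only [htq, hpq, one_pow, mul_one] at this
      linarith
    have hPQ : ⟪P, Q⟫ = 0 := by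
      have : 2 * ⟪P, Q⟫ = 0 := by
        rw [hQ, inner_sum, Finset.mul_sum]
        have : ∀ j ∈ Finset.univ, 2 * ⟪P, Z j • q j⟫ =
            Z j * (∑ i, X i * ⟪t i, t i⟫ + ∑ i, Y i * ⟪p i, p i⟫) := by
          intro j _
          rw [inner_smul_right, ← hPq j]
          ring
        rw [Finset.sum_congr rfl this, ← Finset.sum_mul, h3, zero_mul]
      linarith
    have hP0 : P = 0 := by
      have : P = -Q := eq_neg_of_add_eq_zero_left h1
      rw [← inner_self_eq_zero (𝕜 := ℝ)]
      nth_rewrite 2 [this]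
      rw [inner_neg_right, hPQ, neg_zero]
    have hQ0 : Q = 0 := by simpa [hP0] using h1
    have hZ0 : Z = 0 := GmpAux_three (p 0) q hq (fun i => by rw [dist_comm, hpq]) Z h3 hQ0
    have hconst : ∑ i, X i * ⟪t i, t i⟫ + ∑ i, Y i * ⟪p i, p i⟫ = 0 := by
      rw [← hPq 0, hP0]; simp
    have hX0 : ∀ k, X k = 0 := by
      intro k
      have := expand (t k)
      rw [hconst, hP0] at this
      have e1 : ∑ i, X i * dist (t i) (t k) ^ 2 = ∑ i, X i - X k := by
        rw [← Finset.sum_erase_eq_sub (Finset.mem_univ k),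
          ← Finset.sum_erase_add _ _ (Finset.mem_univ k), dist_self]
        simp only [ne_eq, OfNat.ofNat_ne_zero, not_false_eq_true, zero_pow, mul_zero, add_zero]
        exact Finset.sum_congr rfl fun i hi => by
          rw [htt i k (Finset.ne_of_mem_erase hi)]; ring
      have e2 : ∀ i, dist (p i) (t k) = 1 := fun i => by rw [dist_comm, htp]
      rw [e1] at this
      simp only [e2, one_pow, mul_one, inner_zero_left] at this
      linarith
    have hY0 : Y = 0 := by
      refine GmpAux_three (q 0) p hp (fun i => hpq _ _) Y ?_ ?_
      · simpa [hX0] using h2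
      · simpa [hX0, hP] using hP0
    rintro ((i | i) | i)
    · exact hX0 i
    · exact congrFun hY0 i
    · exact congrFun hZ0 i
  have := hli.fintype_card_le_finrank
  simp at this
  omega

/-- coordinate index and sign for the explicit representation -/
def GmpAux_idx (α : ℕ) : (Σ i : Fin α ⊕ Fin 1 ⊕ Fin 1, Fin (Gsize α 1 1 i)) → Fin (α + 3)
  | ⟨Sum.inl i, _⟩ => ⟨i.1, by omega⟩
  | ⟨Sum.inr (Sum.inl _), _⟩ => ⟨α, by omega⟩
  | ⟨Sum.inr (Sum.inr _), k⟩ => if k.1 = 2 then ⟨α + 2, by omega⟩ else ⟨α + 1, by omega⟩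

def GmpAux_sgn (α : ℕ) : (Σ i : Fin α ⊕ Fin 1 ⊕ Fin 1, Fin (Gsize α 1 1 i)) → ℝ
  | ⟨_, k⟩ => if k.1 = 1 then -1 else 1

lemma GmpAux_upper (α : ℕ) : (Gmp α 1 1).HasUnitDistRep (α + 3) := by
  have hs : ∀ v, GmpAux_sgn α v ^ 2 = 1 := by
    rintro ⟨i, k⟩
    simp only [GmpAux_sgn]; split_ifs <;> norm_num
  have hc : (√2 / 2 : ℝ) ^ 2 = 1 / 2 := by
    rw [div_pow, Real.sq_sqrt (by norm_num)]; norm_num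
  have hc0 : (√2 / 2 : ℝ) ≠ 0 := by positivity
  refine ⟨fun v => EuclideanSpace.single (GmpAux_idx α v) (GmpAux_sgn α v * (√2 / 2)), ?_, ?_⟩
  · intro v w h
    have hne : ∀ v, GmpAux_sgn α v ≠ 0 := fun v h => by simpa [h] using hs v
    have h0 : GmpAux_idx α v = GmpAux_idx α w := by
      by_contra hne'
      have := congrArg (fun x => x (GmpAux_idx α v)) h
      simp [hne', hne] at this
    have h1 : GmpAux_sgn α v = GmpAux_sgn α w := by
      have := congrArg (fun x => x (GmpAux_idx α v)) h
      simpa [h0, hc0] using this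
    have n1 : ¬ ((-1 : ℝ) = 1) := by norm_num
    have n2 : ¬ ((1 : ℝ) = -1) := by norm_num
    obtain ⟨i | i | i, k, hk⟩ := v <;> obtain ⟨j | j | j, l, hl⟩ := w <;>
      simp only [GmpAux_idx, GmpAux_sgn, Gsize] at h0 h1 hk hl <;>
      (try split_ifs at h0 h1) <;> (try simp only [Fin.mk.injEq] at h0) <;> (try omega) <;>
      (try exact absurd h1 n1) <;> (try exact absurd h1 n2)
    all_goals
      first
      | (obtain rfl : i = j := by omega
         obtain rfl : k = l := by omega
         rfl)
  · intro v w h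
    have hvw : v.1 ≠ w.1 := h
    have hi : GmpAux_idx α v ≠ GmpAux_idx α w := by
      intro h0
      apply hvw
      obtain ⟨i | i | i, k, hk⟩ := v <;> obtain ⟨j | j | j, l, hl⟩ := w <;>
        simp only [GmpAux_idx] at h0 <;>
        (try split_ifs at h0) <;> (try simp only [Fin.mk.injEq] at h0) <;> (try omega)
      all_goals
        obtain rfl : i = j := by omega
        rfl
    have : dist (EuclideanSpace.single (GmpAux_idx α v) (GmpAux_sgn α v * (√2 / 2)))
        (EuclideanSpace.single (GmpAux_idx α w) (GmpAux_sgn α w * (√2 / 2))) ^ 2 = 1 := by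
      rw [GmpAux_sq]
      simp only [EuclideanSpace.inner_single_left, PiLp.single_apply, if_true, if_neg hi]
      simp
      have a := hs v
      have b := hs w
      linear_combination (GmpAux_sgn α v ^ 2 + GmpAux_sgn α w ^ 2) * hc + (a + b) / 2
    exact (pow_eq_one_iff_of_nonneg dist_nonneg two_ne_zero).1 this

theorem Gmp_alpha_one_one_not_dimCritical (α : ℕ) (hα : 1 ≤ α) :
    ¬ (Gmp α 1 1).IsDimCritical := by
  obtain ⟨m, rfl⟩ : ∃ m, α = m + 1 := ⟨α - 1, by omega⟩
  intro hcrit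
  let V := Σ i : Fin (m + 1) ⊕ Fin 1 ⊕ Fin 1, Fin (Gsize (m + 1) 1 1 i)
  let S : Fin (m + 1) → V := fun i => ⟨Sum.inl i, (0 : Fin 1)⟩
  let B : Fin 2 → V := fun k => ⟨Sum.inr (Sum.inl 0), k⟩
  let C : Fin 3 → V := fun k => ⟨Sum.inr (Sum.inr 0), k⟩
  have hup := GmpAux_upper (m + 1)
  have hadj : (Gmp (m + 1) 1 1).Adj (S (Fin.last m)) (B 0) := by
    change Sum.inl _ ≠ Sum.inr _
    simp
  have hlt := hcrit s(S (Fin.last m), B 0) hadj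
  have hle : (Gmp (m + 1) 1 1).udim ≤ m + 1 + 3 := Nat.sInf_le hup
  have hmem : ((Gmp (m + 1) 1 1).deleteEdges {s(S (Fin.last m), B 0)}).HasUnitDistRep
      ((Gmp (m + 1) 1 1).deleteEdges {s(S (Fin.last m), B 0)}).udim := by
    apply Nat.sInf_mem (s := {n | SimpleGraph.HasUnitDistRep _ n})
    obtain ⟨f, hf, h⟩ := hup
    exact ⟨_, f, hf, fun u v huv => h (SimpleGraph.deleteEdges_le _ huv)⟩
  obtain ⟨f, hf, h⟩ := hmem
  have h' : ∀ u v : V, u.1 ≠ v.1 → s(u, v) ≠ s(S (Fin.last m), B 0) → dist (f u) (f v) = 1 := by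
    intro u v huv hne
    apply h
    rw [SimpleGraph.deleteEdges_adj]
    exact ⟨huv, hne⟩
  have hS : Function.Injective S := by
    intro i j hij
    have := congrArg Sigma.fst hij
    simpa [S] using this
  have hC : Function.Injective C := by
    intro i j hij
    exact eq_of_heq (Sigma.mk.inj hij).2
  have hSB : ∀ i k, S i ≠ B k := by
    intro i k hij
    have := congrArg Sigma.fst hij
    simp [S, B] at this
  have hSC : ∀ i k, S i ≠ C k := by
    intro i k hij
    have := congrArg Sigma.fst hij
    simp [S, C] at this
  have hBC : ∀ i k, B i ≠ C k := by
    intro i k hij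
    have := congrArg Sigma.fst hij
    simp [B, C] at this
  have hB01 : B 0 ≠ B 1 := by
    intro hij
    have : (0 : Fin 2) = 1 := eq_of_heq (Sigma.mk.inj hij).2
    exact absurd this (by decide)
  have hcs : ∀ i : Fin m, S i.castSucc ≠ S (Fin.last m) := fun i =>
    hS.ne (Fin.castSucc_lt_last i).ne
  have hlow := GmpAux_lower m (fun i => f (S i.castSucc))
    (fun k => f (![S (Fin.last m), B 0, B 1] k)) (fun k => f (C k))
    (by
      apply hf.comp
      intro i j hij
      fin_cases i <;> fin_cases j <;>
        simp [hSB, hB01, (hSB _ _).symm, hB01.symm] at hij ⊢)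
    (hf.comp hC)
    (by
      intro i j hij
      apply h'
      · simpa [S] using hij
      · simp [hcs, hSB])
    (by
      intro i j
      apply h'
      · fin_cases j
        · simp [S]
        · simp [S, B]
        · simp [S, B]
      · simp [hcs, hSB])
    (by
      intro i j
      apply h'
      · simp [S, C]
      · simp [hcs, hSB])
    (by
      intro i j
      apply h'
      · fin_cases i <;> simp [S, B, C]
      · simp [(hSC _ _).symm, (hBC _ _).symm])
  rw [finrank_euclideanSpace_fin] at hlow
  omega
end

section
/- For every integer α ≥ 1, the graph G(α, 2, 0) is not dimension-critical. -/
open Finset in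
lemma clique_inner_sum {ι E : Type*} [Fintype ι] [DecidableEq ι] [NormedAddCommGroup E]
    [InnerProductSpace ℝ E] (v : ι → E)
    (hv : ∀ i j, inner ℝ (v i) (v j) = if i = j then (1 : ℝ) else 1 / 2) (c : ι → ℝ) (j : ι) :
    inner ℝ (∑ i, c i • v i) (v j) = (∑ i, c i + c j) / 2 := by
  rw [sum_inner]
  have : ∀ i, inner ℝ (c i • v i) (v j) = c i / 2 + if i = j then c i / 2 else 0 := by
    intro i
    rw [real_inner_smul_left, hv]
    split_ifs <;> ring
  simp only [this]
  rw [sum_add_distrib, ← sum_div]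
  simp
  ring

lemma clique_linInd {ι E : Type*} [Fintype ι] [DecidableEq ι] [NormedAddCommGroup E]
    [InnerProductSpace ℝ E] (v : ι → E)
    (hv : ∀ i j, inner ℝ (v i) (v j) = if i = j then (1 : ℝ) else 1 / 2) :
    LinearIndependent ℝ v := by
  rw [Fintype.linearIndependent_iff]
  intro c hc
  have h : ∀ j, c j = -(∑ i, c i) := by
    intro j
    have := clique_inner_sum v hv c j
    rw [hc, inner_zero_left] at this
    linarith
  have h2 : ∑ i, c i = (Fintype.card ι : ℝ) * -(∑ i, c i) := by
    conv_lhs => rw [Finset.sum_congr rfl (fun j _ => h j)]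
    simp
  have h3 : ((Fintype.card ι : ℝ) + 1) * (∑ i, c i) = 0 := by linarith
  have h4 : ∑ i, c i = 0 := by
    rcases mul_eq_zero.1 h3 with h | h
    · have : (0 : ℝ) ≤ Fintype.card ι := by positivity
      linarith
    · exact h
  intro j
  rw [h j, h4, neg_zero]

/-- Core: clique `v` (relative to the origin `y`), `w` the second apex, `u` the extra point. -/
lemma core {ι E : Type*} [Fintype ι] [DecidableEq ι] [NormedAddCommGroup E]
    [InnerProductSpace ℝ E] [FiniteDimensional ℝ E] (v : ι → E)
    (hv : ∀ i j, inner ℝ (v i) (v j) = if i = j then (1 : ℝ) else 1 / 2)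
    (hdim : Module.finrank ℝ E ≤ Fintype.card ι)
    (w u : E) (hw0 : w ≠ 0) (hw : ∀ i, 2 * inner ℝ w (v i) = ‖w‖ ^ 2)
    (p q : ι) (hpq : p ≠ q) (hu1 : ‖u‖ = 1) (huw : 2 * inner ℝ u w = ‖w‖ ^ 2)
    (hu : ∀ i, i ≠ p → i ≠ q → inner ℝ u (v i) = (1 / 2 : ℝ))
    (hup : u ≠ v p) (huq : u ≠ v q) : False := by
  have hli := clique_linInd v hv
  have hcard : Fintype.card ι = Module.finrank ℝ E :=
    le_antisymm hli.fintype_card_le_finrank hdim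
  have hspan : Submodule.span ℝ (Set.range v) = ⊤ :=
    hli.span_eq_top_of_card_eq_finrank' hcard
  have key : ∀ z : E, (∀ i, inner ℝ z (v i) = (0 : ℝ)) → z = 0 := by
    intro z hz
    have : ∀ y ∈ Submodule.span ℝ (Set.range v), inner ℝ z y = (0 : ℝ) := by
      intro y hy
      induction hy using Submodule.span_induction with
      | mem x hx => obtain ⟨i, rfl⟩ := hx; exact hz i
      | zero => simp
      | add x y _ _ hx hy => rw [inner_add_right, hx, hy, add_zero]
      | smul a x _ hx => rw [real_inner_smul_right, hx, mul_zero]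
    have h := this z (by rw [hspan]; trivial)
    exact inner_self_eq_zero.1 h
  have hwn : 0 < ‖w‖ ^ 2 := by positivity
  set m : ℝ := (Fintype.card ι : ℝ) with hm
  have hm0 : 0 ≤ m := by positivity
  -- w is a multiple of the sum
  have hw2 : w = ∑ i, (‖w‖ ^ 2 / (m + 1)) • v i := by
    rw [← sub_eq_zero]
    apply key
    intro i
    rw [inner_sub_left, clique_inner_sum v hv (fun _ => ‖w‖ ^ 2 / (m + 1)) i]
    have := hw i
    simp only [Finset.sum_const, Finset.card_univ, nsmul_eq_mul, ← hm]
    field_simp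
    linarith
  have hsum : ∑ i, inner ℝ u (v i) = (m + 1) / 2 := by
    have h1 := huw
    rw [hw2, ← Finset.smul_sum, real_inner_smul_right, inner_sum, Finset.smul_sum, ← hw2] at h1
    field_simp at h1
    linarith
  have hab : inner ℝ u (v p) + inner ℝ u (v q) = (3 / 2 : ℝ) := by
    have h1 : ∑ i, (inner ℝ u (v i) - 1 / 2 : ℝ) = 1 / 2 := by
      rw [Finset.sum_sub_distrib, hsum]
      simp [← hm]
      ring
    have h2 : ∑ i, (inner ℝ u (v i) - 1 / 2 : ℝ)
        = (inner ℝ u (v p) - 1 / 2) + (inner ℝ u (v q) - 1 / 2) := by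
      apply Fintype.sum_eq_add p q hpq
      rintro i ⟨h1, h2⟩
      rw [hu i h1 h2, sub_self]
    linarith
  set a : ℝ := inner ℝ u (v p) with ha
  have hpp := hv p p
  have hqq := hv q q
  have hpq' := hv p q
  have hqp' := hv q p
  simp only [if_true, if_neg hpq, if_neg hpq.symm] at hpp hqq hpq' hqp'
  have hud : u = v p + (2 * (1 - a)) • (v q - v p) := by
    rw [← sub_eq_zero]
    apply key
    intro i
    rw [inner_sub_left, inner_add_left, real_inner_smul_left, inner_sub_left]
    by_cases hip : i = p
    · subst hip
      rw [hpp, hqp', ← ha]; ring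
    by_cases hiq : i = q
    · subst hiq
      rw [hpq', hqq]; linarith
    rw [hu i hip hiq, hv, hv, if_neg (Ne.symm hip), if_neg (Ne.symm hiq)]; ring
  set k : ℝ := 2 * (1 - a) with hk
  have hkk : k * (k - 1) = 0 := by
    have h1 : inner ℝ u u = (1 : ℝ) := by rw [real_inner_self_eq_norm_sq, hu1]; norm_num
    rw [hud] at h1
    simp only [inner_add_left, inner_add_right, real_inner_smul_left, real_inner_smul_right,
      inner_sub_left, inner_sub_right, hpp, hqq, hpq', hqp'] at h1
    linarith
  rcases mul_eq_zero.1 hkk with h | h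
  · apply hup; rw [hud, h]; simp
  · apply huq; rw [hud, sub_eq_zero.1 h]; simp

lemma inner_of_dist {E : Type*} [NormedAddCommGroup E] [InnerProductSpace ℝ E] (o a b : E)
    (hb : dist b o = 1) (hab : dist a b = 1) :
    2 * inner ℝ (a - o) (b - o) = ‖a - o‖ ^ 2 := by
  have h : ‖(a - o) - (b - o)‖ ^ 2 = 1 := by
    rw [sub_sub_sub_cancel_right, ← dist_eq_norm, hab]; norm_num
  rw [norm_sub_sq_real, ← dist_eq_norm b, hb] at h
  linarith

lemma Gmp_rep (α : ℕ) : (Gmp α 2 0).HasUnitDistRep (α + 2) := by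
  classical
  let b : Fin (α + 2) → EuclideanSpace ℝ (Fin (α + 2)) := fun i => EuclideanSpace.single i 1
  let idx : Fin α ⊕ Fin 2 ⊕ Fin 0 → Fin (α + 2) := fun s => match s with
    | Sum.inl i => Fin.castAdd 2 i
    | Sum.inr (Sum.inl i) => Fin.natAdd α i
    | Sum.inr (Sum.inr i) => i.elim0
  have hidx : Function.Injective idx := by
    rintro (i | i | i) (j | j | j) h <;> simp [idx, Fin.ext_iff] at h ⊢
    all_goals first | omega | exact i.elim0 | exact j.elim0
  let sg : ∀ s : Fin α ⊕ Fin 2 ⊕ Fin 0, Fin (Gsize α 2 0 s) → ℝ :=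
    fun s k => if (k : ℕ) = 0 then Real.sqrt (1 / 2) else - Real.sqrt (1 / 2)
  have hs2 : Real.sqrt (1 / 2) ^ 2 = 1 / 2 := Real.sq_sqrt (by norm_num)
  have hspos : 0 < Real.sqrt (1 / 2) := Real.sqrt_pos.2 (by norm_num)
  have hsg2 : ∀ s k, sg s k ^ 2 = 1 / 2 := by
    intro s k; simp only [sg]; split_ifs
    · exact hs2
    · rw [neg_sq, hs2]
  have hsg0 : ∀ s k, sg s k ≠ 0 := by
    intro s k h; have := hsg2 s k; rw [h] at this; norm_num at this
  have hsginj : ∀ s, Function.Injective (sg s) := by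
    intro s k l h
    have hk : (k : ℕ) < 2 := by
      have := k.2; rcases s with i | i | i
      · simp [Gsize] at this; omega
      · simpa [Gsize] using this
      · exact i.elim0
    have hl : (l : ℕ) < 2 := by
      have := l.2; rcases s with i | i | i
      · simp [Gsize] at this; omega
      · simpa [Gsize] using this
      · exact i.elim0
    simp only [sg] at h
    apply Fin.ext
    split_ifs at h
    · omega
    · linarith
    · linarith
    · omega
  refine ⟨fun x => EuclideanSpace.single (idx x.1) (sg x.1 x.2), ?_, ?_⟩
  · rintro ⟨s, k⟩ ⟨t, l⟩ h
    simp only at h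
    have h1 := congrArg (fun z => z (idx s)) h
    simp only [EuclideanSpace.single_apply, if_true] at h1
    by_cases hst : s = t
    · subst hst
      simp only [if_true] at h1
      rw [hsginj s h1]
    · rw [if_neg (fun h => hst (hidx h))] at h1
      exact absurd h1 (hsg0 s k)
  · rintro ⟨s, k⟩ ⟨t, l⟩ h
    have hst : s ≠ t := h
    have hne : idx s ≠ idx t := fun h => hst (hidx h)
    rw [dist_eq_norm]
    have h0 : inner ℝ (EuclideanSpace.single (idx s) (sg s k))
        (EuclideanSpace.single (idx t) (sg t l)) = (0 : ℝ) := by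
      rw [EuclideanSpace.inner_single_left, EuclideanSpace.single_apply, if_neg hne, mul_zero]
    have h1 := norm_sub_sq_real (EuclideanSpace.single (idx s) (sg s k))
      (EuclideanSpace.single (idx t) (sg t l))
    rw [h0, EuclideanSpace.norm_single, EuclideanSpace.norm_single, Real.norm_eq_abs,
      Real.norm_eq_abs, sq_abs, sq_abs, hsg2, hsg2] at h1
    have h2 : ‖EuclideanSpace.single (idx s) (sg s k)
      - EuclideanSpace.single (idx t) (sg t l)‖ ^ 2 = 1 := by rw [h1]; norm_num
    exact (pow_eq_one_iff_of_nonneg (norm_nonneg _) two_ne_zero).1 h2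

theorem Gmp_alpha_two_zero_not_dimCritical (α : ℕ) (hα : 1 ≤ α) :
    ¬ (Gmp α 2 0).IsDimCritical := by
  classical
  intro hcrit
  let V := Σ i : Fin α ⊕ Fin 2 ⊕ Fin 0, Fin (Gsize α 2 0 i)
  let i0 : Fin α := ⟨0, hα⟩
  let S : Fin α → V := fun i => ⟨Sum.inl i, (0 : Fin 1)⟩
  let P : Fin 2 → Fin 2 → V := fun i k => ⟨Sum.inr (Sum.inl i), k⟩
  have hSS : ∀ i j, i ≠ j → (Gmp α 2 0).Adj (S i) (S j) := by
    intro i j h h'; exact h (Sum.inl.inj h')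
  have hSP : ∀ i j k, (Gmp α 2 0).Adj (S i) (P j k) := by
    intro i j k h'; cases h'
  have hPP : ∀ i j k l, i ≠ j → (Gmp α 2 0).Adj (P i k) (P j l) := by
    intro i j k l h h'; exact h (Sum.inl.inj (Sum.inr.inj h'))
  have hPinj : ∀ i k l, P i k = P i l → k = l := by
    intro i k l h
    exact eq_of_heq (Sigma.mk.inj h).2
  have hSPne : ∀ i j k, S i ≠ P j k := fun i j k => (hSP i j k).ne
  have hc := hcrit s(S i0, P 0 0) (hSP i0 0 0)
  have hrep := Gmp_rep α
  have hle : (Gmp α 2 0).udim ≤ α + 2 := Nat.sInf_le hrep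
  have hne : {n | ((Gmp α 2 0).deleteEdges {s(S i0, P 0 0)}).HasUnitDistRep n}.Nonempty := by
    obtain ⟨f, hf, hd⟩ := hrep
    exact ⟨α + 2, f, hf, fun u v h => hd (SimpleGraph.deleteEdges_le _ h)⟩
  have hmem : ((Gmp α 2 0).deleteEdges {s(S i0, P 0 0)}).HasUnitDistRep
      ((Gmp α 2 0).deleteEdges {s(S i0, P 0 0)}).udim := Nat.sInf_mem hne
  obtain ⟨n, hn⟩ : ∃ n, n = ((Gmp α 2 0).deleteEdges {s(S i0, P 0 0)}).udim := ⟨_, rfl⟩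
  rw [← hn] at hmem
  have hc' : n < (Gmp α 2 0).udim := by rw [hn]; exact hc
  obtain ⟨f, hf, hd⟩ := hmem
  have hD : ∀ a b : V, (Gmp α 2 0).Adj a b → ¬ (a = S i0 ∧ b = P 0 0) →
      ¬ (a = P 0 0 ∧ b = S i0) → dist (f a) (f b) = 1 := by
    intro a b h1 h2 h3
    apply hd
    rw [SimpleGraph.deleteEdges_adj]
    refine ⟨h1, ?_⟩
    rw [Set.mem_singleton_iff, Sym2.eq_iff]
    tauto
  -- clique: S together with P 0 1, origin P 1 0, apex P 1 1, extra P 0 0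
  let C : Option (Fin α) → V := fun o => o.elim (P 0 1) S
  have h01 : (0 : Fin 2) ≠ 1 := by decide
  have hP01 : P 0 1 ≠ P 0 0 := fun h => h01 (hPinj 0 _ _ h).symm
  have hPP01 : ∀ k l, P 1 k ≠ P 0 l := fun k l => (hPP 1 0 k l h01.symm).ne
  have hC00 : ∀ o, C o ≠ P 0 0 := by
    rintro (_ | i)
    · exact hP01
    · exact hSPne i 0 0
  have hCy : ∀ o k, dist (f (C o)) (f (P 1 k)) = 1 := by
    rintro (_ | i) k
    · exact hD _ _ (hPP 0 1 _ _ h01) (fun h => hPP01 _ _ h.2) (fun h => hP01 h.1)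
    · exact hD _ _ (hSP i 1 k) (fun h => hPP01 _ _ h.2) (fun h => hSPne _ _ _ h.1)
  have hxy : ∀ k, dist (f (P 0 0)) (f (P 1 k)) = 1 := fun k =>
    hD _ _ (hPP 0 1 _ _ h01) (fun h => hPP01 _ _ h.2) (fun h => hSPne _ _ _ h.2.symm)
  have hCC : ∀ o o', o ≠ o' → dist (f (C o)) (f (C o')) = 1 := by
    intro o o' h
    refine hD _ _ ?_ (fun h => hC00 _ h.2) (fun h => hC00 _ h.1)
    rcases o with _ | i <;> rcases o' with _ | j
    · exact absurd rfl h
    · exact (hSP j 0 1).symm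
    · exact hSP i 0 1
    · exact hSS i j (fun h' => h (by rw [h']))
  set o := f (P 1 0) with ho
  refine core (fun i => f (C i) - o) ?_ ?_ (f (P 1 1) - o) (f (P 0 0) - o) ?_ ?_
    (some i0) none (by simp) ?_ ?_ ?_ ?_ ?_
  · intro i j
    split_ifs with h
    · subst h
      rw [real_inner_self_eq_norm_sq, ← dist_eq_norm, hCy]; norm_num
    · have := inner_of_dist o (f (C i)) (f (C j)) (hCy j 0) (hCC i j h)
      rw [← dist_eq_norm, hCy] at this
      linarith
  · simp; omega
  · intro h
    exact h01 (hPinj 1 _ _ (hf (sub_eq_zero.1 h))).symm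
  · intro i
    exact inner_of_dist o _ _ (hCy i 0) (by rw [dist_comm]; exact hCy i 1)
  · rw [← dist_eq_norm]; exact hxy 0
  · rw [real_inner_comm]
    exact inner_of_dist o _ _ (hxy 0) (by rw [dist_comm]; exact hxy 1)
  · rintro (_ | i) h1 h2
    · exact absurd rfl h2
    · have hd1 : dist (f (P 0 0)) (f (S i)) = 1 := by
        refine hD _ _ (hSP i 0 0).symm (fun h => hSPne _ _ _ h.1.symm) (fun h => h1 ?_)
        have := h.2
        rw [Sum.inl.inj (congrArg Sigma.fst this)]
      have := inner_of_dist o (f (P 0 0)) (f (S i)) (hCy (some i) 0) hd1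
      rw [← dist_eq_norm, hxy 0] at this
      change inner ℝ (f (P 0 0) - o) (f (S i) - o) = _
      linarith
  · intro h; exact hC00 _ (hf (sub_left_injective h)).symm
  · intro h; exact hC00 _ (hf (sub_left_injective h)).symm
end

section
/- For every integer α ≥ 2, the graph G(α, 0, 1) is not dimension-critical. -/
open scoped InnerProductSpace in
/-- Affine independence of the nearly complete clique. -/
lemma aux_indep {E : Type*} [NormedAddCommGroup E] [InnerProductSpace ℝ E]
    {α : ℕ} (v : Fin α → E) (i0 i1 : Fin α) (h01 : i0 ≠ i1) (hne : v i0 ≠ v i1) (a : E)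
    (hv : ∀ i j, i ≠ j → ¬ (i = i0 ∧ j = i1) → ¬ (i = i1 ∧ j = i0) → dist (v i) (v j) = 1)
    (ha : ∀ i, dist (v i) a = 1) : AffineIndependent ℝ v := by
  rw [affineIndependent_iff_of_fintype]
  intro c hS hc
  rw [Finset.weightedVSub_eq_weightedVSubOfPoint_of_sum_eq_zero _ _ _ hS a,
    Finset.weightedVSubOfPoint_apply] at hc
  simp only [vsub_eq_sub] at hc
  have hu : ∀ i, ‖v i - a‖ = 1 := fun i => by rw [← dist_eq_norm]; exact ha i
  have hin : ∀ i j, ⟪v i - a, v j - a⟫_ℝ = 1 - dist (v i) (v j) ^ 2 / 2 := by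
    intro i j
    have h := norm_sub_sq_real (v i - a) (v j - a)
    rw [hu i, hu j, sub_sub_sub_cancel_right, ← dist_eq_norm] at h
    linarith
  obtain ⟨δ, hδ⟩ : ∃ δ, δ = ⟪v i0 - a, v i1 - a⟫_ℝ - 1/2 := ⟨_, rfl⟩
  have hδ1 : δ < 1/2 := by
    have h1 : 0 < dist (v i0) (v i1) := dist_pos.2 hne
    have := hin i0 i1
    nlinarith
  have hG : ∀ i j, ⟪v i - a, v j - a⟫_ℝ = 1/2 + (if i = j then 1/2 else 0)
      + (if i = i0 then (if j = i1 then δ else 0) else 0)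
      + (if i = i1 then (if j = i0 then δ else 0) else 0) := by
    intro i j
    by_cases hij : i = j
    · subst hij
      rw [hin, dist_self]
      have e1 : (if i = i0 then (if i = i1 then δ else 0) else 0) = 0 := by
        split_ifs with p q
        · exact absurd (p.symm.trans q) h01
        · rfl
        · rfl
      have e2 : (if i = i1 then (if i = i0 then δ else 0) else 0) = 0 := by
        split_ifs with p q
        · exact absurd (q.symm.trans p) h01
        · rfl
        · rfl
      rw [e1, e2, if_pos rfl]; norm_num
    · by_cases h1 : i = i0 ∧ j = i1
      · obtain ⟨rfl, rfl⟩ := h1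
        simp [hij, hδ]
      · by_cases h2 : i = i1 ∧ j = i0
        · obtain ⟨rfl, rfl⟩ := h2
          rw [real_inner_comm]
          simp [hij, hδ]
        · rw [hin, hv i j hij h1 h2]
          have e1 : (if i = i0 then (if j = i1 then δ else 0) else 0) = 0 := by
            split_ifs <;> tauto
          have e2 : (if i = i1 then (if j = i0 then δ else 0) else 0) = 0 := by
            split_ifs <;> tauto
          rw [e1, e2, if_neg hij]; norm_num
  have key : ∀ j, c j / 2 + (if j = i1 then c i0 * δ else 0)
      + (if j = i0 then c i1 * δ else 0) = 0 := by
    intro j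
    have h : ⟪∑ i, c i • (v i - a), v j - a⟫_ℝ = 0 := by rw [hc, inner_zero_left]
    rw [sum_inner] at h
    simp only [real_inner_smul_left, hG, mul_add, mul_ite, mul_zero, Finset.sum_add_distrib,
      Finset.sum_ite_eq', Finset.mem_univ, if_true, ← Finset.sum_mul, hS] at h
    linarith
  have k0 := key i0
  have k1 := key i1
  simp only [h01, h01.symm, if_true, if_false] at k0 k1
  have hsum := Finset.sum_congr (rfl : (Finset.univ : Finset (Fin α)) = Finset.univ)
    (fun j _ => key j)
  simp only [Finset.sum_add_distrib, Finset.sum_ite_eq', Finset.mem_univ, if_true,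
    ← Finset.sum_div, hS, Finset.sum_const_zero] at hsum
  have hsub : (c i0 - c i1) * (1/2 - δ) = 0 := by linarith
  have hz : c i0 = c i1 := by
    rcases mul_eq_zero.1 hsub with h | h <;> linarith
  have z0 : c i0 = 0 := by linarith
  have z1 : c i1 = 0 := by linarith
  intro j
  have := key j
  simp only [z0, z1, zero_mul, ite_self] at this
  linarith

open scoped InnerProductSpace in
/-- Two circles in the relevant orthogonal plane meet in at most two points. -/
lemma aux_lower_s13 {E : Type*} [NormedAddCommGroup E] [InnerProductSpace ℝ E]
    [FiniteDimensional ℝ E]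
    {α : ℕ} (hE : Module.finrank ℝ E ≤ α)
    (v : Fin α → E) (i0 i1 : Fin α) (h01 : i0 ≠ i1) (hne : v i0 ≠ v i1)
    (hv : ∀ i j, i ≠ j → ¬ (i = i0 ∧ j = i1) → ¬ (i = i1 ∧ j = i0) → dist (v i) (v j) = 1)
    (a b c : E) (hab : a ≠ b) (hac : a ≠ c) (hbc : b ≠ c)
    (ha : ∀ i, dist (v i) a = 1) (hb : ∀ i, dist (v i) b = 1) (hc : ∀ i, dist (v i) c = 1) :
    False := by
  have hI := aux_indep v i0 i1 h01 hne a hv ha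
  have hα : 0 < α := i0.pos
  have hfr : Module.finrank ℝ (vectorSpan ℝ (Set.range v)) = α - 1 :=
    hI.finrank_vectorSpan (by simp; omega)
  have hsum := Submodule.finrank_add_finrank_orthogonal (vectorSpan ℝ (Set.range v))
  have hle : Module.finrank ℝ (vectorSpan ℝ (Set.range v))ᗮ ≤ 1 := by omega
  have expand : ∀ (x : E), (∀ i, dist (v i) x = 1) → ∀ i,
      ‖v i - a‖ ^ 2 - 2 * ⟪v i - a, x - a⟫_ℝ + ‖x - a‖ ^ 2 = 1 := by
    intro x hx i
    rw [← norm_sub_sq_real, sub_sub_sub_cancel_right, ← dist_eq_norm, hx i]; norm_num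
  have hna : ∀ i, ‖v i - a‖ = 1 := fun i => by rw [← dist_eq_norm]; exact ha i
  have hmem : ∀ (x : E), (∀ i, dist (v i) x = 1) → x - a ∈ (vectorSpan ℝ (Set.range v))ᗮ := by
    intro x hx
    rw [vectorSpan_range_eq_span_range_vsub_right ℝ v i0, Submodule.mem_orthogonal]
    intro u hu
    induction hu using Submodule.span_induction with
    | mem y hy =>
      obtain ⟨i, rfl⟩ := hy
      have e1 := expand x hx i
      have e2 := expand x hx i0
      rw [hna] at e1 e2
      simp only [vsub_eq_sub]
      rw [← sub_sub_sub_cancel_right (v i) (v i0) a, inner_sub_left]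
      linarith
    | zero => simp
    | add y z _ _ hy hz => rw [inner_add_left, hy, hz, add_zero]
    | smul r y _ hy => rw [real_inner_smul_left, hy, mul_zero]
  obtain ⟨d, hd⟩ := finrank_le_one_iff.1 hle
  obtain ⟨s, hs⟩ := hd ⟨b - a, hmem b hb⟩
  obtain ⟨t, ht⟩ := hd ⟨c - a, hmem c hc⟩
  have hs' : b - a = s • (d : E) := by simpa using (congrArg Subtype.val hs).symm
  have ht' : c - a = t • (d : E) := by simpa using (congrArg Subtype.val ht).symm
  have es := expand b hb i0
  have et := expand c hc i0
  rw [hs', hna, real_inner_smul_right, norm_smul, mul_pow, Real.norm_eq_abs, sq_abs] at es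
  rw [ht', hna, real_inner_smul_right, norm_smul, mul_pow, Real.norm_eq_abs, sq_abs] at et
  have s0 : s ≠ 0 := by
    rintro rfl
    rw [zero_smul] at hs'
    exact hab (sub_eq_zero.1 hs').symm
  have t0 : t ≠ 0 := by
    rintro rfl
    rw [zero_smul] at ht'
    exact hac (sub_eq_zero.1 ht').symm
  have st : s - t ≠ 0 := by
    intro h
    have : s = t := by linarith
    rw [this, ← ht'] at hs'
    exact hbc (sub_left_injective hs')
  have d0 : ‖(d : E)‖ ^ 2 ≠ 0 := by
    intro h
    have : (d : E) = 0 := by simpa using h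
    rw [this, smul_zero] at hs'
    exact hab (sub_eq_zero.1 hs').symm
  have es' : s * (s * ‖(d : E)‖ ^ 2 - 2 * ⟪v i0 - a, (d : E)⟫_ℝ) = 0 := by linarith
  have et' : t * (t * ‖(d : E)‖ ^ 2 - 2 * ⟪v i0 - a, (d : E)⟫_ℝ) = 0 := by linarith
  have es2 := (mul_eq_zero.1 es').resolve_left s0
  have et2 := (mul_eq_zero.1 et').resolve_left t0
  have : (s - t) * ‖(d : E)‖ ^ 2 = 0 := by linarith
  exact (mul_ne_zero st d0) this

/-- The clique vertices of `G(α, 0, 1)`. -/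
def vtx {α : ℕ} (i : Fin α) : Σ i : Fin α ⊕ Fin 0 ⊕ Fin 1, Fin (Gsize α 0 1 i) :=
  ⟨Sum.inl i, (0 : Fin 1)⟩

/-- The vertices of the part of size three. -/
def apx (α : ℕ) (k : Fin 3) : Σ i : Fin α ⊕ Fin 0 ⊕ Fin 1, Fin (Gsize α 0 1 i) :=
  ⟨Sum.inr (Sum.inr 0), k⟩

lemma vtx_or_apx {α : ℕ} (x : Σ i : Fin α ⊕ Fin 0 ⊕ Fin 1, Fin (Gsize α 0 1 i)) :
    (∃ i, x = vtx i) ∨ ∃ k, x = apx α k := by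
  obtain ⟨i | i | i, k⟩ := x
  · left
    refine ⟨i, ?_⟩
    have : k = (0 : Fin 1) := Subsingleton.elim (α := Fin 1) _ _
    rw [this]; rfl
  · exact i.elim0
  · right
    obtain rfl : i = 0 := Subsingleton.elim _ _
    exact ⟨k, rfl⟩

lemma vtx_inj {α : ℕ} {i j : Fin α} (h : vtx i = vtx j) : i = j := by
  have := congrArg Sigma.fst h
  simpa [vtx] using this

lemma apx_inj {α : ℕ} {i j : Fin 3} (h : apx α i = apx α j) : i = j := by
  unfold apx at h
  exact eq_of_heq (Sigma.mk.inj h).2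

lemma vtx_ne_apx {α : ℕ} (i : Fin α) (k : Fin 3) : vtx i ≠ apx α k := by
  intro h
  have := congrArg Sigma.fst h
  simp [vtx, apx] at this

/-- Coordinates of the explicit representation in dimension `α + 1`. -/
noncomputable def repF (α : ℕ) :
    (Σ i : Fin α ⊕ Fin 0 ⊕ Fin 1, Fin (Gsize α 0 1 i)) → EuclideanSpace ℝ (Fin (α + 1))
  | ⟨Sum.inl i, _⟩ => WithLp.toLp 2 (Fin.snoc (fun j => if j = i then √(1/2) else 0) 0)
  | ⟨Sum.inr (Sum.inl i), _⟩ => i.elim0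
  | ⟨Sum.inr (Sum.inr _), k⟩ => WithLp.toLp 2
      (Fin.snoc (fun _ => if k.val = 2 then 2 * √(1/2) / α else 0)
        (if k.val = 0 then - √(1/2) else √(1/2)))

lemma repF_vtx {α : ℕ} (i : Fin α) : repF α (vtx i) =
    WithLp.toLp 2 (Fin.snoc (fun j => if j = i then √(1/2) else 0) 0) := rfl

lemma repF_apx {α : ℕ} (k : Fin 3) : repF α (apx α k) = WithLp.toLp 2
      (Fin.snoc (fun _ => if k.val = 2 then 2 * √(1/2) / α else 0)
        (if k.val = 0 then - √(1/2) else √(1/2))) := rfl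

lemma dist_vv {α : ℕ} {i j : Fin α} (h : i ≠ j) :
    dist (repF α (vtx i)) (repF α (vtx j)) = 1 := by
  have hr : √(1/2 : ℝ) ^ 2 = 1/2 := Real.sq_sqrt (by norm_num)
  rw [repF_vtx, repF_vtx, EuclideanSpace.dist_eq, Real.sqrt_eq_one, Fin.sum_univ_castSucc]
  simp only [Fin.snoc_castSucc, Fin.snoc_last, Real.dist_eq, sq_abs]
  have : ∀ x : Fin α, ((if x = i then √(1/2 : ℝ) else 0) - (if x = j then √(1/2 : ℝ) else 0)) ^ 2
      = (if x = i then 1/2 else 0) + (if x = j then 1/2 else 0) := by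
    intro x
    by_cases h1 : x = i
    · have h2 : x ≠ j := by rw [h1]; exact h
      rw [if_pos h1, if_neg h2, if_pos h1, if_neg h2]; linarith
    · by_cases h2 : x = j
      · rw [if_neg h1, if_pos h2, if_neg h1, if_pos h2]; linarith
      · rw [if_neg h1, if_neg h2, if_neg h1, if_neg h2]; norm_num
  simp only [this, Finset.sum_add_distrib, Finset.sum_ite_eq', Finset.mem_univ, if_true]
  norm_num

lemma dist_va {α : ℕ} (i : Fin α) (k : Fin 3) :
    dist (repF α (vtx i)) (repF α (apx α k)) = 1 := by
  have hr : √(1/2 : ℝ) ^ 2 = 1/2 := Real.sq_sqrt (by norm_num)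
  have hα : (α : ℝ) ≠ 0 := by
    have := i.pos
    positivity
  rw [repF_vtx, repF_apx, EuclideanSpace.dist_eq, Real.sqrt_eq_one, Fin.sum_univ_castSucc]
  simp only [Fin.snoc_castSucc, Fin.snoc_last, Real.dist_eq, sq_abs]
  obtain ⟨s, hs⟩ : ∃ s, s = (if k.val = 2 then 2 * √(1/2 : ℝ) / α else 0) := ⟨_, rfl⟩
  have hs2 : α * s ^ 2 - 2 * √(1/2 : ℝ) * s = 0 := by
    rw [hs]; split_ifs
    · field_simp; ring
    · ring
  have hl : (0 - (if k.val = 0 then - √(1/2 : ℝ) else √(1/2))) ^ 2 = 1/2 := by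
    split_ifs <;> linarith
  rw [hl, ← hs]
  have : ∀ x : Fin α, ((if x = i then √(1/2 : ℝ) else 0) - s) ^ 2
      = (if x = i then 1/2 - 2 * √(1/2 : ℝ) * s else 0) + s ^ 2 := by
    intro x
    split_ifs
    · linear_combination hr
    · ring
  simp only [this, Finset.sum_add_distrib, Finset.sum_ite_eq', Finset.mem_univ, if_true,
    Finset.sum_const, Finset.card_univ, Fintype.card_fin, nsmul_eq_mul]
  linarith

lemma repF_apx_inj {α : ℕ} (hα : 2 ≤ α) {k l : Fin 3}
    (h : repF α (apx α k) = repF α (apx α l)) : k = l := by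
  have hr : 0 < √(1/2 : ℝ) := Real.sqrt_pos.2 (by norm_num)
  have hα0 : (0 : ℝ) < α := by positivity
  have hq : 0 < 2 * √(1/2 : ℝ) / α := by positivity
  rw [repF_apx, repF_apx] at h
  have h := congrArg WithLp.ofLp h
  have e1 := congrFun h (Fin.last α)
  have e2 := congrFun h (Fin.castSucc ⟨0, by omega⟩)
  simp only [Fin.snoc_castSucc, Fin.snoc_last] at e1 e2
  generalize 2 * √(1/2 : ℝ) / α = q at *
  generalize √(1/2 : ℝ) = r at *
  fin_cases k <;> fin_cases l <;> simp at e1 e2 ⊢ <;> linarith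

lemma gmp_rep_s13 (α : ℕ) (hα : 2 ≤ α) : (Gmp α 0 1).HasUnitDistRep (α + 1) := by
  refine ⟨repF α, ?_, ?_⟩
  · intro x y h
    rcases vtx_or_apx x with ⟨i, rfl⟩ | ⟨i, rfl⟩ <;> rcases vtx_or_apx y with ⟨j, rfl⟩ | ⟨j, rfl⟩
    · by_contra hne
      have hij : i ≠ j := fun e => hne (by rw [e])
      have := dist_vv hij
      rw [h, dist_self] at this
      exact zero_ne_one this
    · have := dist_va i j
      rw [h, dist_self] at this
      exact absurd this zero_ne_one
    · have := dist_va j i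
      rw [h, dist_self] at this
      exact absurd this zero_ne_one
    · rw [repF_apx_inj hα h]
  · intro x y h
    rcases vtx_or_apx x with ⟨i, rfl⟩ | ⟨i, rfl⟩ <;> rcases vtx_or_apx y with ⟨j, rfl⟩ | ⟨j, rfl⟩
    · exact dist_vv (fun e => h.ne (by rw [e]))
    · exact dist_va i j
    · rw [dist_comm]; exact dist_va j i
    · exact absurd rfl h

theorem Gmp_alpha_zero_one_not_dimCritical (α : ℕ) (hα : 2 ≤ α) :
    ¬ (Gmp α 0 1).IsDimCritical := by
  intro H
  have avv : ∀ i j : Fin α, i ≠ j → (Gmp α 0 1).Adj (vtx i) (vtx j) := by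
    intro i j hij
    change (Sum.inl i : Fin α ⊕ Fin 0 ⊕ Fin 1) ≠ Sum.inl j
    simpa using hij
  have ava : ∀ (i : Fin α) (k : Fin 3), (Gmp α 0 1).Adj (vtx i) (apx α k) := by
    intro i k
    change (Sum.inl i : Fin α ⊕ Fin 0 ⊕ Fin 1) ≠ Sum.inr (Sum.inr 0)
    simp
  obtain ⟨i0, hi0⟩ : ∃ i : Fin α, i = ⟨0, by omega⟩ := ⟨_, rfl⟩
  obtain ⟨i1, hi1⟩ : ∃ i : Fin α, i = ⟨1, by omega⟩ := ⟨_, rfl⟩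
  have h01 : i0 ≠ i1 := by rw [hi0, hi1]; simp
  have hlt := H s(vtx i0, vtx i1) (avv i0 i1 h01)
  have hup : (Gmp α 0 1).udim ≤ α + 1 := Nat.sInf_le (gmp_rep_s13 α hα)
  have hne : {n | ((Gmp α 0 1).deleteEdges {s(vtx i0, vtx i1)}).HasUnitDistRep n}.Nonempty := by
    obtain ⟨f, hf, hd⟩ := gmp_rep_s13 α hα
    exact ⟨α + 1, f, hf, fun u v h => hd (SimpleGraph.deleteEdges_le _ h)⟩
  have hmem := Nat.sInf_mem hne
  change ((Gmp α 0 1).deleteEdges {s(vtx i0, vtx i1)}).HasUnitDistRep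
    ((Gmp α 0 1).deleteEdges {s(vtx i0, vtx i1)}).udim at hmem
  obtain ⟨f, hf, hd⟩ := hmem
  have hda : ∀ (k : Fin 3) (i : Fin α), dist (f (vtx i)) (f (apx α k)) = 1 := by
    intro k i
    apply hd
    rw [SimpleGraph.deleteEdges_adj]
    refine ⟨ava i k, ?_⟩
    simp only [Set.mem_singleton_iff, Sym2.eq_iff, not_or, not_and]
    exact ⟨fun _ h => vtx_ne_apx _ _ h.symm, fun _ h => vtx_ne_apx _ _ h.symm⟩
  refine aux_lower_s13 (α := α) (by rw [finrank_euclideanSpace_fin]; omega) (fun i => f (vtx i))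
    i0 i1 h01 (fun h => h01 (vtx_inj (hf h))) ?_ (f (apx α 0)) (f (apx α 1)) (f (apx α 2))
    (fun h => absurd (apx_inj (hf h)) (by decide)) (fun h => absurd (apx_inj (hf h)) (by decide))
    (fun h => absurd (apx_inj (hf h)) (by decide)) (hda 0) (hda 1) (hda 2)
  intro i j hij h1 h2
  apply hd
  rw [SimpleGraph.deleteEdges_adj]
  refine ⟨avv i j hij, ?_⟩
  simp only [Set.mem_singleton_iff, Sym2.eq_iff]
  rintro (⟨ha, hb⟩ | ⟨ha, hb⟩)
  · exact h1 ⟨vtx_inj ha, vtx_inj hb⟩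
  · exact h2 ⟨vtx_inj ha, vtx_inj hb⟩
end

section
/- Let n ≥ 2 be an integer and let S be a circle in the Euclidean plane ℝ² of radius r = √((n + 1)/(2n)). Then no cycle of edge-length 1 is embeddable on S: for every integer m ≥ 3, there do not exist m distinct points p_1, …, p_m on S such that |p_i − p_{i+1}| = 1 for all i (indices taken modulo m). -/
theorem no_unit_cycle_on_circle (n : ℕ) (hn : 2 ≤ n)
    (c : EuclideanSpace ℝ (Fin 2)) (m : ℕ) (hm : 3 ≤ m) :
    ¬ ∃ p : ZMod m → EuclideanSpace ℝ (Fin 2),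
        Function.Injective p ∧
        (∀ i, dist (p i) c = Real.sqrt (((n : ℝ) + 1) / (2 * n))) ∧
        (∀ i : ZMod m, dist (p i) (p (i + 1)) = 1) := by
  rintro ⟨p, hinj, hr, hd⟩
  have hn0 : (2 : ℝ) ≤ n := by exact_mod_cast hn
  set u : ZMod m → ℂ := fun i => ⟨p i 0 - c 0, p i 1 - c 1⟩ with hu
  have uinj : Function.Injective u := by
    intro i j h
    apply hinj
    have h0 := congrArg Complex.re h
    have h1 := congrArg Complex.im h
    simp only [hu] at h0 h1
    ext k
    fin_cases k
    · simpa using h0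
    · simpa using h1
  have hnu : ∀ i, Complex.normSq (u i) = ((n : ℝ) + 1) / (2 * n) := by
    intro i
    have h := hr i
    rw [EuclideanSpace.dist_eq, Real.sqrt_inj (by positivity) (by positivity)] at h
    simp only [Fin.sum_univ_two, Real.dist_eq, sq_abs] at h
    rw [← h, Complex.normSq_apply]
    simp only [hu]; ring
  have hnd : ∀ i, Complex.normSq (u i - u (i + 1)) = 1 := by
    intro i
    have h := hd i
    rw [EuclideanSpace.dist_eq, Real.sqrt_eq_one] at h
    simp only [Fin.sum_univ_two, Real.dist_eq, sq_abs] at h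
    rw [← h, Complex.normSq_apply]
    simp only [hu, Complex.sub_re, Complex.sub_im]; ring
  have hu0 : ∀ i, u i ≠ 0 := by
    intro i h
    have := hnu i
    rw [h, map_zero] at this
    have : (0 : ℝ) < ((n : ℝ) + 1) / (2 * n) := by positivity
    linarith
  obtain ⟨w, hw⟩ : ∃ w : ZMod m → ℂ, ∀ i, u (i + 1) = w i * u i :=
    ⟨fun i => u (i + 1) / u i, fun i => (div_mul_cancel₀ _ (hu0 i)).symm⟩
  have hw1 : ∀ i, Complex.normSq (w i) = 1 := by
    intro i
    have h := hnu (i + 1)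
    rw [hw, map_mul, hnu i] at h
    exact (mul_eq_right₀ (by positivity)).1 h
  have hwre : ∀ i, (w i).re = 1 / ((n : ℝ) + 1) := by
    intro i
    have h := hnd i
    rw [hw, show u i - w i * u i = (1 - w i) * u i by ring, map_mul, hnu i] at h
    have h1 := hw1 i
    rw [Complex.normSq_apply] at h h1
    simp only [Complex.sub_re, Complex.sub_im, Complex.one_re, Complex.one_im] at h
    have e : (1 - (w i).re) * (1 - (w i).re) + (0 - (w i).im) * (0 - (w i).im)
      = 2 - 2 * (w i).re := by linarith
    rw [e] at h
    field_simp at h ⊢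
    linarith
  have hq : ∀ i, w i * (starRingEnd ℂ) (w i) = 1 := by
    intro i
    rw [Complex.mul_conj, hw1]; simp
  have hs : ∀ i, w i + (starRingEnd ℂ) (w i) = ((2 / ((n : ℝ) + 1) : ℝ) : ℂ) := by
    intro i
    rw [Complex.add_conj, hwre]; congr 1; ring
  have hstep : ∀ i, w (i + 1) = w i := by
    intro i
    have h : (w (i + 1) - w i) * (w (i + 1) - (starRingEnd ℂ) (w i)) = 0 := by
      linear_combination hq i - hq (i + 1) + w (i + 1) * (hs (i + 1) - hs i)
    rcases mul_eq_zero.1 h with h | h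
    · exact sub_eq_zero.1 h
    · exfalso
      have h' := sub_eq_zero.1 h
      have e : u (i + 1 + 1) = u i := by
        rw [hw (i + 1), hw i, h']
        linear_combination u i * hq i
      have e2 := uinj e
      have e3 : ((2 : ℕ) : ZMod m) = 0 := by
        push_cast
        linear_combination e2
      rw [ZMod.natCast_eq_zero_iff] at e3
      have := Nat.le_of_dvd (by norm_num) e3
      omega
  have hconst : ∀ k : ℕ, w (k : ZMod m) = w 0 := by
    intro k
    induction k with
    | zero => simp
    | succ k ih => push_cast; rw [hstep, ih]
  have hpow : ∀ k : ℕ, u (k : ZMod m) = w 0 ^ k * u 0 := by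
    intro k
    induction k with
    | zero => simp
    | succ k ih => push_cast; rw [hw, hconst, ih]; ring
  have hone : w 0 ^ m = 1 := by
    have h := hpow m
    rw [ZMod.natCast_self] at h
    exact (mul_eq_right₀ (hu0 0)).1 h.symm
  have hint : IsIntegral ℤ (w 0) :=
    IsIntegral.of_pow (by omega : 0 < m) (by rw [hone]; exact isIntegral_one)
  have hint2 : IsIntegral ℤ ((starRingEnd ℂ) (w 0)) :=
    IsIntegral.of_pow (by omega : 0 < m) (by rw [← map_pow, hone, map_one]; exact isIntegral_one)
  have hint3 := hint.add hint2
  rw [hs 0, show ((2 / ((n : ℝ) + 1) : ℝ) : ℂ) = algebraMap ℚ ℂ (2 / ((n : ℚ) + 1)) by simp,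
    isIntegral_algebraMap_iff (algebraMap ℚ ℂ).injective] at hint3
  obtain ⟨k, hk⟩ := IsIntegrallyClosed.isIntegral_iff.1 hint3
  have hnq : (2 : ℚ) ≤ n := by exact_mod_cast hn
  have hk' : (k : ℚ) = 2 / ((n : ℚ) + 1) := by simpa using hk
  have k0 : (0 : ℚ) < k := by rw [hk']; positivity
  have k1 : (k : ℚ) < 1 := by
    rw [hk', div_lt_one (by positivity)]; linarith
  have k0' : 0 < k := by exact_mod_cast k0
  have k1' : k < 1 := by exact_mod_cast k1
  omega
end
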